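/- arXiv:2101.04986 — 2 statements merged into one kernel-verified Lean document; each statement's English description precedes it below -/
import Mathlib

section
/- Let X₁, X₂ be locally compact Polish metric spaces, C : X₁ × 𝒫(X₂) → (−∞,+∞] lower semi-continuous, bounded from below, with C(x₁,·) convex for every x₁, and let F₁, F₂ be superlinear admissible entropy functions such that F₂ has property (BM) on X₂. Then for every μ₁ ∈ ℳ(X₁), μ₂ ∈ ℳ(X₂): sup_{(φ₁,φ₂)∈Λ_R} Σ_{i=1}^2 ∫_{X_i} φ_i dμ_i = sup_{(φ₁,φ₂)∈Λ} Σ_{i=1}^2 ∫_{X_i} F_i°(φ_i) dμ_i. -/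
open MeasureTheory Filter Set Topology
open scoped ENNReal NNReal BoundedContinuousFunction

noncomputable section

/-- The "positive part" of an extended real number, as an element of `ℝ≥0∞`. -/
def posE (a : EReal) : ℝ≥0∞ := if a = ⊤ then ⊤ else ENNReal.ofReal a.toReal

/-- Integral of an `EReal`-valued function: positive part minus negative part
(in `EReal`, so that it is always defined). -/
def eIntegral {α : Type*} [MeasurableSpace α] (μ : Measure α) (f : α → EReal) : EReal :=
  ((∫⁻ x, posE (f x) ∂μ : ℝ≥0∞) : EReal) - ((∫⁻ x, posE (-(f x)) ∂μ : ℝ≥0∞) : EReal)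

/-- The recession constant `lim_{s→∞} G(s)/s` (as a `limsup`, which coincides with the
limit for convex functions). -/
def recessionOf (G : ℝ → ℝ≥0∞) : ℝ≥0∞ :=
  Filter.limsup (fun s : ℝ => G s / ENNReal.ofReal s) Filter.atTop

/-- An admissible entropy function: a convex, lower semicontinuous function
`F : [0,∞) → [0,∞]` which is finite at some positive point. -/
structure EntropyFn where
  F : ℝ → ℝ≥0∞
  convex' : ∀ a ∈ Ici (0:ℝ), ∀ b ∈ Ici (0:ℝ), ∀ t : ℝ, 0 ≤ t → t ≤ 1 →
    F (t * a + (1 - t) * b) ≤ ENNReal.ofReal t * F a + ENNReal.ofReal (1 - t) * F b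
  lsc : LowerSemicontinuousOn F (Ici (0:ℝ))
  dom : ∃ s : ℝ, 0 < s ∧ F s ≠ ∞

namespace EntropyFn

/-- The recession constant `F'_∞ = lim_{s→∞} F(s)/s`. -/
def recC (F : EntropyFn) : ℝ≥0∞ := recessionOf F.F

/-- `F` is superlinear if `F'_∞ = ∞`. -/
def Superlinear (F : EntropyFn) : Prop := F.recC = ∞

/-- `F°(φ) := inf_{s ≥ 0} (φ·s + F(s))`, extended to `EReal` arguments. -/
def circ (F : EntropyFn) (φ : EReal) : EReal :=
  ⨅ s : Ici (0:ℝ), φ * ((s : ℝ) : EReal) + ((F.F (s : ℝ) : ℝ≥0∞) : EReal)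

/-- The (interior of the) domain of `F°` is taken inside the set where `F°` is not `-∞`. -/
def circDom (F : EntropyFn) : Set ℝ := {φ : ℝ | F.circ (φ : EReal) ≠ ⊥}

/-- The reverse entropy function `R(r) = r·F(1/r)` for `r > 0`, with `R(0) = F'_∞`. -/
def revF (F : EntropyFn) (r : ℝ) : ℝ≥0∞ :=
  if 0 < r then ENNReal.ofReal r * F.F (1 / r) else F.recC

/-- The Legendre conjugate `R*(ψ) = sup_{s ≥ 0} (s·ψ − R(s))` of the reverse function. -/
def revConj (F : EntropyFn) (ψ : ℝ) : EReal :=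
  ⨆ s : Ici (0:ℝ), (((s : ℝ) * ψ : ℝ) : EReal) - ((F.revF (s : ℝ) : ℝ≥0∞) : EReal)

end EntropyFn

/-- The entropy functional `ℱ(γ|μ) = ∫ F(dγ/dμ) dμ + F'_∞ · γ^⊥(X)`, where
`γ = (dγ/dμ)·μ + γ^⊥` is the Lebesgue decomposition of `γ` with respect to `μ`. -/
def entF {X : Type*} [MeasurableSpace X] (F : EntropyFn) (γ μ : Measure X) : ℝ≥0∞ :=
  (∫⁻ x, F.F ((γ.rnDeriv μ x).toReal) ∂μ) + F.recC * (γ.singularPart μ) Set.univ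

/-- The reverse entropy functional `ℛ(μ|γ) = ∫ R(dμ/dγ) dγ + R'_∞ · μ^⊥(X)`. -/
def revEntF {X : Type*} [MeasurableSpace X] (F : EntropyFn) (μ γ : Measure X) : ℝ≥0∞ :=
  (∫⁻ x, F.revF ((μ.rnDeriv γ x).toReal) ∂γ) + recessionOf F.revF * (μ.singularPart γ) Set.univ

section WOET

variable {X₁ X₂ : Type*} [MeasurableSpace X₁] [MeasurableSpace X₂]

/-- The weak entropy-transport cost
`ℰ_C(γ|μ₁,μ₂) = ℱ₁(γ₁|μ₁) + ℱ₂(γ₂|μ₂) + ∫ C(x₁, γ_{x₁}) dγ₁(x₁)`. -/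
def wCost [StandardBorelSpace X₂] [Nonempty X₂]
    (C : X₁ → ProbabilityMeasure X₂ → EReal) (F₁ F₂ : EntropyFn)
    (μ₁ : Measure X₁) (μ₂ : Measure X₂)
    (γ : Measure (X₁ × X₂)) (hγ : IsFiniteMeasure γ) : EReal :=
  haveI := hγ
  ((entF F₁ γ.fst μ₁ : ℝ≥0∞) : EReal) + ((entF F₂ γ.snd μ₂ : ℝ≥0∞) : EReal) +
    eIntegral γ.fst (fun x₁ => C x₁ ⟨γ.condKernel x₁, inferInstance⟩)

/-- The weak optimal entropy-transport value `ℰ_C(μ₁,μ₂)`. -/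
def wOpt [StandardBorelSpace X₂] [Nonempty X₂]
    (C : X₁ → ProbabilityMeasure X₂ → EReal) (F₁ F₂ : EntropyFn)
    (μ₁ : Measure X₁) (μ₂ : Measure X₂) : EReal :=
  sInf { e : EReal | ∃ (γ : Measure (X₁ × X₂)) (hγ : IsFiniteMeasure γ),
    e = wCost C F₁ F₂ μ₁ μ₂ γ hγ }

variable [TopologicalSpace X₁] [TopologicalSpace X₂]

/-- The dual feasible set `Λ`. -/
def lamSet (C : X₁ → ProbabilityMeasure X₂ → EReal) (F₁ F₂ : EntropyFn) :
    Set ((X₁ →ᵇ ℝ) × (X₂ →ᵇ ℝ)) :=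
  { φ | (∀ x, φ.1 x ∈ interior F₁.circDom) ∧ (∀ x, φ.2 x ∈ interior F₂.circDom) ∧
      ∀ (x₁ : X₁) (p : ProbabilityMeasure X₂),
        ((φ.1 x₁ + ∫ x₂, φ.2 x₂ ∂(p : Measure X₂) : ℝ) : EReal) ≤ C x₁ p }

/-- The dual feasible set `Λ_R`. -/
def lamRSet (C : X₁ → ProbabilityMeasure X₂ → EReal) (F₁ F₂ : EntropyFn) :
    Set ((X₁ →ᵇ ℝ) × (X₂ →ᵇ ℝ)) :=
  { φ | (∃ b : ℝ, ((b : ℝ) : EReal) < ((F₁.F 0 : ℝ≥0∞) : EReal) ∧ ∀ x, φ.1 x ≤ b) ∧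
        (∃ b : ℝ, ((b : ℝ) : EReal) < ((F₂.F 0 : ℝ≥0∞) : EReal) ∧ ∀ x, φ.2 x ≤ b) ∧
        ∀ (x₁ : X₁) (p : ProbabilityMeasure X₂),
          F₁.revConj (φ.1 x₁) + eIntegral (p : Measure X₂) (fun x₂ => F₂.revConj (φ.2 x₂))
            ≤ C x₁ p }

/-- The dual feasible set `Λ_ET` (constraints tested against all pairs of nonnegative finite
measures; on all other signed measures `ET = +∞`, so those constraints are vacuous). -/
def lamETSet [StandardBorelSpace X₂] [Nonempty X₂]
    (C : X₁ → ProbabilityMeasure X₂ → EReal) (F₁ F₂ : EntropyFn) :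
    Set ((X₁ →ᵇ ℝ) × (X₂ →ᵇ ℝ)) :=
  { φ | ∀ (μ₁ : Measure X₁) (μ₂ : Measure X₂), IsFiniteMeasure μ₁ → IsFiniteMeasure μ₂ →
      (((∫ x, φ.1 x ∂μ₁) + ∫ x, φ.2 x ∂μ₂ : ℝ) : EReal) ≤ wOpt C F₁ F₂ μ₁ μ₂ }

/-- The set `Λ_ET^<`. -/
def lamETltSet [StandardBorelSpace X₂] [Nonempty X₂]
    (C : X₁ → ProbabilityMeasure X₂ → EReal) (F₁ F₂ : EntropyFn) :
    Set ((X₁ →ᵇ ℝ) × (X₂ →ᵇ ℝ)) :=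
  { φ ∈ lamETSet C F₁ F₂ |
      (∃ b : ℝ, ((b : ℝ) : EReal) < ((F₁.F 0 : ℝ≥0∞) : EReal) ∧ ∀ x, φ.1 x ≤ b) ∧
      (∃ b : ℝ, ((b : ℝ) : EReal) < ((F₂.F 0 : ℝ≥0∞) : EReal) ∧ ∀ x, φ.2 x ≤ b) }

/-- `R_C φ(x₁) := inf_{p ∈ 𝒫(X₂)} (C(x₁,p) + ∫ φ dp)`. -/
def RCfun (C : X₁ → ProbabilityMeasure X₂ → EReal) (φ : X₂ →ᵇ ℝ) (x₁ : X₁) : EReal :=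
  ⨅ p : ProbabilityMeasure X₂, C x₁ p + ((∫ x₂, φ x₂ ∂(p : Measure X₂) : ℝ) : EReal)

/-- Property (BM) of an admissible entropy function on a space `X`. -/
def HasBM (X : Type*) [TopologicalSpace X] [MeasurableSpace X] (F : EntropyFn) : Prop :=
  ∀ ψ : X →ᵇ ℝ, (∃ b : ℝ, ((b : ℝ) : EReal) < ((F.F 0 : ℝ≥0∞) : EReal) ∧ ∀ x, ψ x ≤ b) →
    ∃ s : X → ℝ, Measurable s ∧ (∃ M : ℝ, ∀ x, |s x| ≤ M) ∧ (∀ x, 0 < s x) ∧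
      ∀ x, ((F.revF (s x) : ℝ≥0∞) : EReal) + F.revConj (ψ x) = ((s x * ψ x : ℝ) : EReal)

end WOET

/-- The functional `ET` extended to pairs of finite signed measures:
it equals `ℰ_C(μ₁,μ₂)` when both arguments are (induced by) nonnegative finite measures,
and `+∞` otherwise. -/
def ETsgn {X₁ X₂ : Type*} [MeasurableSpace X₁] [MeasurableSpace X₂]
    [StandardBorelSpace X₂] [Nonempty X₂]
    (C : X₁ → ProbabilityMeasure X₂ → EReal) (F₁ F₂ : EntropyFn)
    (ν₁ : SignedMeasure X₁) (ν₂ : SignedMeasure X₂) : EReal :=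
  sInf { e : EReal | ∃ (μ₁ : Measure X₁) (h₁ : IsFiniteMeasure μ₁)
      (μ₂ : Measure X₂) (h₂ : IsFiniteMeasure μ₂),
      ν₁ = @Measure.toSignedMeasure X₁ _ μ₁ h₁ ∧ ν₂ = @Measure.toSignedMeasure X₂ _ μ₂ h₂ ∧
      e = wOpt C F₁ F₂ μ₁ μ₂ }

section Martingale

variable {X : Set ℝ}

/-- The martingale condition for a finite measure on `X × X`:
`∫ y dγ_x(y) = x` for `γ₁`-a.e. `x`. -/
def martCond [StandardBorelSpace ↥X] [Nonempty ↥X]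
    (γ : Measure (↥X × ↥X)) (hγ : IsFiniteMeasure γ) : Prop :=
  haveI := hγ
  ∀ᵐ x ∂γ.fst, (∫ y, (y : ℝ) ∂(γ.condKernel x)) = (x : ℝ)

/-- The martingale optimal entropy transport value `ℰ_M(μ₁,μ₂)` (with an `EReal`-valued
cost `c`). -/
def eMart [StandardBorelSpace ↥X] [Nonempty ↥X]
    (c : ↥X → ↥X → EReal) (F₁ F₂ : EntropyFn) (μ₁ μ₂ : Measure ↥X) : EReal :=
  sInf { e : EReal | ∃ (γ : Measure (↥X × ↥X)) (hγ : IsFiniteMeasure γ), martCond γ hγ ∧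
    e = ((entF F₁ γ.fst μ₁ : ℝ≥0∞) : EReal) + ((entF F₂ γ.snd μ₂ : ℝ≥0∞) : EReal) +
        eIntegral γ (fun q => c q.1 q.2) }

/-- The martingale optimal entropy transport value `ℰ_M(μ₁,μ₂)` (with a `[0,∞]`-valued
cost `c`). -/
def eMartNN [StandardBorelSpace ↥X] [Nonempty ↥X]
    (c : ↥X → ↥X → ℝ≥0∞) (F₁ F₂ : EntropyFn) (μ₁ μ₂ : Measure ↥X) : EReal :=
  sInf { e : EReal | ∃ (γ : Measure (↥X × ↥X)) (hγ : IsFiniteMeasure γ), martCond γ hγ ∧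
    e = ((entF F₁ γ.fst μ₁ + entF F₂ γ.snd μ₂ + ∫⁻ q, c q.1 q.2 ∂γ : ℝ≥0∞) : EReal) }

/-- The dual feasible set `Λ_M` for the martingale problem. -/
def lamM (c : ↥X → ↥X → EReal) (F₁ F₂ : EntropyFn) : Set ((↥X →ᵇ ℝ) × (↥X →ᵇ ℝ)) :=
  { φ | (∀ x, φ.1 x ∈ interior F₁.circDom) ∧ (∀ x, φ.2 x ∈ interior F₂.circDom) ∧
      ∃ h : ↥X →ᵇ ℝ, ∀ x₁ x₂ : ↥X,
        ((φ.1 x₁ + φ.2 x₂ + h x₁ * ((x₂ : ℝ) - (x₁ : ℝ)) : ℝ) : EReal) ≤ c x₁ x₂ }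

/-- The perspective function `r·F(θ/r)` with the convention `r·F(θ/r) = θ·F'_∞` for `r = 0`. -/
def perspFn (F : EntropyFn) (r θ : ℝ) : ℝ≥0∞ :=
  if r = 0 then ENNReal.ofReal θ * F.recC else ENNReal.ofReal r * F.F (θ / r)

/-- The homogeneous marginal perspective cost `H(x₁,r₁;x₂,r₂)` (the dependence on
`(x₁,x₂)` is through the value `c = c(x₁,x₂)`). -/
def Hcost (F₁ F₂ : EntropyFn) (c : ℝ≥0∞) (r₁ r₂ : ℝ) : ℝ≥0∞ :=
  if c ≠ ∞ then
    ⨅ θ : Ioi (0:ℝ), perspFn F₁ r₁ (θ : ℝ) + perspFn F₂ r₂ (θ : ℝ) + ENNReal.ofReal (θ : ℝ) * c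
  else F₁.F 0 * ENNReal.ofReal r₁ + F₂.F 0 * ENNReal.ofReal r₂

/-- The functional `ℋ(μ₁,μ₂|γ)`. -/
def hMargFun (F₁ F₂ : EntropyFn) (c : ↥X → ↥X → ℝ≥0∞) (μ₁ μ₂ : Measure ↥X)
    (γ : Measure (↥X × ↥X)) : ℝ≥0∞ :=
  (∫⁻ q, Hcost F₁ F₂ (c q.1 q.2) ((μ₁.rnDeriv γ.fst q.1).toReal)
      ((μ₂.rnDeriv γ.snd q.2).toReal) ∂γ)
    + F₁.F 0 * (μ₁.singularPart γ.fst) Set.univ + F₂.F 0 * (μ₂.singularPart γ.snd) Set.univ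

/-- The functional `ℛ(μ₁,μ₂|γ)`. -/
def rMargFun (F₁ F₂ : EntropyFn) (c : ↥X → ↥X → ℝ≥0∞) (μ₁ μ₂ : Measure ↥X)
    (γ : Measure (↥X × ↥X)) : ℝ≥0∞ :=
  revEntF F₁ μ₁ γ.fst + revEntF F₂ μ₂ γ.snd + ∫⁻ q, c q.1 q.2 ∂γ

/-- The first `p`-homogeneous marginal of a measure on `Y × Y`, `Y = X × [0,∞)`. -/
def hMarg1 (p : ℝ) (α : Measure ((↥X × ℝ≥0) × (↥X × ℝ≥0))) : Measure ↥X :=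
  Measure.map (fun q => q.1.1) (α.withDensity fun q => (q.1.2 : ℝ≥0∞) ^ p)

/-- The second `p`-homogeneous marginal of a measure on `Y × Y`, `Y = X × [0,∞)`. -/
def hMarg2 (p : ℝ) (α : Measure ((↥X × ℝ≥0) × (↥X × ℝ≥0))) : Measure ↥X :=
  Measure.map (fun q => q.2.1) (α.withDensity fun q => (q.2.2 : ℝ≥0∞) ^ p)

/-- Membership in the homogeneous constraint set `ℋ^p_{M,≤}(μ₁,μ₂)`. -/
def memHpM (p : ℝ) (μ₁ μ₂ : Measure ↥X) (α : Measure ((↥X × ℝ≥0) × (↥X × ℝ≥0))) : Prop :=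
  IsFiniteMeasure α ∧ (∫⁻ q, (q.1.2 : ℝ≥0∞) ^ p + (q.2.2 : ℝ≥0∞) ^ p ∂α) ≠ ∞ ∧
    hMarg1 p α ≤ μ₁ ∧ hMarg2 p α ≤ μ₂ ∧
    ∀ h : ↥X →ᵇ ℝ, (∫ q, h q.1.1 * ((q.2.1 : ℝ) - (q.1.1 : ℝ)) ∂α) = 0

end Martingale

namespace S14

lemma nncoe (r : ℝ≥0) : (((r : ℝ≥0∞)) : EReal) = ((r : ℝ) : EReal) := rfl

lemma coe_toR {x : ℝ≥0∞} (h : x ≠ ∞) : ((x.toReal : ℝ) : EReal) = (x : EReal) := by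
  lift x to ℝ≥0 using h
  rfl

lemma rev_le_iff (F : EntropyFn) (hF : F.Superlinear) (ψ a : ℝ) :
    F.revConj ψ ≤ (a : EReal) ↔ ∀ u : ℝ, 0 < u → F.F u ≠ ∞ → ψ - (F.F u).toReal ≤ a * u := by
  unfold EntropyFn.revConj
  rw [iSup_le_iff]
  constructor
  · intro h u hu hfin
    have h1 := h ⟨1 / u, by simp; positivity⟩
    have hp : 0 < 1 / u := by positivity
    simp only [EntropyFn.revF, if_pos hp, one_div_one_div] at h1
    obtain ⟨r, hr⟩ : ∃ r : ℝ≥0, F.F u = r := ⟨(F.F u).toNNReal, (ENNReal.coe_toNNReal hfin).symm⟩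
    rw [hr] at h1 ⊢
    rw [EReal.coe_ennreal_mul, EReal.coe_ennreal_ofReal, max_eq_left hp.le, nncoe,
      ← EReal.coe_mul, ← EReal.coe_sub] at h1
    have h2 : (((1 / u * ψ - 1 / u * (r : ℝ)) : ℝ) : EReal) ≤ (a : EReal) := h1
    have h3 : 1 / u * ψ - 1 / u * (r : ℝ) ≤ a := by exact_mod_cast h2
    have h4 := mul_le_mul_of_nonneg_right h3 hu.le
    have h5 : (1 / u * ψ - 1 / u * (r : ℝ)) * u = ψ - r := by field_simp
    rw [h5] at h4
    simpa using h4
  · rintro h ⟨s, hs⟩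
    simp only
    unfold EntropyFn.revF
    by_cases hp : 0 < s
    · rw [if_pos hp]
      by_cases hfin : F.F (1 / s) = ∞
      · rw [hfin, ENNReal.mul_top (by simpa using hp)]
        simp
      · have h1 := h (1 / s) (by positivity) hfin
        obtain ⟨r, hr⟩ : ∃ r : ℝ≥0, F.F (1 / s) = r :=
          ⟨(F.F (1 / s)).toNNReal, (ENNReal.coe_toNNReal hfin).symm⟩
        rw [hr] at h1 ⊢
        rw [EReal.coe_ennreal_mul, EReal.coe_ennreal_ofReal, max_eq_left hp.le, nncoe,
          ← EReal.coe_mul, ← EReal.coe_sub]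
        have h4 := mul_le_mul_of_nonneg_right h1 hp.le
        have h5 : a * (1 / s) * s = a := by field_simp
        rw [h5] at h4
        have h2 : (((s * ψ - s * (r : ℝ)) : ℝ) : EReal) ≤ (a : EReal) := by
          have : s * ψ - s * (r : ℝ) ≤ a := by
            simp at h4; linarith
          exact_mod_cast this
        exact h2
    · rw [if_neg hp, hF]
      simp

lemma le_circ_iff (F : EntropyFn) (φ a : ℝ) :
    (a : EReal) ≤ F.circ (φ : EReal) ↔
      ∀ u : ℝ, 0 ≤ u → F.F u ≠ ∞ → a ≤ φ * u + (F.F u).toReal := by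
  unfold EntropyFn.circ
  rw [le_iInf_iff]
  constructor
  · intro h u hu hfin
    have h1 := h ⟨u, hu⟩
    simp only at h1
    obtain ⟨r, hr⟩ : ∃ r : ℝ≥0, F.F u = r := ⟨(F.F u).toNNReal, (ENNReal.coe_toNNReal hfin).symm⟩
    rw [hr] at h1 ⊢
    rw [nncoe, ← EReal.coe_mul, ← EReal.coe_add] at h1
    have h2 : (a : EReal) ≤ ((φ * u + (r : ℝ) : ℝ) : EReal) := h1
    simpa using (EReal.coe_le_coe_iff.mp h2)
  · rintro h ⟨u, hu⟩
    simp only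
    by_cases hfin : F.F u = ∞
    · rw [hfin, ← EReal.coe_mul, EReal.coe_ennreal_top, EReal.coe_add_top]; exact le_top
    · have h1 := h u hu hfin
      obtain ⟨r, hr⟩ : ∃ r : ℝ≥0, F.F u = r := ⟨(F.F u).toNNReal, (ENNReal.coe_toNNReal hfin).symm⟩
      rw [hr] at h1 ⊢
      have h2 : (a : EReal) ≤ ((φ * u + (r : ℝ) : ℝ) : EReal) := by
        exact_mod_cast h1
      rw [nncoe, ← EReal.coe_mul, ← EReal.coe_add]
      exact h2

/-- superlinear growth -/
lemma growth (F : EntropyFn) (hF : F.Superlinear) (M : ℝ) (hM : 0 ≤ M) :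
    ∃ B : ℝ, ∀ u : ℝ, 0 ≤ u → F.F u ≠ ∞ → M * u - B ≤ (F.F u).toReal := by
  obtain ⟨u₀, hu₀, hfin₀⟩ := F.dom
  set c := (F.F u₀).toReal with hc
  have hc0 : 0 ≤ c := ENNReal.toReal_nonneg
  have hfr : ∃ᶠ s in atTop, ENNReal.ofReal (M + 1) < F.F s / ENNReal.ofReal s := by
    apply Filter.frequently_lt_of_lt_limsup
    · isBoundedDefault
    · have : Filter.limsup (fun s : ℝ => F.F s / ENNReal.ofReal s) Filter.atTop = ∞ := hF
      rw [this]; exact ENNReal.ofReal_lt_top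
  obtain ⟨s, hs, hsge⟩ := (hfr.and_eventually (eventually_ge_atTop (max (u₀ + 1) c))).exists
  have hs1 : u₀ + 1 ≤ s := (le_max_left _ _).trans hsge
  have hs2 : c ≤ s := (le_max_right _ _).trans hsge
  have hs0 : 0 < s := by linarith
  have hFs : ENNReal.ofReal ((M + 1) * s) ≤ F.F s := by
    rw [ENNReal.ofReal_mul (by linarith)]
    rw [ENNReal.lt_div_iff_mul_lt (Or.inl (by simpa using hs0)) (Or.inl (by simp))] at hs
    exact hs.le
  refine ⟨M * s, fun u hu hfin => ?_⟩
  by_cases hus : u ≤ s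
  · have : M * u ≤ M * s := mul_le_mul_of_nonneg_left hus hM
    have := ENNReal.toReal_nonneg (a := F.F u)
    linarith
  · push Not at hus
    have hd : 0 < u - u₀ := by linarith
    set t := (s - u₀) / (u - u₀) with ht
    have ht0 : 0 < t := by rw [ht]; apply div_pos <;> linarith
    have ht1 : t ≤ 1 := by rw [ht, div_le_one hd]; linarith
    have hcv := F.convex' u hu u₀ hu₀.le t ht0.le ht1
    have htd : t * (u - u₀) = s - u₀ := by rw [ht]; field_simp
    have heq : t * u + (1 - t) * u₀ = s := by linarith
    rw [heq] at hcv
    have h1 := hFs.trans hcv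
    rw [← ENNReal.ofReal_toReal hfin, ← ENNReal.ofReal_toReal hfin₀, ← ENNReal.ofReal_mul ht0.le,
      ← ENNReal.ofReal_mul (by linarith), ← ENNReal.ofReal_add
        (mul_nonneg ht0.le ENNReal.toReal_nonneg)
        (mul_nonneg (by linarith) ENNReal.toReal_nonneg)] at h1
    have h2 := (ENNReal.ofReal_le_ofReal_iff (add_nonneg
        (mul_nonneg ht0.le ENNReal.toReal_nonneg)
        (mul_nonneg (by linarith) ENNReal.toReal_nonneg))).mp h1
    rw [← hc] at h2
    set v := (F.F u).toReal
    have h3 : M * (t * (u - u₀)) ≤ t * (v - c) := by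
      rw [htd]; nlinarith
    have h4 : M * (u - u₀) ≤ v - c := by
      have : t * (M * (u - u₀)) ≤ t * (v - c) := by linarith
      exact le_of_mul_le_mul_left this ht0
    nlinarith

lemma circ_real (F : EntropyFn) (hF : F.Superlinear) (φ : ℝ) :
    ∃ r : ℝ, F.circ (φ : EReal) = r := by
  have hbot : F.circ (φ : EReal) ≠ ⊥ := by
    obtain ⟨B, hB⟩ := growth F hF |φ| (abs_nonneg _)
    have : ((-B : ℝ) : EReal) ≤ F.circ (φ : EReal) := by
      rw [le_circ_iff]
      intro u hu hfin
      have := hB u hu hfin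
      have h2 : -|φ| * u ≤ φ * u := mul_le_mul_of_nonneg_right (neg_abs_le φ) hu
      linarith
    intro h
    rw [h] at this
    simp at this
  have htop : F.circ (φ : EReal) ≠ ⊤ := by
    intro h
    obtain ⟨u, hu, hfin⟩ := F.dom
    have := (le_circ_iff F φ (φ * u + (F.F u).toReal + 1)).mp (by rw [h]; exact le_top) u hu.le hfin
    linarith
  exact ⟨_, (EReal.coe_toReal htop hbot).symm⟩

/-- real version of circ -/
def cr (F : EntropyFn) (φ : ℝ) : ℝ := (F.circ (φ : EReal)).toReal

lemma circ_eq (F : EntropyFn) (hF : F.Superlinear) (φ : ℝ) :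
    F.circ (φ : EReal) = (cr F φ : EReal) := by
  obtain ⟨r, hr⟩ := circ_real F hF φ
  simp [cr, hr]

lemma le_cr_iff (F : EntropyFn) (hF : F.Superlinear) (φ a : ℝ) :
    a ≤ cr F φ ↔ ∀ u : ℝ, 0 ≤ u → F.F u ≠ ∞ → a ≤ φ * u + (F.F u).toReal := by
  rw [← le_circ_iff, circ_eq F hF, EReal.coe_le_coe_iff]

lemma cr_cont (F : EntropyFn) (hF : F.Superlinear) : Continuous (cr F) := by
  have : ConcaveOn ℝ univ (cr F) := by
    refine ⟨convex_univ, fun x _ y _ a b ha hb hab => ?_⟩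
    rw [le_cr_iff F hF]
    intro u hu hfin
    have h1 := (le_cr_iff F hF x _).mp le_rfl u hu hfin
    have h2 := (le_cr_iff F hF y _).mp le_rfl u hu hfin
    simp only [smul_eq_mul]
    have h3 := mul_le_mul_of_nonneg_left h1 ha
    have h4 := mul_le_mul_of_nonneg_left h2 hb
    have : b = 1 - a := by linarith
    subst this
    linarith
  have := this.continuousOn isOpen_univ
  rwa [← continuousOn_univ]

lemma circDom_univ (F : EntropyFn) (hF : F.Superlinear) : F.circDom = univ := by
  ext φ
  simp [EntropyFn.circDom, circ_eq F hF]

/-- real version of the reverse conjugate -/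
def rr (F : EntropyFn) (ψ : ℝ) : ℝ := (F.revConj ψ).toReal

lemma rev_eq (F : EntropyFn) (hF : F.Superlinear) (ψ : ℝ)
    (h : (ψ : EReal) < ((F.F 0 : ℝ≥0∞) : EReal)) : F.revConj ψ = (rr F ψ : EReal) := by
  have hbot : F.revConj ψ ≠ ⊥ := by
    intro h
    obtain ⟨u, hu, hfin⟩ := F.dom
    have := (rev_le_iff F hF ψ ((ψ - (F.F u).toReal - 1) / u)).mp (by rw [h]; exact bot_le) u hu hfin
    rw [div_mul_cancel₀ _ hu.ne'] at this
    linarith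
  have htop : F.revConj ψ ≠ ⊤ := by
    have hlt : ENNReal.ofReal ψ < F.F 0 ∨ ψ < 0 := by
      by_cases h0 : 0 ≤ ψ
      · left
        rw [← EReal.coe_ennreal_lt_coe_ennreal_iff, EReal.coe_ennreal_ofReal, max_eq_left h0]
        exact h
      · right; linarith
    have : ∃ δ > 0, ∀ u, 0 < u → u < δ → F.F u ≠ ∞ → ψ ≤ (F.F u).toReal := by
      rcases hlt with h | h
      · have := F.lsc 0 (by simp) _ h
        rw [eventually_nhdsWithin_iff, Metric.eventually_nhds_iff] at this
        obtain ⟨δ, hδ, H⟩ := this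
        refine ⟨δ, hδ, fun u hu huδ hfin => ?_⟩
        have := H (y := u) (by simpa [abs_of_pos hu] using huδ) hu.le
        exact (ENNReal.ofReal_le_iff_le_toReal hfin).mp this.le
      · exact ⟨1, one_pos, fun u _ _ _ => h.le.trans ENNReal.toReal_nonneg⟩
    obtain ⟨δ, hδ, H⟩ := this
    have hle : F.revConj ψ ≤ ((|ψ| / δ : ℝ) : EReal) := by
      rw [rev_le_iff F hF]
      intro u hu hfin
      have hnn := ENNReal.toReal_nonneg (a := F.F u)
      by_cases huδ : u < δ
      · have := H u hu huδ hfin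
        have : 0 ≤ |ψ| / δ * u := by positivity
        linarith
      · push Not at huδ
        have : |ψ| / δ * δ ≤ |ψ| / δ * u := mul_le_mul_of_nonneg_left huδ (by positivity)
        rw [div_mul_cancel₀ _ hδ.ne'] at this
        linarith [le_abs_self ψ]
    intro h
    rw [h] at hle
    simp at hle
  exact (EReal.coe_toReal htop hbot).symm

lemma rr_le_iff (F : EntropyFn) (hF : F.Superlinear) (ψ : ℝ)
    (h : (ψ : EReal) < ((F.F 0 : ℝ≥0∞) : EReal)) (a : ℝ) :
    rr F ψ ≤ a ↔ ∀ u : ℝ, 0 < u → F.F u ≠ ∞ → ψ - (F.F u).toReal ≤ a * u := by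
  rw [← rev_le_iff F hF, rev_eq F hF ψ h, EReal.coe_le_coe_iff]

lemma rr_cont (F : EntropyFn) (hF : F.Superlinear) (c : ℝ)
    (hc : (c : EReal) < ((F.F 0 : ℝ≥0∞) : EReal)) : ContinuousOn (rr F) (Iio c) := by
  have hlt : ∀ x < c, (x : EReal) < ((F.F 0 : ℝ≥0∞) : EReal) := fun x hx =>
    (EReal.coe_lt_coe_iff.mpr hx).trans hc
  have : ConvexOn ℝ (Iio c) (rr F) := by
    refine ⟨convex_Iio c, fun x hx y hy a b ha hb hab => ?_⟩
    have hz : a • x + b • y ∈ Iio c := (convex_Iio c) hx hy ha hb hab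
    rw [rr_le_iff F hF _ (hlt _ hz)]
    intro u hu hfin
    have h1 := (rr_le_iff F hF x (hlt _ hx) _).mp le_rfl u hu hfin
    have h2 := (rr_le_iff F hF y (hlt _ hy) _).mp le_rfl u hu hfin
    simp only [smul_eq_mul]
    have h3 := mul_le_mul_of_nonneg_left h1 ha
    have h4 := mul_le_mul_of_nonneg_left h2 hb
    have : b = 1 - a := by linarith
    subst this
    linarith
  exact this.continuousOn isOpen_Iio

lemma exists_comp {X : Type*} [TopologicalSpace X] (f : X →ᵇ ℝ) (g : ℝ → ℝ) (b : ℝ)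
    (hb : ∀ x, f x ≤ b) (hg : ContinuousOn g (Iic b)) :
    ∃ h : X →ᵇ ℝ, ∀ x, h x = g (f x) := by
  have hmem : ∀ x, f x ∈ Icc (-‖f‖) b := fun x =>
    ⟨(abs_le.mp (f.norm_coe_le_norm x)).1, hb x⟩
  have hc : Continuous fun x => g (f x) :=
    hg.comp_continuous f.continuous fun x => hb x
  obtain ⟨K, hK⟩ := isCompact_Icc.exists_bound_of_continuousOn
    (hg.mono (fun x (hx : x ∈ Icc (-‖f‖) b) => hx.2))
  exact ⟨BoundedContinuousFunction.ofNormedAddCommGroup _ hc K fun x => hK _ (hmem x),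
    fun x => rfl⟩

lemma eInt_coe {X : Type*} [TopologicalSpace X] [MeasurableSpace X] [OpensMeasurableSpace X]
    (μ : Measure X) [IsFiniteMeasure μ] (f : X →ᵇ ℝ) :
    eIntegral μ (fun x => (f x : EReal)) = ((∫ x, f x ∂μ : ℝ) : EReal) := by
  have hi : Integrable (fun x => f x) μ := f.integrable μ
  have hi' : Integrable (fun x => - f x) μ := hi.neg
  rw [integral_eq_lintegral_pos_part_sub_lintegral_neg_part hi]
  unfold eIntegral
  have e1 : ∀ x, posE (f x : EReal) = ENNReal.ofReal (f x) := fun x => by simp [posE]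
  have e2 : ∀ x, posE (-(f x : EReal)) = ENNReal.ofReal (-f x) := fun x => by
    rw [← EReal.coe_neg]; simp [posE]
  simp only [e1, e2]
  have h1 := hi.lintegral_lt_top.ne
  have h2 := hi'.lintegral_lt_top.ne
  rw [EReal.coe_sub, coe_toR, coe_toR] <;> assumption

lemma posE_mono {a b : EReal} (h : a ≤ b) : posE a ≤ posE b := by
  unfold posE
  by_cases hb : b = ⊤
  · simp [hb]
  · have ha : a ≠ ⊤ := fun h' => hb (top_le_iff.mp (h' ▸ h))
    rw [if_neg hb, if_neg ha]
    by_cases hbot : a = ⊥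
    · simp [hbot]
    · exact ENNReal.ofReal_le_ofReal (EReal.toReal_le_toReal h hbot hb)

lemma eInt_mono {X : Type*} [MeasurableSpace X] (μ : Measure X) {f g : X → EReal}
    (h : ∀ x, f x ≤ g x) : eIntegral μ f ≤ eIntegral μ g := by
  unfold eIntegral
  apply EReal.sub_le_sub
  · exact_mod_cast lintegral_mono fun x => posE_mono (h x)
  · exact_mod_cast lintegral_mono fun x => posE_mono (EReal.neg_le_neg_iff.mpr (h x))

/-- from Λ_R to Λ, one component -/
lemma comp1 {X : Type*} [TopologicalSpace X] (F : EntropyFn) (hF : F.Superlinear) (ψ : X →ᵇ ℝ)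
    (hψ : ∃ b : ℝ, ((b : ℝ) : EReal) < ((F.F 0 : ℝ≥0∞) : EReal) ∧ ∀ x, ψ x ≤ b) :
    ∃ φ χ : X →ᵇ ℝ, (∀ x, F.revConj (ψ x) = (φ x : EReal)) ∧
      (∀ x, F.circ (φ x : ℝ) = (χ x : EReal)) ∧ ∀ x, ψ x ≤ χ x := by
  obtain ⟨b, hb, hψb⟩ := hψ
  obtain ⟨c, hbc, hc⟩ := EReal.lt_iff_exists_real_btwn.mp hb
  have hbc' : b < c := by exact_mod_cast hbc
  obtain ⟨φ, hφ⟩ := exists_comp ψ (rr F) b hψb ((rr_cont F hF c hc).mono fun x hx =>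
    lt_of_le_of_lt hx hbc')
  obtain ⟨χ, hχ⟩ := exists_comp φ (cr F) ‖φ‖ (fun x => (abs_le.mp (φ.norm_coe_le_norm x)).2)
    (cr_cont F hF).continuousOn
  have hlt : ∀ x, (ψ x : EReal) < ((F.F 0 : ℝ≥0∞) : EReal) := fun x =>
    lt_of_le_of_lt (EReal.coe_le_coe_iff.mpr (hψb x)) hb
  refine ⟨φ, χ, fun x => ?_, fun x => ?_, fun x => ?_⟩
  · rw [rev_eq F hF _ (hlt x), hφ]
  · rw [circ_eq F hF, hχ]
  · rw [hχ, le_cr_iff F hF]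
    intro u hu hfin
    rcases hu.eq_or_lt with rfl | hu
    · have := hlt x
      rw [← ENNReal.ofReal_toReal hfin, EReal.coe_ennreal_ofReal,
        max_eq_left ENNReal.toReal_nonneg] at this
      have := EReal.coe_lt_coe_iff.mp this
      linarith
    · have := (rr_le_iff F hF (ψ x) (hlt x) (φ x)).mp (hφ x).ge u hu hfin
      linarith

/-- from Λ to Λ_R, one component -/
lemma comp2 {X : Type*} [TopologicalSpace X] (F : EntropyFn) (hF : F.Superlinear) (φ : X →ᵇ ℝ) :
    ∃ χ : X →ᵇ ℝ, (∀ x, F.circ (φ x : ℝ) = (χ x : EReal)) ∧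
      ∀ ε : ℝ, 0 < ε → (∃ b : ℝ, ((b : ℝ) : EReal) < ((F.F 0 : ℝ≥0∞) : EReal) ∧
          ∀ x, χ x - ε ≤ b) ∧ ∀ x, F.revConj (χ x - ε) ≤ (φ x : EReal) := by
  obtain ⟨χ, hχ⟩ := exists_comp φ (cr F) ‖φ‖ (fun x => (abs_le.mp (φ.norm_coe_le_norm x)).2)
    (cr_cont F hF).continuousOn
  refine ⟨χ, fun x => by rw [circ_eq F hF, hχ], fun ε hε => ⟨?_, fun x => ?_⟩⟩
  · by_cases h0 : F.F 0 = ∞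
    · refine ⟨‖χ‖, by rw [h0]; exact EReal.coe_lt_top _, fun x => ?_⟩
      have := (abs_le.mp (χ.norm_coe_le_norm x)).2
      linarith
    · refine ⟨(F.F 0).toReal - ε, ?_, fun x => ?_⟩
      · rw [← coe_toR h0, EReal.coe_lt_coe_iff]; linarith
      · have := (le_cr_iff F hF (φ x) (χ x)).mp (hχ x).le 0 le_rfl h0
        linarith
  · rw [rev_le_iff F hF]
    intro u hu hfin
    have := (le_cr_iff F hF (φ x) (χ x)).mp (hχ x).le u hu.le hfin
    linarith

end S14

theorem stmt14
    {X₁ : Type*} [MetricSpace X₁] [PolishSpace X₁] [MeasurableSpace X₁] [BorelSpace X₁]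
    [LocallyCompactSpace X₁]
    {X₂ : Type*} [MetricSpace X₂] [PolishSpace X₂] [MeasurableSpace X₂] [BorelSpace X₂]
    [LocallyCompactSpace X₂] [Nonempty X₂]
    (C : X₁ → ProbabilityMeasure X₂ → EReal)
    (hClsc : LowerSemicontinuous fun q : X₁ × ProbabilityMeasure X₂ => C q.1 q.2)
    (hCbdd : ∃ K : ℝ, ∀ x p, (K : EReal) ≤ C x p)
    (hCconv : ∀ (x : X₁) (p q m : ProbabilityMeasure X₂) (t : ℝ), 0 ≤ t → t ≤ 1 →
      (m : Measure X₂) = ENNReal.ofReal t • (p : Measure X₂)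
          + ENNReal.ofReal (1 - t) • (q : Measure X₂) →
      C x m ≤ (t : EReal) * C x p + ((1 - t : ℝ) : EReal) * C x q)
    (F₁ F₂ : EntropyFn) (hF₁ : F₁.Superlinear) (hF₂ : F₂.Superlinear) (hBM : HasBM X₂ F₂)
    (μ₁ : Measure X₁) (μ₂ : Measure X₂) [IsFiniteMeasure μ₁] [IsFiniteMeasure μ₂] :
    sSup { e : EReal | ∃ φ ∈ lamRSet C F₁ F₂,
        e = (((∫ x, φ.1 x ∂μ₁) + ∫ x, φ.2 x ∂μ₂ : ℝ) : EReal) }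
      = sSup { e : EReal | ∃ φ ∈ lamSet C F₁ F₂,
          e = eIntegral μ₁ (fun x => F₁.circ (φ.1 x)) +
              eIntegral μ₂ (fun x => F₂.circ (φ.2 x)) } := by
  apply le_antisymm
  · apply sSup_le
    rintro e ⟨ψ, ⟨h1, h2, h3⟩, rfl⟩
    obtain ⟨φ₁, χ₁, a1, b1, c1⟩ := S14.comp1 F₁ hF₁ ψ.1 h1
    obtain ⟨φ₂, χ₂, a2, b2, c2⟩ := S14.comp1 F₂ hF₂ ψ.2 h2
    refine le_trans ?_ (le_sSup ⟨(φ₁, φ₂), ⟨?_, ?_, ?_⟩, rfl⟩)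
    · simp only [b1, b2, S14.eInt_coe]
      rw [← EReal.coe_add, EReal.coe_le_coe_iff]
      exact add_le_add (integral_mono (ψ.1.integrable μ₁) (χ₁.integrable μ₁) c1)
        (integral_mono (ψ.2.integrable μ₂) (χ₂.integrable μ₂) c2)
    · intro x; rw [S14.circDom_univ F₁ hF₁]; simp
    · intro x; rw [S14.circDom_univ F₂ hF₂]; simp
    · intro x p
      have := h3 x p
      simp only [a1, a2, S14.eInt_coe] at this
      rwa [← EReal.coe_add] at this
  · apply sSup_le
    rintro e ⟨φ, ⟨-, -, h3⟩, rfl⟩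
    obtain ⟨χ₁, a1, b1⟩ := S14.comp2 F₁ hF₁ φ.1
    obtain ⟨χ₂, a2, b2⟩ := S14.comp2 F₂ hF₂ φ.2
    simp only [a1, a2, S14.eInt_coe]
    rw [← EReal.coe_add]
    set m : ℝ := μ₁.real univ + μ₂.real univ with hm
    set a : ℝ := (∫ x, χ₁ x ∂μ₁) + ∫ x, χ₂ x ∂μ₂ with ha
    have ht : Tendsto (fun ε : ℝ => ((a - ε * m : ℝ) : EReal)) (𝓝[>] 0) (𝓝 (a : EReal)) := by
      have hc : Continuous (fun ε : ℝ => ((a - ε * m : ℝ) : EReal)) :=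
        continuous_coe_real_ereal.comp (by fun_prop)
      have := hc.tendsto 0
      simp only [zero_mul, sub_zero] at this
      exact this.mono_left nhdsWithin_le_nhds
    refine le_of_tendsto ht ?_
    filter_upwards [self_mem_nhdsWithin] with ε hε
    apply le_sSup
    refine ⟨(χ₁ - BoundedContinuousFunction.const X₁ ε,
      χ₂ - BoundedContinuousFunction.const X₂ ε), ⟨(b1 ε hε).1, (b2 ε hε).1, ?_⟩, ?_⟩
    · intro x p
      refine le_trans ?_ (h3 x p)
      rw [EReal.coe_add]
      refine add_le_add ((b1 ε hε).2 x) ?_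
      rw [← S14.eInt_coe]
      exact S14.eInt_mono _ fun x => (b2 ε hε).2 x
    · rw [EReal.coe_eq_coe_iff]
      simp only [BoundedContinuousFunction.coe_sub, Pi.sub_apply,
        BoundedContinuousFunction.const_apply]
      rw [integral_sub (χ₁.integrable μ₁) (integrable_const _),
        integral_sub (χ₂.integrable μ₂) (integrable_const _)]
      simp only [integral_const, smul_eq_mul, ha, hm]
      ring
end
end

section
/- Let X₁, X₂ be locally compact Polish metric spaces, C : X₁ × 𝒫(X₂) → (−∞,+∞] lower semi-continuous, bounded from below, with C(x₁,·) convex for every x₁, and let F₁, F₂ be superlinear admissible entropy functions such that F₂ has property (BM) on X₂. Define R_C φ(x₁) := inf_{p∈𝒫(X₂)} {C(x₁,p) + ∫_{X₂} φ dp} for x₁ ∈ X₁ and φ ∈ C_b(X₂). Then for every μ₁ ∈ ℳ(X₁), μ₂ ∈ ℳ(X₂): ℰ_C(μ₁,μ₂) = sup_{φ∈C_b(X₂)} [∫_{X₁} F₁°(R_C φ) dμ₁ + ∫_{X₂} F₂°(−φ) dμ₂]. -/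
open MeasureTheory Filter Set Topology
open scoped ENNReal NNReal BoundedContinuousFunction

noncomputable section

set_option linter.unusedSectionVars false
set_option linter.style.haveILetI false

section A1
variable {Y : Type*} [TopologicalSpace Y] [TopologicalSpace.MetrizableSpace Y] [SecondCountableTopology Y]
  [MeasurableSpace Y] [BorelSpace Y]

lemma lsc_prob_open {U : Set Y} (hU : IsOpen U) :
    LowerSemicontinuous (fun p : ProbabilityMeasure Y => (p : Measure Y) U) := by
  intro p
  refine lowerSemicontinuousAt_iff_le_liminf.2 ?_
  exact ProbabilityMeasure.le_liminf_measure_open_of_tendsto tendsto_id hU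

variable (Y) in
def finU : Set (Set Y) := sUnion '' {f : Set (Set Y) | f.Finite ∧ f ⊆ TopologicalSpace.countableBasis Y}

variable (Y) in
lemma finU_countable : (finU Y).Countable :=
  (Set.countable_ofPred_finite_subset (TopologicalSpace.countable_countableBasis Y)).image _

lemma finU_open {U : Set Y} (h : U ∈ finU Y) : IsOpen U := by
  obtain ⟨f, ⟨_, hf⟩, rfl⟩ := h
  exact isOpen_sUnion fun t ht => TopologicalSpace.isOpen_of_mem_countableBasis (hf ht)

lemma finU_lt {G : Set Y} (hG : IsOpen G) (p : Measure Y) {c : ℝ≥0∞} (hc : c < p G) :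
    ∃ V ∈ finU Y, V ⊆ G ∧ c < p V := by
  set D := {V | V ∈ finU Y ∧ V ⊆ G} with hD
  have hDc : D.Countable := (finU_countable Y).mono fun V hV => hV.1
  have hdir : DirectedOn (fun U V : Set Y => U ⊆ V) D := by
    rintro _ ⟨⟨f, ⟨hf, hf'⟩, rfl⟩, hfG⟩ _ ⟨⟨g, ⟨hg, hg'⟩, rfl⟩, hgG⟩
    refine ⟨⋃₀ (f ∪ g), ⟨⟨f ∪ g, ⟨hf.union hg, union_subset hf' hg'⟩, rfl⟩, ?_⟩, ?_, ?_⟩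
    · rw [sUnion_union]; exact union_subset hfG hgG
    · exact sUnion_subset_sUnion subset_union_left
    · exact sUnion_subset_sUnion subset_union_right
  have hU : (⋃ V ∈ D, id V) = G := by
    apply Subset.antisymm
    · exact iUnion₂_subset fun V hV => hV.2
    · intro x hx
      obtain ⟨V, hV, hxV, hVG⟩ :=
        (TopologicalSpace.isBasis_countableBasis Y).exists_subset_of_mem_open hx hG
      exact mem_iUnion₂.2 ⟨V, ⟨⟨{V}, ⟨finite_singleton V, by simpa using hV⟩, by simp⟩, hVG⟩, hxV⟩
  have := measure_biUnion_eq_iSup (μ := p) (s := id) hDc hdir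
  rw [hU] at this
  rw [this] at hc
  simp only [lt_iSup_iff] at hc
  obtain ⟨V, hV, h⟩ := hc
  exact ⟨V, hV.1, hV.2, h⟩

variable (Y) in
def pbase : Set (Set (ProbabilityMeasure Y)) :=
  (fun z : Set Y × ℚ => {p : ProbabilityMeasure Y | ENNReal.ofReal z.2 < (p : Measure Y) z.1}) ''
    (finU Y ×ˢ univ)

variable (Y) in
lemma prob_top_eq : (ProbabilityMeasure.instTopologicalSpace : TopologicalSpace (ProbabilityMeasure Y)) =
    TopologicalSpace.generateFrom (pbase Y) := by
  apply le_antisymm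
  · apply le_generateFrom
    rintro _ ⟨⟨U, q⟩, ⟨hU, -⟩, rfl⟩
    exact (lsc_prob_open (finU_open hU)).isOpen_preimage _
  · have hc : (pbase Y).Countable :=
      ((finU_countable Y).prod (countable_univ)).image _
    rw [TopologicalSpace.le_def]
    intro s hs
    let τ' := TopologicalSpace.generateFrom (pbase Y)
    have h2 : @SecondCountableTopology _ τ' := ⟨_, hc, rfl⟩
    refine (@isOpen_iff_mem_nhds _ τ' s).2 ?_
    intro p hp
    have : Tendsto (id) (@nhds _ τ' p) (@nhds _ ProbabilityMeasure.instTopologicalSpace p) := by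
      have hcg : (@nhds _ τ' p).IsCountablyGenerated :=
        @FirstCountableTopology.nhds_generated_countable _ τ' _ p
      refine tendsto_of_forall_isOpen_le_liminf' (L := @nhds _ τ' p) (μs := id) (μ := p) ?_
      intro G hG
      refine le_of_forall_lt fun c hc => ?_
      obtain ⟨V, hV, hVG, hcV⟩ := finU_lt hG (p : Measure Y) hc
      obtain ⟨q, hq0, hq1, hq2⟩ := ENNReal.lt_iff_exists_rat_btwn.1 hcV
      have hev : ∀ᶠ r : ProbabilityMeasure Y in @nhds _ τ' p, ENNReal.ofReal q < (r : Measure Y) G := by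
        have : {r : ProbabilityMeasure Y | ENNReal.ofReal q < (r : Measure Y) V} ∈ @nhds _ τ' p := by
          refine @IsOpen.mem_nhds _ τ' _ _ ?_ hq2
          exact TopologicalSpace.isOpen_generateFrom_of_mem ⟨(V, q), ⟨hV, trivial⟩, rfl⟩
        filter_upwards [this] with r hr
        exact lt_of_lt_of_le hr (measure_mono hVG)
      refine lt_of_lt_of_le hq1 ?_
      exact le_liminf_of_le (by isBoundedDefault) (hev.mono fun r hr => hr.le)
    exact this (@IsOpen.mem_nhds _ ProbabilityMeasure.instTopologicalSpace _ _ hs hp)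

instance prob_secondCountable : SecondCountableTopology (ProbabilityMeasure Y) :=
  ⟨pbase Y, ((finU_countable Y).prod (countable_univ)).image _, prob_top_eq Y⟩

instance prob_borel : BorelSpace (ProbabilityMeasure Y) := by
  constructor
  apply le_antisymm
  · let : MeasurableSpace (ProbabilityMeasure Y) := borel _
    haveI : BorelSpace (ProbabilityMeasure Y) := ⟨rfl⟩
    have : Measurable (fun p : ProbabilityMeasure Y => (p : Measure Y)) := by
      refine Measurable.measure_of_isPiSystem_of_isProbabilityMeasure
        (hgen := BorelSpace.measurable_eq.trans rfl) (hpi := isPiSystem_isOpen) ?_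
      intro s hs
      exact (lsc_prob_open hs).measurable
    exact this.comap_le
  · rw [borel_eq_generateFrom_of_subbasis (prob_top_eq Y)]
    apply MeasurableSpace.generateFrom_le
    rintro _ ⟨⟨U, q⟩, ⟨hU, -⟩, rfl⟩
    have : Measurable (fun p : ProbabilityMeasure Y => (p : Measure Y) U) :=
      (Measure.measurable_coe (finU_open hU).measurableSet).comp measurable_subtype_coe
    exact this measurableSet_Ioi
end A1

section A2

lemma standardBorel_of_equiv {A B : Type*} [MeasurableSpace A] [MeasurableSpace B]
    [StandardBorelSpace B] (e : A ≃ᵐ B) : StandardBorelSpace A := by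
  letI := upgradeStandardBorel B
  letI : TopologicalSpace A := TopologicalSpace.induced e.toEquiv inferInstance
  haveI : PolishSpace A := e.toEquiv.polishSpace_induced
  haveI : BorelSpace A := by
    constructor
    have h1 : (inferInstance : MeasurableSpace A) = MeasurableSpace.comap e inferInstance :=
      e.measurableEmbedding.comap_eq.symm
    have h2 : (inferInstance : MeasurableSpace B) = borel B := BorelSpace.measurable_eq
    calc _ = MeasurableSpace.comap e inferInstance := h1
      _ = MeasurableSpace.comap e (borel B) := by rw [← h2]
      _ = _ := borel_comap.symm
  infer_instance

variable {X K : Type*} [MeasurableSpace X] [MeasurableSpace K]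

def probEquiv (e : X → K) (he : MeasurableEmbedding e) :
    ProbabilityMeasure X ≃ᵐ {q : ProbabilityMeasure K | (q : Measure K) (range e) = 1} where
  toFun p := ⟨p.map he.measurable.aemeasurable, by
    change (Measure.map e p) (range e) = 1
    rw [he.map_apply]; simp⟩
  invFun q := ⟨(q.1 : Measure K).comap e, ⟨by
    rw [he.comap_apply, image_univ]; exact q.2⟩⟩
  left_inv p := by
    apply Subtype.ext
    exact he.comap_map _
  right_inv q := by
    apply Subtype.ext
    apply Subtype.ext
    change Measure.map e ((q.1 : Measure K).comap e) = q.1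
    rw [he.map_comap]
    rw [Measure.restrict_eq_self_of_ae_mem]
    rw [ae_mem_iff_measure_eq he.measurableSet_range.nullMeasurableSet]
    have := q.2
    simp only [mem_ofPred_eq] at this
    rw [measure_univ]; exact this
  measurable_toFun := by
    refine Measurable.subtype_mk ?_
    refine Measurable.subtype_mk ?_
    exact (Measure.measurable_map e he.measurable).comp measurable_subtype_coe
  measurable_invFun := by
    refine Measurable.subtype_mk ?_
    refine Measure.measurable_of_measurable_coe _ fun s hs => ?_
    simp only [he.comap_apply]
    exact (Measure.measurable_coe (he.measurableSet_image.2 hs)).comp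
      (measurable_subtype_coe.comp measurable_subtype_coe)

instance prob_standardBorel [StandardBorelSpace X] : StandardBorelSpace (ProbabilityMeasure X) := by
  let I := Icc (-(Real.pi/2)) (Real.pi/2)
  let e : X → I := fun x => ⟨Real.arctan (embeddingReal X x), (Real.neg_pi_div_two_lt_arctan _).le,
    (Real.arctan_lt_pi_div_two _).le⟩
  have hm : Measurable e := (Real.measurable_arctan.comp (measurable_embeddingReal X)).subtype_mk
  have hi : Function.Injective e := by
    intro x y h
    have h2 : (e x : ℝ) = (e y : ℝ) := by rw [h]
    exact (measurableEmbedding_embeddingReal X).injective (Real.arctan_injective h2)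
  have he : MeasurableEmbedding e := hm.measurableEmbedding hi
  haveI : PolishSpace (ProbabilityMeasure I) := by
    letI := TopologicalSpace.metrizableSpaceMetric (ProbabilityMeasure I)
    infer_instance
  have hset : MeasurableSet {q : ProbabilityMeasure I | (q : Measure I) (range e) = 1} :=
    (Measure.measurable_coe he.measurableSet_range).comp measurable_subtype_coe
      (measurableSet_singleton 1)
  haveI := hset.standardBorel
  exact standardBorel_of_equiv (probEquiv e he)
end A2

section A3
variable {Y : Type*} [TopologicalSpace Y] [TopologicalSpace.MetrizableSpace Y]
  [SecondCountableTopology Y] [MeasurableSpace Y] [BorelSpace Y]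

lemma integral_add_fm (f : Y →ᵇ ℝ) (μ ν : FiniteMeasure Y) :
    ∫ x, f x ∂((μ + ν : FiniteMeasure Y) : Measure Y) = ∫ x, f x ∂(μ : Measure Y)
      + ∫ x, f x ∂(ν : Measure Y) := by
  rw [FiniteMeasure.toMeasure_add]
  exact integral_add_measure (f.integrable _) (f.integrable _)

instance fm_firstCountable : FirstCountableTopology (FiniteMeasure Y) := by
  rcases isEmpty_or_nonempty Y with hY | ⟨⟨x0⟩⟩
  · haveI : Subsingleton (FiniteMeasure Y) := by
      constructor
      intro a b
      apply Subtype.ext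
      exact Subsingleton.elim (a : Measure Y) (b : Measure Y)
    haveI : DiscreteTopology (FiniteMeasure Y) := Subsingleton.discreteTopology
    infer_instance
  haveI : Nonempty Y := ⟨x0⟩
  let δ : FiniteMeasure Y := ⟨Measure.dirac x0, inferInstance⟩
  have hδ : δ.mass = 1 := by
    ext; simp [δ, FiniteMeasure.mass, FiniteMeasure.mk_apply]
  have hmass : ∀ ν : FiniteMeasure Y, (ν + δ).mass = ν.mass + 1 := by
    intro ν
    rw [← hδ]
    apply NNReal.coe_injective
    have := congrArg ENNReal.toReal (congrArg (fun m : Measure Y => m univ)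
      (FiniteMeasure.toMeasure_add ν δ))
    simp only [Measure.add_apply] at this
    rw [ENNReal.toReal_add (measure_ne_top _ _) (measure_ne_top _ _)] at this
    exact this
  have hne : ∀ ν : FiniteMeasure Y, ν + δ ≠ 0 := by
    intro ν h
    have := hmass ν
    rw [h] at this
    simp only [FiniteMeasure.zero_mass] at this
    exact absurd this.symm (by positivity)
  let f : FiniteMeasure Y → ProbabilityMeasure Y × ℝ≥0 := fun ν => ((ν + δ).normalize, ν.mass)
  have hf : IsInducing f := by
    rw [isInducing_iff_nhds]
    intro ν
    apply le_antisymm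
    · rw [← map_le_iff_le_comap]
      have h1 : Tendsto (fun ν' : FiniteMeasure Y => ν' + δ) (𝓝 ν) (𝓝 (ν + δ)) :=
        (continuous_id.add continuous_const).tendsto ν
      exact Tendsto.prodMk_nhds (FiniteMeasure.tendsto_normalize_of_tendsto h1 (hne ν))
        (FiniteMeasure.continuous_mass.tendsto ν)
    · have hL : Tendsto f (comap f (𝓝 (f ν))) (𝓝 (f ν)) := tendsto_comap
      have h1 := (Prod.tendsto_iff _ _).1 hL
      have h2 : Tendsto (fun ν' : FiniteMeasure Y => ν' + δ) (comap f (𝓝 (f ν))) (𝓝 (ν + δ)) := by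
        rw [← FiniteMeasure.tendsto_normalize_iff_tendsto (hne ν)]
        refine ⟨h1.1, ?_⟩
        simp only [hmass]
        exact h1.2.add_const 1
      have h3 : Tendsto (fun ν' : FiniteMeasure Y => ν') (comap f (𝓝 (f ν))) (𝓝 ν) := by
        rw [FiniteMeasure.tendsto_iff_forall_integral_tendsto] at h2 ⊢
        intro g
        have := (h2 g).sub_const (∫ x, g x ∂(δ : Measure Y))
        simpa only [integral_add_fm, add_sub_cancel_right] using this
      exact h3
  exact hf.firstCountableTopology
end A3

section A4
variable {Y : Type*} [TopologicalSpace Y] [TopologicalSpace.MetrizableSpace Y]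
  [SecondCountableTopology Y] [MeasurableSpace Y] [BorelSpace Y]

/-- lsc function is sup of bounded continuous -/
lemma lsc_isLUB (g : Y → ℝ≥0∞) (hg : LowerSemicontinuous g) :
    IsLUB {f : Y → ℝ≥0∞ | (∃ h : Y →ᵇ ℝ, (∀ y, 0 ≤ h y) ∧ f = fun y => ENNReal.ofReal (h y)) ∧ f ≤ g}
      g := by
  letI := TopologicalSpace.metrizableSpaceMetric Y
  constructor
  · intro f hf; exact hf.2
  · intro u hu y
    refine le_of_forall_lt fun c hc => ?_
    obtain ⟨d, hcd, hd⟩ := ENNReal.lt_iff_exists_nnreal_btwn.1 hc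
    have hopen : IsOpen {z | (d : ℝ≥0∞) < g z} := hg.isOpen_preimage _
    obtain ⟨b, hb1, hb2, hb3⟩ : ∃ b : C(Y, ℝ), EqOn b 0 {z | (d : ℝ≥0∞) < g z}ᶜ ∧ EqOn b 1 {y} ∧
        ∀ x, b x ∈ Icc (0:ℝ) 1 := by
      refine exists_continuous_zero_one_of_isClosed hopen.isClosed_compl isClosed_singleton ?_
      rw [disjoint_singleton_right]
      simpa using hd
    have hd0 := d.coe_nonneg
    let h : Y →ᵇ ℝ := BoundedContinuousFunction.ofNormedAddCommGroup
      (fun z => (d : ℝ) * b z) (by fun_prop) d (by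
        intro x
        have h1 := hb3 x
        rw [Real.norm_eq_abs, abs_of_nonneg (mul_nonneg hd0 h1.1)]
        exact mul_le_of_le_one_right hd0 h1.2)
    have hmem : (fun y => ENNReal.ofReal (h y)) ∈
        {f : Y → ℝ≥0∞ | (∃ h : Y →ᵇ ℝ, (∀ y, 0 ≤ h y) ∧ f = fun y => ENNReal.ofReal (h y)) ∧
          f ≤ g} := by
      refine ⟨⟨h, fun z => mul_nonneg hd0 (hb3 z).1, rfl⟩, ?_⟩
      intro z
      by_cases hz : (d : ℝ≥0∞) < g z
      · refine le_trans ?_ hz.le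
        have : h z ≤ d := mul_le_of_le_one_right hd0 (hb3 z).2
        exact ENNReal.ofReal_le_of_le_toReal (by simpa using this)
      · have : h z = 0 := by
          change (d : ℝ) * (b z) = 0
          have : b z = 0 := hb1 hz
          simp [this]
        simp [this]
    have := hu hmem y
    have hy : h y = d := by
      change (d : ℝ) * (b y) = d
      have : b y = 1 := hb2 rfl
      simp [this]
    simp only [hy, ENNReal.ofReal_coe_nnreal] at this
    exact lt_of_lt_of_le hcd this

lemma lintegral_lsc_lt (g : Y → ℝ≥0∞) (hg : LowerSemicontinuous g) (Λ : Measure Y)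
    {c : ℝ≥0∞} (hc : c < ∫⁻ y, g y ∂Λ) :
    ∃ h : Y →ᵇ ℝ, (∀ y, 0 ≤ h y) ∧ (∀ y, ENNReal.ofReal (h y) ≤ g y) ∧
      c < ∫⁻ y, ENNReal.ofReal (h y) ∂Λ := by
  obtain ⟨T, hT, hTc, hTl⟩ := exists_countable_lowerSemicontinuous_isLUB (fun f hf => by
    obtain ⟨⟨h, -, rfl⟩, -⟩ := hf
    exact (ENNReal.continuous_ofReal.comp h.continuous).lowerSemicontinuous) (lsc_isLUB g hg)
  have hTc' : (T ∪ {0}).Countable := hTc.union (countable_singleton 0)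
  have hT' : T ∪ {0} ⊆ {f : Y → ℝ≥0∞ | (∃ h : Y →ᵇ ℝ, (∀ y, 0 ≤ h y) ∧
      f = fun y => ENNReal.ofReal (h y)) ∧ f ≤ g} := by
    refine union_subset hT ?_
    rintro _ rfl
    exact ⟨⟨0, by simp, by ext; simp⟩, fun y => by simp⟩
  obtain ⟨u, hu⟩ := hTc'.exists_eq_range ⟨0, by simp⟩
  have hu' : ∀ n, ∃ h : Y →ᵇ ℝ, (∀ y, 0 ≤ h y) ∧ u n = (fun y => ENNReal.ofReal (h y)) ∧
      u n ≤ g := by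
    intro n
    have := hT' (hu ▸ mem_range_self n : u n ∈ T ∪ {0})
    obtain ⟨⟨h, h0, hh⟩, hg⟩ := this
    exact ⟨h, h0, hh, hg⟩
  choose H hH0 hH1 hH2 using hu'
  let P := partialSups H
  have hP0 : ∀ n y, 0 ≤ P n y := by
    intro n y
    have : H n ≤ P n := le_partialSups H n
    exact (hH0 n y).trans (this y)
  have hPg : ∀ n y, ENNReal.ofReal (P n y) ≤ g y := by
    intro n
    induction n with
    | zero => intro y; have := hH2 0 y; rw [hH1 0] at this; simpa [P] using this
    | succ n ih =>
      intro y
      have h2 := hH2 (n+1) y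
      rw [hH1 (n+1)] at h2
      have : P (n+1) = P n ⊔ H (n+1) := partialSups_add_one H n
      rw [this]
      change ENNReal.ofReal (max (P n y) (H (n+1) y)) ≤ g y
      rw [ENNReal.ofReal_max]
      exact max_le (ih y) h2
  have hsup : ∀ y, ⨆ n, ENNReal.ofReal (P n y) = g y := by
    intro y
    apply le_antisymm (iSup_le fun n => hPg n y)
    have h1 : IsLUB (T ∪ {0}) g := by
      refine ⟨?_, fun b hb => hTl.2 fun f hf => hb (Or.inl hf)⟩
      intro f hf
      exact (hT' hf).2
    have : g ≤ fun y => ⨆ n, ENNReal.ofReal (P n y) := by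
      refine h1.2 ?_
      rw [hu]
      rintro _ ⟨n, rfl⟩ y
      refine le_iSup_of_le n ?_
      rw [hH1 n]
      have : H n ≤ P n := le_partialSups H n
      exact ENNReal.ofReal_le_ofReal (this y)
    exact this y
  have hmono : Monotone fun n y => ENNReal.ofReal (P n y) := by
    intro m n hmn y
    have : P m ≤ P n := (partialSups H).monotone hmn
    exact ENNReal.ofReal_le_ofReal (this y)
  have hint : ∫⁻ y, g y ∂Λ = ⨆ n, ∫⁻ y, ENNReal.ofReal (P n y) ∂Λ := by
    rw [← lintegral_iSup (fun n => by fun_prop) hmono]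
    simp only [hsup]
  rw [hint, lt_iSup_iff] at hc
  obtain ⟨n, hn⟩ := hc
  exact ⟨P n, hP0 n, hPg n, hn⟩
end A4

section HB
lemma hb_sep {M W : Type*} [TopologicalSpace M] [AddCommGroup W] [Module ℝ W]
    (b : M → W →ₗ[ℝ] ℝ)
    (hb : ∀ (m : M) (L : Filter M), (∀ w, Tendsto (fun e => b e w) L (𝓝 (b m w))) → L ≤ 𝓝 m)
    (S : Set M)
    (hconv : ∀ e ∈ S, ∀ e' ∈ S, ∀ t t' : ℝ, 0 ≤ t → 0 ≤ t' → t + t' = 1 →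
      ∃ e'' ∈ S, ∀ w, b e'' w = t * b e w + t' * b e' w)
    (m : M) (hm : m ∉ closure S) :
    ∃ (w : W) (u : ℝ), (∀ e ∈ S, b e w < u) ∧ u < b m w := by
  let B : (W →ₗ[ℝ] ℝ) →ₗ[ℝ] W →ₗ[ℝ] ℝ := LinearMap.id
  let b' : M → WeakBilin B := b
  have hev : ∀ w : W, Continuous (fun e : WeakBilin B => B e w) := fun w => WeakBilin.eval_continuous B w
  have hm' : b' m ∉ closure (b' '' S) := by
    intro h
    apply hm
    rw [mem_closure_iff_clusterPt]
    have h1 : (𝓝 (b' m) ⊓ 𝓟 (b' '' S)).NeBot := mem_closure_iff_clusterPt.1 h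
    have h2 : (comap b' (𝓝 (b' m)) ⊓ 𝓟 S).NeBot := by
      have : map b' (comap b' (𝓝 (b' m)) ⊓ 𝓟 S) = 𝓝 (b' m) ⊓ 𝓟 (b' '' S) := by
        rw [inf_comm, Filter.push_pull, map_principal, inf_comm]
      rw [← this] at h1
      exact (map_neBot_iff b').1 h1
    have h3 : comap b' (𝓝 (b' m)) ≤ 𝓝 m := by
      apply hb
      intro w
      exact ((hev w).tendsto (b' m)).comp tendsto_comap
    exact h2.mono (inf_le_inf_right _ h3)
  have hc : Convex ℝ (b' '' S) := by
    rintro _ ⟨e, he, rfl⟩ _ ⟨e', he', rfl⟩ t t' ht ht' htt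
    obtain ⟨e'', he'', h⟩ := hconv e he e' he' t t' ht ht' htt
    refine ⟨e'', he'', ?_⟩
    change b e'' = t • b e + t' • b e'
    ext w
    simpa using h w
  obtain ⟨f, u, hf1, hf2⟩ := geometric_hahn_banach_closed_point hc.closure isClosed_closure hm'
  obtain ⟨w, rfl⟩ := LinearMap.dualEmbedding_surjective B f
  exact ⟨w, u, fun e he => hf1 _ (subset_closure ⟨e, he, rfl⟩), hf2⟩
end HB

section CC

/-- affine minorants of an entropy function -/
def AffLe (F : EntropyFn) (a b : ℝ) : Prop := ∀ s : ℝ, 0 ≤ s → ENNReal.ofReal (a + b * s) ≤ F.F s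

lemma affLe_zero (F : EntropyFn) : AffLe F 0 0 := by
  intro s hs; simp

lemma affLe_super (F : EntropyFn) (hF : F.Superlinear) (M : ℝ) : ∃ c : ℝ, 0 ≤ c ∧ AffLe F (-c) M := by
  wlog hM : 0 ≤ M generalizing M
  · obtain ⟨c, hc, h⟩ := this 0 le_rfl
    refine ⟨c, hc, fun s hs => le_trans (ENNReal.ofReal_le_ofReal ?_) (h s hs)⟩
    nlinarith
  obtain ⟨s0, hs0, hFs0⟩ := F.dom
  set A := (F.F s0).toReal with hA
  have hA0 : 0 ≤ A := ENNReal.toReal_nonneg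
  have hfr : ∃ᶠ s in (atTop : Filter ℝ), ENNReal.ofReal (M + A / s0) < F.F s / ENNReal.ofReal s := by
    apply frequently_lt_of_lt_limsup (by isBoundedDefault)
    have : limsup (fun s : ℝ => F.F s / ENNReal.ofReal s) atTop = ∞ := hF
    rw [this]; exact ENNReal.ofReal_lt_top
  obtain ⟨s1, hs1, h10⟩ := (hfr.and_eventually (eventually_gt_atTop s0)).exists
  have hs1p : 0 < s1 := hs0.trans h10
  rw [ENNReal.lt_div_iff_mul_lt (Or.inl (by simpa using hs1p)) (Or.inl ENNReal.ofReal_ne_top),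
    ← ENNReal.ofReal_mul (by positivity)] at hs1
  refine ⟨M * s1, by positivity, fun s hs => ?_⟩
  rcases lt_or_ge s s1 with h | h
  · rw [ENNReal.ofReal_of_nonpos (by nlinarith)]; exact zero_le
  by_cases hFs : F.F s = ∞
  · rw [hFs]; exact le_top
  set t := (s - s1) / (s - s0) with ht
  have hss0 : 0 < s - s0 := by linarith
  have ht0 : 0 ≤ t := div_nonneg (by linarith) hss0.le
  have ht1 : t < 1 := by rw [ht, div_lt_one hss0]; linarith
  have hconv := F.convex' s0 hs0.le s hs t ht0 ht1.le
  have hpt : t * s0 + (1 - t) * s = s1 := by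
    rw [ht]; field_simp; ring
  rw [hpt] at hconv
  have h2 : M * s1 + A < t * A + (1 - t) * (F.F s).toReal := by
    have h3 := lt_of_lt_of_le hs1 hconv
    rw [← ENNReal.ofReal_toReal hFs0, ← ENNReal.ofReal_toReal hFs, ← ENNReal.ofReal_mul ht0,
      ← ENNReal.ofReal_mul (by linarith), ← ENNReal.ofReal_add (by positivity)
      (mul_nonneg (by linarith) ENNReal.toReal_nonneg)] at h3
    have h4 := (ENNReal.ofReal_lt_ofReal_iff_of_nonneg (by positivity)).1 h3
    refine lt_of_le_of_lt ?_ h4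
    have : A ≤ A / s0 * s1 := by
      rw [div_mul_eq_mul_div, le_div_iff₀ hs0]; nlinarith
    nlinarith
  refine ENNReal.ofReal_le_of_le_toReal ?_
  have h5 : M * s1 < (1 - t) * (F.F s).toReal := by nlinarith
  have h6 : (1 - t) * (s - s0) = s1 - s0 := by rw [ht]; field_simp; ring
  by_contra hcon
  push Not at hcon
  have : (1 - t) * (F.F s).toReal ≤ (1 - t) * (-(M * s1) + M * s) :=
    mul_le_mul_of_nonneg_left hcon.le (by linarith)
  have h7 : (1 - t) * (-(M * s1) + M * s) ≤ (1 - t) * (M * (s - s0)) :=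
    mul_le_mul_of_nonneg_left (by nlinarith) (by linarith)
  have h8 : (1 - t) * (M * (s - s0)) = M * (s1 - s0) := by rw [← h6]; ring
  nlinarith

lemma F_epi_closed (F : EntropyFn) :
    IsClosed {p : ℝ × ℝ | 0 ≤ p.1 ∧ 0 ≤ p.2 ∧ F.F p.1 ≤ ENNReal.ofReal p.2} := by
  have h1 : LowerSemicontinuous (fun s : ℝ => F.F (max s 0)) := by
    intro s
    have := F.lsc (max s 0) (mem_Ici.2 (le_max_right _ _))
    intro y hy
    have h2 := this y hy
    have h3 : Tendsto (fun s : ℝ => max s 0) (𝓝 s) (𝓝[Ici 0] (max s 0)) := by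
      refine tendsto_nhdsWithin_iff.2 ⟨(continuous_id.max continuous_const).tendsto s, ?_⟩
      exact Eventually.of_forall fun x => mem_Ici.2 (le_max_right _ _)
    exact h3.eventually h2
  have h2 := h1.isClosed_epigraph
  have h3 : {p : ℝ × ℝ | 0 ≤ p.1 ∧ 0 ≤ p.2 ∧ F.F p.1 ≤ ENNReal.ofReal p.2} =
      {p | 0 ≤ p.1} ∩ ({p | 0 ≤ p.2} ∩
      (fun p : ℝ × ℝ => (p.1, ENNReal.ofReal p.2)) ⁻¹' {p : ℝ × ℝ≥0∞ | F.F (max p.1 0) ≤ p.2}) := by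
    ext p
    constructor
    · rintro ⟨h, h', h''⟩
      refine ⟨h, h', ?_⟩
      change F.F (max p.1 0) ≤ _
      rw [max_eq_left h]; exact h''
    · rintro ⟨h, h', h''⟩
      refine ⟨h, h', ?_⟩
      change F.F (max p.1 0) ≤ _ at h''
      rw [max_eq_left h] at h''; exact h''
  rw [h3]
  refine (isClosed_le continuous_const continuous_fst).inter
    ((isClosed_le continuous_const continuous_snd).inter ?_)
  exact h2.preimage (continuous_fst.prodMk (ENNReal.continuous_ofReal.comp continuous_snd))

lemma affLe_lt (F : EntropyFn) {s : ℝ} {c : ℝ≥0∞} (hc : c < F.F s) :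
    ∃ a b : ℝ, AffLe F a b ∧ c < ENNReal.ofReal (a + b * s) := by
  obtain ⟨r, hcr, hrF⟩ := ENNReal.lt_iff_exists_nnreal_btwn.1 hc
  set T := {p : ℝ × ℝ | 0 ≤ p.1 ∧ 0 ≤ p.2 ∧ F.F p.1 ≤ ENNReal.ofReal p.2} with hT
  have hTc : Convex ℝ T := by
    rintro ⟨x, y⟩ ⟨h1, h2, h3⟩ ⟨x', y'⟩ ⟨h1', h2', h3'⟩ t t' ht ht' htt
    simp only at h1 h2 h3 h1' h2' h3'
    refine ⟨by simp; positivity, by simp; positivity, ?_⟩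
    simp only [Prod.fst_add, Prod.smul_fst, smul_eq_mul, Prod.snd_add, Prod.smul_snd]
    have ht2 : t' = 1 - t := by linarith
    subst ht2
    refine (F.convex' x h1 x' h1' t ht (by linarith)).trans ?_
    rw [ENNReal.ofReal_add (by positivity) (by positivity), ENNReal.ofReal_mul ht,
      ENNReal.ofReal_mul ht']
    gcongr
  have hnot : (s, (r : ℝ)) ∉ T := by
    rintro ⟨-, -, h⟩
    simp only [ENNReal.ofReal_coe_nnreal] at h
    exact absurd h (not_le.2 hrF)
  obtain ⟨f, u, hf, hfu⟩ := geometric_hahn_banach_closed_point hTc (F_epi_closed F) hnot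
  set β := f (1, 0)
  set α := f (0, 1)
  have hfe : ∀ x y, f (x, y) = β * x + α * y := by
    intro x y
    have : ((x, y) : ℝ × ℝ) = x • (1, 0) + y • (0, 1) := by simp
    rw [this, map_add, map_smul, map_smul]
    simp only [smul_eq_mul, β, α]; ring
  rw [hfe] at hfu
  have hf' : ∀ x, 0 ≤ x → F.F x ≠ ∞ → ∀ k, 0 ≤ k → β * x + α * ((F.F x).toReal + k) < u := by
    intro x hx hF k hk
    rw [← hfe]
    refine hf _ ⟨hx, add_nonneg ENNReal.toReal_nonneg hk, ?_⟩
    rw [ENNReal.le_ofReal_iff_toReal_le hF (add_nonneg ENNReal.toReal_nonneg hk)]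
    simpa using hk
  obtain ⟨s0, hs0, hFs0⟩ := F.dom
  have hα : α ≤ 0 := by
    by_contra h
    push Not at h
    have h1 := hf' s0 hs0.le hFs0 (max 0 ((u - β * s0 - α * (F.F s0).toReal) / α)) (le_max_left _ _)
    have h2 : (u - β * s0 - α * (F.F s0).toReal) ≤
        α * max 0 ((u - β * s0 - α * (F.F s0).toReal) / α) := by
      rw [← div_le_iff₀' h]; exact le_max_right _ _
    nlinarith
  rcases hα.lt_or_eq with hα | hα
  · refine ⟨-u / (-α), β / (-α), fun x hx => ?_, ?_⟩
    · by_cases hF : F.F x = ∞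
      · rw [hF]; exact le_top
      have := hf' x hx hF 0 le_rfl
      refine ENNReal.ofReal_le_of_le_toReal ?_
      have h2 : -u / (-α) + β / (-α) * x = (β * x - u) / (-α) := by ring
      rw [h2, div_le_iff₀ (by linarith)]
      nlinarith
    · refine hcr.trans ?_
      rw [← ENNReal.ofReal_coe_nnreal]
      have h2 : -u / (-α) + β / (-α) * s = (β * s - u) / (-α) := by ring
      have h3 : (r : ℝ) < -u / (-α) + β / (-α) * s := by
        rw [h2, lt_div_iff₀ (by linarith)]; nlinarith
      exact (ENNReal.ofReal_lt_ofReal_iff_of_nonneg r.coe_nonneg).2 h3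
  · rw [hα] at hfu hf'
    have hd : 0 < β * s - u := by linarith
    set k := ((r : ℝ) + 1) / (β * s - u)
    have hk : 0 ≤ k := by positivity
    refine ⟨-(k * u), k * β, fun x hx => ?_, ?_⟩
    · by_cases hF : F.F x = ∞
      · rw [hF]; exact le_top
      have := hf' x hx hF 0 le_rfl
      rw [ENNReal.ofReal_of_nonpos]
      · exact zero_le
      · nlinarith
    · refine hcr.trans ?_
      rw [← ENNReal.ofReal_coe_nnreal]
      refine (ENNReal.ofReal_lt_ofReal_iff_of_nonneg r.coe_nonneg).2 ?_
      have : -(k * u) + k * β * s = k * (β * s - u) := by ring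
      rw [this]
      have : k * (β * s - u) = r + 1 := by simp only [k]; field_simp
      linarith

lemma affLe_seq (F : EntropyFn) (hF : F.Superlinear) : ∃ A B : ℕ → ℝ, (∀ n, AffLe F (A n) (B n)) ∧
    A 0 = 0 ∧ B 0 = 0 ∧ (∀ s, 0 ≤ s → F.F s = ⨆ n, ENNReal.ofReal (A n + B n * s)) ∧
    ∀ M, ∃ n, M ≤ B n := by
  let T := {p : ℝ × ℝ // AffLe F p.1 p.2}
  haveI : Nonempty T := ⟨⟨(0, 0), affLe_zero F⟩⟩
  obtain ⟨u, hu⟩ := TopologicalSpace.exists_dense_seq T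
  refine ⟨fun n => Nat.casesOn n 0 fun n => (u n).1.1, fun n => Nat.casesOn n 0 fun n => (u n).1.2,
    ?_, rfl, rfl, ?_, ?_⟩
  · rintro (_ | n)
    · exact affLe_zero F
    · exact (u n).2
  · intro s hs
    apply le_antisymm
    · refine le_of_forall_lt fun c hc => ?_
      obtain ⟨a, b, hab, hc'⟩ := affLe_lt F hc
      have hopen : IsOpen {p : T | c < ENNReal.ofReal (p.1.1 + p.1.2 * s)} :=
        isOpen_lt continuous_const (ENNReal.continuous_ofReal.comp (by fun_prop))
      obtain ⟨n, hn⟩ := hu.exists_mem_open hopen ⟨⟨(a, b), hab⟩, hc'⟩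
      exact lt_of_lt_of_le hn (le_iSup (fun n : ℕ => ENNReal.ofReal
        ((Nat.casesOn n 0 fun n => (u n).1.1 : ℝ) + (Nat.casesOn n 0 fun n => (u n).1.2 : ℝ) * s)) (n+1))
    · refine iSup_le ?_
      rintro (_ | n)
      · simp
      · exact (u n).2 s hs
  · intro M
    obtain ⟨c, -, hc⟩ := affLe_super F hF (M + 1)
    have hopen : IsOpen {p : T | M < p.1.2} :=
      isOpen_lt continuous_const (by fun_prop)
    obtain ⟨n, hn⟩ := hu.exists_mem_open hopen ⟨⟨(-c, M+1), hc⟩, by change M < M + 1; linarith⟩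
    exact ⟨n+1, le_of_lt hn⟩
end CC

section DD
variable {α : Type*} [MeasurableSpace α]

lemma posE_coe (x : ℝ) : posE (x : EReal) = ENNReal.ofReal x := by
  simp [posE]

lemma posE_top : posE ⊤ = ⊤ := by simp [posE]

lemma posE_bot : posE ⊥ = 0 := by simp [posE]

lemma posE_mono {a b : EReal} (h : a ≤ b) : posE a ≤ posE b := by
  induction b with
  | bot => rw [le_bot_iff.1 h]
  | top => rw [posE_top]; exact le_top
  | coe y =>
    induction a with
    | bot => rw [posE_bot]; exact zero_le
    | top => exact absurd h (by simp)
    | coe x => rw [posE_coe, posE_coe]; exact ENNReal.ofReal_le_ofReal (EReal.coe_le_coe_iff.1 h)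

lemma eIntegral_mono_ae (μ : Measure α) {f g : α → EReal} (h : ∀ᵐ x ∂μ, f x ≤ g x) :
    eIntegral μ f ≤ eIntegral μ g := by
  unfold eIntegral
  apply EReal.sub_le_sub
  · exact_mod_cast lintegral_mono_ae (h.mono fun x hx => posE_mono hx)
  · exact_mod_cast lintegral_mono_ae (h.mono fun x hx => posE_mono (EReal.neg_le_neg_iff.2 hx))

lemma posE_identity (g : ℝ≥0∞) (c : ℝ) :
    posE ((g : EReal) + (c : EReal)) + ENNReal.ofReal (-c) =
      g + ENNReal.ofReal c + posE (-((g : EReal) + (c : EReal))) := by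
  induction g with
  | top => simp [posE_top]
  | coe g =>
    have h1 : (((g : ℝ≥0∞) : EReal) + (c : EReal)) = (((g : ℝ) + c : ℝ) : EReal) := by
      push_cast; rfl
    have h2 : -(((g : ℝ) + c : ℝ) : EReal) = ((-((g : ℝ) + c) : ℝ) : EReal) := by
      push_cast; rfl
    rw [h1, h2, posE_coe, posE_coe, ← ENNReal.ofReal_coe_nnreal]
    have hg := g.coe_nonneg
    rcases le_total 0 c with hc | hc
    · rw [ENNReal.ofReal_of_nonpos (show -c ≤ 0 by linarith),
        ENNReal.ofReal_of_nonpos (show -((g : ℝ) + c) ≤ 0 by linarith), ENNReal.ofReal_add hg hc]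
    · rw [ENNReal.ofReal_of_nonpos hc]
      rcases le_total 0 ((g : ℝ) + c) with h | h
      · rw [ENNReal.ofReal_of_nonpos (show -((g : ℝ) + c) ≤ 0 by linarith),
          ← ENNReal.ofReal_add h (by linarith)]
        simp
      · rw [ENNReal.ofReal_of_nonpos h, add_zero, ← ENNReal.ofReal_add hg (by linarith)]
        simp

lemma measurable_posE : Measurable posE := by
  unfold posE
  refine Measurable.ite (measurableSet_eq) measurable_const ?_
  exact ENNReal.measurable_ofReal.comp measurable_ereal_toReal

lemma eIntegral_add_real (μ : Measure α) {g : α → ℝ≥0∞} (hg : AEMeasurable g μ) {c : α → ℝ}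
    (hc : Integrable c μ) :
    eIntegral μ (fun x => (g x : EReal) + (c x : EReal)) =
      ((∫⁻ x, g x ∂μ : ℝ≥0∞) : EReal) + ((∫ x, c x ∂μ : ℝ) : EReal) := by
  unfold eIntegral
  have hm : AEMeasurable (fun x => (g x : EReal) + (c x : EReal)) μ :=
    (measurable_coe_ennreal_ereal.comp_aemeasurable hg).add
      (measurable_coe_real_ereal.comp_aemeasurable hc.aemeasurable)
  have hP : AEMeasurable (fun x => posE ((g x : EReal) + (c x : EReal))) μ :=
    measurable_posE.comp_aemeasurable hm
  have hN : AEMeasurable (fun x => posE (-((g x : EReal) + (c x : EReal)))) μ :=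
    measurable_posE.comp_aemeasurable hm.neg
  have hcp : AEMeasurable (fun x => ENNReal.ofReal (c x)) μ := hc.aemeasurable.ennreal_ofReal
  have hcn : AEMeasurable (fun x => ENNReal.ofReal (-c x)) μ := hc.neg.aemeasurable.ennreal_ofReal
  have hid : (∫⁻ x, posE ((g x : EReal) + (c x : EReal)) ∂μ) + ∫⁻ x, ENNReal.ofReal (-c x) ∂μ =
      (∫⁻ x, g x ∂μ) + (∫⁻ x, ENNReal.ofReal (c x) ∂μ) +
        ∫⁻ x, posE (-((g x : EReal) + (c x : EReal))) ∂μ := by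
    rw [← lintegral_add_left' hP, ← lintegral_add_left' hg, ← lintegral_add_left' (f := fun x => g x + ENNReal.ofReal (c x)) (hg.add hcp)]
    exact lintegral_congr fun x => posE_identity (g x) (c x)
  have hNle : ∫⁻ x, posE (-((g x : EReal) + (c x : EReal))) ∂μ ≤ ∫⁻ x, ENNReal.ofReal (-c x) ∂μ := by
    refine lintegral_mono fun x => ?_
    have : -((g x : EReal) + (c x : EReal)) ≤ ((-c x : ℝ) : EReal) := by
      rw [EReal.coe_neg, EReal.neg_le_neg_iff]
      exact le_add_of_nonneg_left (EReal.coe_ennreal_nonneg _)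
    exact (posE_mono this).trans (posE_coe _).le
  have hcpf : ∫⁻ x, ENNReal.ofReal (c x) ∂μ ≠ ∞ := (hc.lintegral_lt_top).ne
  have hcnf : ∫⁻ x, ENNReal.ofReal (-c x) ∂μ ≠ ∞ := (hc.neg.lintegral_lt_top).ne
  rw [integral_eq_lintegral_pos_part_sub_lintegral_neg_part hc]
  generalize (∫⁻ x, posE ((g x : EReal) + (c x : EReal)) ∂μ) = P at *
  generalize (∫⁻ x, posE (-((g x : EReal) + (c x : EReal))) ∂μ) = N at *
  generalize (∫⁻ x, g x ∂μ) = G at *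
  generalize (∫⁻ x, ENNReal.ofReal (c x) ∂μ) = Cp at *
  generalize (∫⁻ x, ENNReal.ofReal (-c x) ∂μ) = Cn at *
  have hNf : N ≠ ∞ := ne_top_of_le_ne_top hcnf hNle
  lift N to ℝ≥0 using hNf
  lift Cp to ℝ≥0 using hcpf
  lift Cn to ℝ≥0 using hcnf
  induction G with
  | top =>
    have : P = ⊤ := by
      have : P + Cn = ⊤ := by rw [hid]; simp
      simpa using this
    subst this
    rfl
  | coe G =>
    have hPf : P ≠ ⊤ := by
      intro h
      rw [h] at hid
      simp at hid
      exact absurd hid.symm (by exact_mod_cast ENNReal.coe_ne_top)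
    lift P to ℝ≥0 using hPf
    have h1 : (P : ℝ) + Cn = G + Cp + N := by exact_mod_cast hid
    have h2 : ((P : ℝ) - N) = G + (Cp - Cn) := by linarith
    have h3 := congrArg (fun x : ℝ => (x : EReal)) h2
    have e : ∀ z : ℝ≥0, (((z : ℝ≥0∞)) : EReal) = ((z : ℝ) : EReal) := fun z => rfl
    rw [e, e, e]
    simp only [EReal.coe_sub, EReal.coe_add, ENNReal.coe_toReal] at h3 ⊢
    exact h3

lemma eIntegral_real (μ : Measure α) {c : α → ℝ} (hc : Integrable c μ) :
    eIntegral μ (fun x => (c x : EReal)) = ((∫ x, c x ∂μ : ℝ) : EReal) := by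
  have := eIntegral_add_real μ (g := fun _ => 0) aemeasurable_const hc
  simpa using this
end DD

section Ent
lemma affLe_comb {F : EntropyFn} {a b a' b' t t' : ℝ} (h : AffLe F a b) (h' : AffLe F a' b')
    (ht : 0 ≤ t) (ht' : 0 ≤ t') (htt : t + t' = 1) :
    AffLe F (t * a + t' * a') (t * b + t' * b') := by
  intro s hs
  by_cases hF : F.F s = ∞
  · rw [hF]; exact le_top
  have h1 := h s hs
  have h2 := h' s hs
  rw [ENNReal.ofReal_le_iff_le_toReal hF] at h1 h2 ⊢
  have e : t * a + t' * a' + (t * b + t' * b') * s = t * (a + b * s) + t' * (a' + b' * s) := by ring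
  have e2 : (F.F s).toReal = t * (F.F s).toReal + t' * (F.F s).toReal := by
    rw [← add_mul, htt, one_mul]
  rw [e, e2]
  gcongr

variable {Y : Type*} [TopologicalSpace Y] [TopologicalSpace.MetrizableSpace Y]
  [SecondCountableTopology Y] [MeasurableSpace Y] [BorelSpace Y]

def ApproxP (F : EntropyFn) (m : Measure Y) (a b : Y → ℝ) : Prop :=
  Measurable a ∧ Measurable b ∧ (∃ D, ∀ x, |a x| ≤ D ∧ |b x| ≤ D) ∧
  ∀ ε > 0, ∃ φ ψ : Y →ᵇ ℝ, (∀ x, AffLe F (ψ x) (φ x)) ∧ ∫ x, |ψ x - a x| ∂m ≤ ε ∧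
    ∫ x, |φ x - b x| ∂m ≤ ε

lemma exists_cutoff (m : Measure Y) [IsFiniteMeasure m] {T : Set Y} (hT : MeasurableSet T)
    {ε : ℝ} (hε : 0 < ε) :
    ∃ η : Y →ᵇ ℝ, (∀ x, 0 ≤ η x ∧ η x ≤ 1) ∧ ∫ x, |η x - T.indicator 1 x| ∂m ≤ ε := by
  letI := TopologicalSpace.metrizableSpaceMetric Y
  have hi : Integrable (T.indicator (1 : Y → ℝ)) m := (integrable_const (1:ℝ)).indicator hT
  obtain ⟨g, hg, hgi⟩ := hi.exists_boundedContinuous_integral_sub_le hε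
  refine ⟨(g ⊔ 0) ⊓ 1, fun x => ?_, le_trans (integral_mono_of_nonneg ?_ (hi.sub hgi).norm ?_) hg⟩
  · change 0 ≤ min (max (g x) 0) 1 ∧ min (max (g x) 0) 1 ≤ 1
    exact ⟨le_min (le_max_right _ _) zero_le_one, min_le_right _ _⟩
  · exact Eventually.of_forall fun x => abs_nonneg _
  · refine Eventually.of_forall fun x => ?_
    change |min (max (g x) 0) 1 - T.indicator 1 x| ≤ ‖T.indicator (1 : Y → ℝ) x - g x‖
    rw [Real.norm_eq_abs]
    by_cases hx : x ∈ T
    · simp only [indicator_of_mem hx, Pi.one_apply]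
      rw [abs_of_nonpos (by linarith [min_le_right (max (g x) 0) 1])]
      rcases le_total (g x) 1 with h | h
      · rw [abs_of_nonneg (by linarith)]
        have : g x ≤ min (max (g x) 0) 1 := le_min (le_max_left _ _) h
        linarith
      · have : min (max (g x) 0) 1 = 1 := min_eq_right (h.trans (le_max_left _ _))
        rw [this]; simp
    · simp only [indicator_of_notMem hx]
      have h0 : 0 ≤ min (max (g x) 0) 1 := le_min (le_max_right _ _) zero_le_one
      rw [sub_zero, zero_sub, abs_neg, abs_of_nonneg h0]
      exact (min_le_left _ _).trans (max_le (le_abs_self _) (abs_nonneg _))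

lemma integrable_of_bdd (m : Measure Y) [IsFiniteMeasure m] {a : Y → ℝ} (ha : Measurable a) {D : ℝ}
    (hD : ∀ x, |a x| ≤ D) : Integrable a m :=
  Integrable.of_bound ha.aestronglyMeasurable D (Eventually.of_forall hD)

open Classical in
lemma step_est (m : Measure Y) [IsFiniteMeasure m] {T : Set Y} (hT : MeasurableSet T)
    (η φ : Y →ᵇ ℝ) (hη : ∀ x, 0 ≤ η x ∧ η x ≤ 1) (b : Y → ℝ) (hb : Measurable b) {D : ℝ}
    (hD : ∀ x, |b x| ≤ D) (B : ℝ) {ε : ℝ}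
    (h1 : ∫ x, |φ x - b x| ∂m ≤ ε / 2)
    (h2 : (‖φ‖ + |B|) * ∫ x, |η x - T.indicator 1 x| ∂m ≤ ε / 2) :
    ∫ x, |(η x * B + (1 - η x) * φ x) - T.piecewise (fun _ => B) b x| ∂m ≤ ε := by
  have hi1 : Integrable (fun x => |η x - T.indicator (1 : Y → ℝ) x|) m :=
    ((η.integrable m).sub ((integrable_const (1:ℝ)).indicator hT)).norm
  have hi2 : Integrable (fun x => |φ x - b x|) m :=
    ((φ.integrable m).sub (integrable_of_bdd m hb hD)).norm
  have : ∫ x, |(η x * B + (1 - η x) * φ x) - T.piecewise (fun _ => B) b x| ∂m ≤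
      ∫ x, (‖φ‖ + |B|) * |η x - T.indicator (1 : Y → ℝ) x| + |φ x - b x| ∂m := by
    refine integral_mono_of_nonneg (Eventually.of_forall fun x => abs_nonneg _)
      ((hi1.const_mul _).add hi2) (Eventually.of_forall fun x => ?_)
    have hφ : |φ x| ≤ ‖φ‖ := φ.norm_coe_le_norm x
    have hBφ : |B - φ x| ≤ ‖φ‖ + |B| := (abs_sub _ _).trans (by linarith)
    by_cases hx : x ∈ T
    · simp only [piecewise_eq_of_mem _ _ _ hx, indicator_of_mem hx, Pi.one_apply]
      have e : η x * B + (1 - η x) * φ x - B = (η x - 1) * (B - φ x) := by ring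
      rw [e, abs_mul, mul_comm]
      have := mul_le_mul_of_nonneg_right hBφ (abs_nonneg (η x - 1))
      linarith [abs_nonneg (φ x - b x)]
    · simp only [piecewise_eq_of_notMem _ _ _ hx, indicator_of_notMem hx]
      have e : η x * B + (1 - η x) * φ x - b x = (η x - 0) * (B - φ x) + (φ x - b x) := by ring
      rw [e]
      refine (abs_add_le _ _).trans ?_
      rw [abs_mul, mul_comm]
      have := mul_le_mul_of_nonneg_right hBφ (abs_nonneg (η x - 0))
      linarith
  refine this.trans ?_
  rw [integral_add (hi1.const_mul _) hi2, integral_const_mul]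
  linarith

open Classical in
lemma approxP_piecewise (F : EntropyFn) (m : Measure Y) [IsFiniteMeasure m] {a b : Y → ℝ}
    (h : ApproxP F m a b) {A B : ℝ} (hAB : AffLe F A B) {T : Set Y} (hT : MeasurableSet T) :
    ApproxP F m (T.piecewise (fun _ => A) a) (T.piecewise (fun _ => B) b) := by
  obtain ⟨ha, hb, ⟨D, hD⟩, hε⟩ := h
  refine ⟨measurable_const.piecewise hT ha, measurable_const.piecewise hT hb,
    ⟨max D (max |A| |B|), fun x => ?_⟩, fun ε hε0 => ?_⟩
  · by_cases hx : x ∈ T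
    · simp [hx]
    · simp only [piecewise_eq_of_notMem _ _ _ hx]
      exact ⟨(hD x).1.trans (le_max_left _ _), (hD x).2.trans (le_max_left _ _)⟩
  · obtain ⟨φ, ψ, h1, h2, h3⟩ := hε (ε / 2) (by linarith)
    set E := max (‖φ‖ + |B|) (‖ψ‖ + |A|) + 1 with hE
    have hE0 : 0 < E := by
      have : 0 ≤ ‖φ‖ + |B| := by positivity
      have := le_max_left (‖φ‖ + |B|) (‖ψ‖ + |A|)
      linarith
    obtain ⟨η, hη, hηi⟩ := exists_cutoff m hT (ε := ε / 2 / E) (by positivity)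
    have hn : 0 ≤ ∫ x, |η x - T.indicator 1 x| ∂m := integral_nonneg fun x => abs_nonneg _
    refine ⟨η * BoundedContinuousFunction.const Y B + (1 - η) * φ,
      η * BoundedContinuousFunction.const Y A + (1 - η) * ψ, fun x => ?_, ?_, ?_⟩
    · exact affLe_comb hAB (h1 x) (hη x).1 (by simpa using (hη x).2) (by simp)
    · refine step_est m hT η ψ hη a ha (fun x => (hD x).1) A h2 ?_
      calc _ ≤ E * (ε / 2 / E) := by
            refine mul_le_mul ?_ hηi hn hE0.le
            rw [hE]; linarith [le_max_right (‖φ‖ + |B|) (‖ψ‖ + |A|)]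
        _ = ε / 2 := by field_simp
    · refine step_est m hT η φ hη b hb (fun x => (hD x).2) B h3 ?_
      calc _ ≤ E * (ε / 2 / E) := by
            refine mul_le_mul ?_ hηi hn hE0.le
            rw [hE]; linarith [le_max_left (‖φ‖ + |B|) (‖ψ‖ + |A|)]
        _ = ε / 2 := by field_simp

end Ent

section Ent2
variable {Y : Type*} [TopologicalSpace Y] [TopologicalSpace.MetrizableSpace Y]
  [SecondCountableTopology Y] [MeasurableSpace Y] [BorelSpace Y]

lemma approx_est (μ γ : Measure Y) [IsFiniteMeasure μ] [IsFiniteMeasure γ] (ψ : Y →ᵇ ℝ) (a : Y → ℝ)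
    (ha : Measurable a) {D : ℝ} (hD : ∀ x, |a x| ≤ D) {ε : ℝ}
    (h : ∫ x, |ψ x - a x| ∂(μ + γ) ≤ ε) : ∫ x, a x ∂μ - ε ≤ ∫ x, ψ x ∂μ ∧
      ∫ x, a x ∂γ - ε ≤ ∫ x, ψ x ∂γ := by
  have hi (m : Measure Y) [IsFiniteMeasure m] : Integrable (fun x => ψ x - a x) m :=
    (ψ.integrable m).sub (integrable_of_bdd m ha hD)
  rw [integral_add_measure (hi μ).abs (hi γ).abs] at h
  have p1 : 0 ≤ ∫ x, |ψ x - a x| ∂μ := integral_nonneg fun x => abs_nonneg _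
  have p2 : 0 ≤ ∫ x, |ψ x - a x| ∂γ := integral_nonneg fun x => abs_nonneg _
  have q1 := abs_integral_le_integral_abs (f := fun x => ψ x - a x) (μ := μ)
  have q2 := abs_integral_le_integral_abs (f := fun x => ψ x - a x) (μ := γ)
  rw [integral_sub (ψ.integrable _) (integrable_of_bdd _ ha hD)] at q1 q2
  constructor
  · linarith [neg_abs_le (∫ x, ψ x ∂μ - ∫ x, a x ∂μ)]
  · linarith [neg_abs_le (∫ x, ψ x ∂γ - ∫ x, a x ∂γ)]

open Classical in
lemma ent_step (F : EntropyFn) (m : Measure Y) [IsFiniteMeasure m] {S : Set Y} (hS : MeasurableSet S)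
    (f : Y → ℝ) (hf : Measurable f) (A B : ℕ → ℝ) (hAB : ∀ n, AffLe F (A n) (B n))
    (hA0 : A 0 = 0) (hB0 : B 0 = 0) (N : ℕ) :
    ∃ a b : Y → ℝ, ApproxP F m a b ∧ ∀ x, ∀ n ≤ N,
      (if x ∈ S then B n else A n + B n * f x) ≤ (if x ∈ S then b x else a x + b x * f x) := by
  induction N with
  | zero =>
    refine ⟨fun _ => 0, fun _ => 0, ⟨measurable_const, measurable_const, ⟨0, by simp⟩,
      fun ε hε => ⟨0, 0, fun x => by simpa using affLe_zero F, by simp [hε.le], by simp [hε.le]⟩⟩, ?_⟩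
    intro x n hn
    obtain rfl : n = 0 := by omega
    simp [hA0, hB0]
  | succ N ih =>
    obtain ⟨a, b, hP, h⟩ := ih
    set T : Set Y := {x | (if x ∈ S then b x else a x + b x * f x) <
      (if x ∈ S then B (N+1) else A (N+1) + B (N+1) * f x)} with hTd
    have hT : MeasurableSet T := by
      refine measurableSet_lt (Measurable.ite hS hP.2.1 (hP.1.add (hP.2.1.mul hf)))
        (Measurable.ite hS measurable_const (measurable_const.add (measurable_const.mul hf)))
    refine ⟨_, _, approxP_piecewise F m hP (hAB (N+1)) hT, ?_⟩
    intro x n hn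
    by_cases hx : x ∈ T
    · simp only [piecewise_eq_of_mem _ _ _ hx]
      rcases Nat.lt_or_ge n (N+1) with h' | h'
      · exact (h x n (by omega)).trans hx.le
      · obtain rfl : n = N + 1 := by omega
        exact le_rfl
    · simp only [piecewise_eq_of_notMem _ _ _ hx]
      rcases Nat.lt_or_ge n (N+1) with h' | h'
      · exact (h x n (by omega))
      · obtain rfl : n = N + 1 := by omega
        exact not_lt.1 hx

open Classical in
lemma ent_lt (F : EntropyFn) (hF : F.Superlinear) (γ μ : Measure Y) [IsFiniteMeasure γ]
    [IsFiniteMeasure μ] {c : ℝ≥0∞} (hc : c < entF F γ μ) :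
    ∃ φ ψ : Y →ᵇ ℝ, (∀ x, AffLe F (ψ x) (φ x)) ∧ c.toReal < ∫ x, φ x ∂γ + ∫ x, ψ x ∂μ := by
  obtain ⟨A, B, hAB, hA0, hB0, hsup, hM⟩ := affLe_seq F hF
  obtain ⟨S, hS, h1, h2⟩ : ∃ S, MeasurableSet S ∧ γ.singularPart μ Sᶜ = 0 ∧ μ S = 0 := by
    obtain ⟨S', hS', h1, h2⟩ := Measure.mutuallySingular_singularPart γ μ
    exact ⟨S'ᶜ, hS'.compl, by rwa [compl_compl], h2⟩
  set γs := γ.singularPart μ with hγs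
  set f : Y → ℝ := fun x => (γ.rnDeriv μ x).toReal with hfd
  have hf : Measurable f := (Measure.measurable_rnDeriv γ μ).ennreal_toReal
  have hf0 : ∀ x, 0 ≤ f x := fun x => ENNReal.toReal_nonneg
  have aeμ : ∀ᵐ x ∂μ, x ∉ S := by
    have : μ S = 0 := h2
    exact measure_eq_zero_iff_ae_notMem.1 this
  have aeγ : ∀ᵐ x ∂γs, x ∈ S := by
    filter_upwards [measure_eq_zero_iff_ae_notMem.1 h1] with x hx using not_not.1 hx
  set v : ℕ → Y → ℝ := fun n x => if x ∈ S then B n else A n + B n * f x with hv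
  have hvm : ∀ n, Measurable (v n) := fun n =>
    Measurable.ite hS measurable_const (measurable_const.add (measurable_const.mul hf))
  set G : ℕ → Y → ℝ≥0∞ := fun N x => ⨆ n ∈ Iic N, ENNReal.ofReal (v n x) with hG
  have hGm : ∀ N, Measurable (G N) := fun N =>
    Measurable.biSup _ (to_countable _) fun n _ => (hvm n).ennreal_ofReal
  have hGmono : Monotone G := fun N N' hN x => biSup_mono fun n hn => le_trans hn hN
  have hGsup : ∀ x, ⨆ N, G N x = ⨆ n, ENNReal.ofReal (v n x) := by
    intro x
    refine le_antisymm (iSup_le fun N => iSup₂_le fun n _ => le_iSup (fun n => ENNReal.ofReal (v n x)) n)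
      (iSup_le fun n => le_trans ?_ (le_iSup _ n))
    exact le_iSup₂ (f := fun n (_ : n ∈ Iic _) => ENNReal.ofReal (v n x)) n (mem_Iic.2 le_rfl)
  have e1 : entF F γ μ = ∫⁻ x, ⨆ N, G N x ∂(μ + γs) := by
    simp_rw [hGsup]
    rw [lintegral_add_measure, entF]
    congr 1
    · refine lintegral_congr_ae ?_
      filter_upwards [aeμ] with x hx
      rw [hsup _ (hf0 x)]
      simp [hv, hx]
    · have : ∫⁻ x, ⨆ n, ENNReal.ofReal (v n x) ∂γs = ∫⁻ x, ∞ ∂γs := by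
        refine lintegral_congr_ae ?_
        filter_upwards [aeγ] with x hx
        simp only [hv, hx, if_true]
        rw [iSup_eq_top]
        intro b hb
        obtain ⟨n, hn⟩ := hM (b.toReal + 1)
        refine ⟨n, ?_⟩
        rw [ENNReal.lt_ofReal_iff_toReal_lt hb.ne]
        linarith
      rw [this, lintegral_const]
      rw [show F.recC = ∞ from hF]
  rw [e1, lintegral_iSup hGm hGmono, lt_iSup_iff] at hc
  obtain ⟨N, hN⟩ := hc
  obtain ⟨a, b, hP, hle⟩ := ent_step F (μ + γ) hS f hf A B hAB hA0 hB0 N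
  obtain ⟨ha, hb, ⟨D, hD⟩, happ⟩ := hP
  set w : Y → ℝ := fun x => if x ∈ S then b x else a x + b x * f x with hw
  have hw0 : ∀ x, 0 ≤ w x := fun x => by
    refine le_trans ?_ (hle x 0 (Nat.zero_le _))
    simp [hA0, hB0]
  have hGw : ∀ x, G N x ≤ ENNReal.ofReal (w x) := fun x =>
    iSup₂_le fun n hn => ENNReal.ofReal_le_ofReal (hle x n hn)
  have hfi : Integrable f μ := Measure.integrable_toReal_rnDeriv
  have hbf : Integrable (fun x => b x * f x) μ :=
    hfi.bdd_mul hb.aestronglyMeasurable (Eventually.of_forall fun x => (hD x).2)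
  have hwμ : w =ᵐ[μ] fun x => a x + b x * f x := by
    filter_upwards [aeμ] with x hx
    simp [hw, hx]
  have hwγ : w =ᵐ[γs] b := by
    filter_upwards [aeγ] with x hx
    simp [hw, hx]
  have hai := integrable_of_bdd μ ha fun x => (hD x).1
  have hbi := integrable_of_bdd γs hb fun x => (hD x).2
  have hwi1 : Integrable w μ := (hai.add hbf).congr hwμ.symm
  have hwi2 : Integrable w γs := hbi.congr hwγ.symm
  have hwi : Integrable w (μ + γs) := hwi1.add_measure hwi2
  have hc2 : c.toReal < ∫ x, w x ∂(μ + γs) := by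
    have : c < ENNReal.ofReal (∫ x, w x ∂(μ + γs)) := by
      rw [ofReal_integral_eq_lintegral_ofReal hwi (Eventually.of_forall hw0)]
      exact hN.trans_le (lintegral_mono hGw)
    rwa [ENNReal.lt_ofReal_iff_toReal_lt (ne_top_of_lt this)] at this
  have e3 : ∫ x, w x ∂(μ + γs) = ∫ x, a x ∂μ + ∫ x, b x ∂γ := by
    rw [integral_add_measure hwi1 hwi2, integral_congr_ae hwμ, integral_congr_ae hwγ,
      integral_add hai hbf]
    have : γ = γs + μ.withDensity (γ.rnDeriv μ) := γ.haveLebesgueDecomposition_add μ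
    have hbγ := integrable_of_bdd γ hb fun x => (hD x).2
    have hb2 : Integrable b (μ.withDensity (γ.rnDeriv μ)) :=
      hbγ.mono_measure (Measure.withDensity_rnDeriv_le γ μ)
    have e4 : ∫ x, b x ∂γ = ∫ x, b x ∂γs + ∫ x, b x ∂(μ.withDensity (γ.rnDeriv μ)) := by
      conv_lhs => rw [this]
      exact integral_add_measure hbi hb2
    rw [e4, integral_withDensity_eq_integral_toReal_smul (Measure.measurable_rnDeriv γ μ)
      (Measure.rnDeriv_lt_top γ μ)]
    simp only [smul_eq_mul, hfd, mul_comm]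
    ring
  rw [e3] at hc2
  obtain ⟨φ, ψ, hA, q1, q2⟩ := happ ((∫ x, a x ∂μ + ∫ x, b x ∂γ - c.toReal) / 3) (by linarith)
  refine ⟨φ, ψ, hA, ?_⟩
  have r1 := (approx_est μ γ ψ a ha (fun x => (hD x).1) q1).1
  have r2 := (approx_est μ γ φ b hb (fun x => (hD x).2) q2).2
  linarith
end Ent2

section G
variable {Y : Type*} [TopologicalSpace Y] [TopologicalSpace.MetrizableSpace Y]
  [SecondCountableTopology Y] [MeasurableSpace Y] [BorelSpace Y]

def evC (φ : Y →ᵇ ℝ) : ProbabilityMeasure Y →ᵇ ℝ :=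
  BoundedContinuousFunction.ofNormedAddCommGroup (fun p => ∫ y, φ y ∂(p : Measure Y))
    (continuous_iff_continuousAt.2 fun p =>
      (ProbabilityMeasure.tendsto_iff_forall_integral_tendsto.1 tendsto_id) φ) ‖φ‖
    (fun p => φ.norm_integral_le_norm _)

@[simp] lemma evC_apply (φ : Y →ᵇ ℝ) (p : ProbabilityMeasure Y) :
    evC φ p = ∫ y, φ y ∂(p : Measure Y) := rfl

def Cg (K : ℝ) (c : EReal) : ℝ≥0∞ := (c - (K : EReal)).toENNReal

lemma Cg_add {K : ℝ} {c : EReal} (h : (K : EReal) ≤ c) : ((Cg K c : ℝ≥0∞) : EReal) + (K : EReal) = c := by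
  rw [Cg, EReal.coe_toENNReal (by rwa [EReal.sub_nonneg (by simp) (by simp)])]
  exact EReal.sub_add_cancel

lemma Cg_mono {K : ℝ} : Monotone (Cg K) := fun _ _ h =>
  EReal.toENNReal_le_toENNReal (EReal.sub_le_sub h le_rfl)

lemma Cg_cont (K : ℝ) : Continuous (Cg K) := by
  refine EReal.continuous_toENNReal.comp ?_
  refine continuous_iff_continuousAt.2 fun c => ?_
  have : ContinuousAt (fun p : EReal × EReal => p.1 + p.2) (c, -(K:EReal)) :=
    EReal.continuousAt_add (by simp) (by simp)
  exact this.comp (f := fun x : EReal => (x, -(K:EReal)))  (by fun_prop)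

lemma Cg_lsc {E : Type*} [TopologicalSpace E] {c : E → EReal} (h : LowerSemicontinuous c) (K : ℝ) :
    LowerSemicontinuous fun e => Cg K (c e) :=
  (Cg_cont K).comp_lowerSemicontinuous h Cg_mono

def mixP (p q : ProbabilityMeasure Y) (t t' : ℝ) (ht : 0 ≤ t) (ht' : 0 ≤ t') (h : t + t' = 1) :
    ProbabilityMeasure Y :=
  ⟨ENNReal.ofReal t • (p : Measure Y) + ENNReal.ofReal t' • (q : Measure Y), ⟨by
    simp [← ENNReal.ofReal_add ht ht', h]⟩⟩

lemma mixP_integral (p q : ProbabilityMeasure Y) (t t' : ℝ) (ht : 0 ≤ t) (ht' : 0 ≤ t')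
    (h : t + t' = 1) (φ : Y →ᵇ ℝ) : ∫ y, φ y ∂(mixP p q t t' ht ht' h : Measure Y) =
      t * ∫ y, φ y ∂(p : Measure Y) + t' * ∫ y, φ y ∂(q : Measure Y) := by
  change ∫ y, φ y ∂(ENNReal.ofReal t • (p : Measure Y) + ENNReal.ofReal t' • (q : Measure Y)) = _
  rw [integral_add_measure ((φ.integrable _).smul_measure (by simp))
    ((φ.integrable _).smul_measure (by simp)), integral_smul_measure, integral_smul_measure]
  simp [ENNReal.toReal_ofReal, ht, ht']

lemma jensen (c : ProbabilityMeasure Y → EReal) (hlsc : LowerSemicontinuous c) (K : ℝ)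
    (hK : ∀ p, (K : EReal) ≤ c p)
    (hconv : ∀ (p q m : ProbabilityMeasure Y) (t : ℝ), 0 ≤ t → t ≤ 1 →
      (m : Measure Y) = ENNReal.ofReal t • (p : Measure Y)
          + ENNReal.ofReal (1 - t) • (q : Measure Y) →
      c m ≤ (t : EReal) * c p + ((1 - t : ℝ) : EReal) * c q)
    (Q : Measure (ProbabilityMeasure Y)) [IsProbabilityMeasure Q] (m : ProbabilityMeasure Y)
    (hm : ∀ φ : Y →ᵇ ℝ, ∫ y, φ y ∂(m : Measure Y) = ∫ p, evC φ p ∂Q) :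
    Cg K (c m) ≤ ∫⁻ p, Cg K (c p) ∂Q := by
  by_contra hlt
  push Not at hlt
  set I := ∫⁻ p, Cg K (c p) ∂Q with hI
  have hItop : I ≠ ∞ := ne_top_of_lt hlt
  have hmeas : Measurable fun p => Cg K (c p) := (Cg_lsc hlsc K).measurable
  set s := I.toReal with hs
  let S : Set (ProbabilityMeasure Y × ℝ) := {e | c e.1 ≤ (e.2 : EReal)}
  have hS : IsClosed S := by
    have h1 := lowerSemicontinuous_iff_isClosed_epigraph.1 hlsc
    exact h1.preimage (f := fun e : ProbabilityMeasure Y × ℝ => (e.1, (e.2 : EReal)))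
      (by have := continuous_coe_real_ereal; fun_prop)
  have hmS : (m, s + K) ∉ closure S := by
    rw [hS.closure_eq]
    intro h
    have h : c m ≤ ((s + K : ℝ) : EReal) := h
    have h2 := Cg_mono (K := K) h
    have : Cg K ((s + K : ℝ) : EReal) = I := by
      rw [Cg, ← EReal.coe_sub, EReal.real_coe_toENNReal, add_sub_cancel_right, hs,
        ENNReal.ofReal_toReal hItop]
    rw [this] at h2
    exact absurd h2 (not_le.2 hlt)
  let b : ProbabilityMeasure Y × ℝ → ((Y →ᵇ ℝ) × ℝ) →ₗ[ℝ] ℝ := fun e =>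
    { toFun := fun w => ∫ y, w.1 y ∂(e.1 : Measure Y) + w.2 * e.2
      map_add' := fun w w' => by
        simp only [Prod.fst_add, Prod.snd_add, BoundedContinuousFunction.coe_add, Pi.add_apply]
        rw [integral_add (w.1.integrable _) (w'.1.integrable _)]
        ring
      map_smul' := fun r w => by
        simp only [Prod.smul_fst, Prod.smul_snd, BoundedContinuousFunction.coe_smul, smul_eq_mul,
          RingHom.id_apply]
        rw [integral_const_mul]
        ring }
  obtain ⟨w, u, h1, h2⟩ := hb_sep b (fun e L hL => by
      have t1 : Tendsto (fun e' : ProbabilityMeasure Y × ℝ => e'.1) L (𝓝 e.1) := by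
        refine ProbabilityMeasure.tendsto_iff_forall_integral_tendsto.2 fun φ => ?_
        simpa [b] using hL (φ, 0)
      have t2 : Tendsto (fun e' : ProbabilityMeasure Y × ℝ => e'.2) L (𝓝 e.2) := by
        simpa [b] using hL (0, 1)
      exact t1.prodMk_nhds t2) S (fun e he e' he' t t' ht ht' htt => by
      refine ⟨(mixP e.1 e'.1 t t' ht ht' htt, t * e.2 + t' * e'.2), ?_, fun w => ?_⟩
      · have ht'' : t' = 1 - t := by linarith
        have := hconv e.1 e'.1 (mixP e.1 e'.1 t t' ht ht' htt) t ht (by linarith) (by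
          rw [← ht'']; rfl)
        rw [← ht''] at this
        refine this.trans ?_
        push_cast
        have a1 : (0 : EReal) ≤ t := by exact_mod_cast ht
        have a2 : (0 : EReal) ≤ t' := by exact_mod_cast ht'
        exact add_le_add (mul_le_mul_of_nonneg_left he a1) (mul_le_mul_of_nonneg_left he' a2)
      · change ∫ y, w.1 y ∂_ + w.2 * _ = t * (_ + _) + t' * (_ + _)
        simp only [mixP_integral]
        ring) _ hmS
  have h2 : u < ∫ y, w.1 y ∂(m : Measure Y) + w.2 * (s + K) := h2
  have hae : ∀ᵐ p ∂Q, Cg K (c p) < ∞ := ae_lt_top hmeas hItop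
  have hle : ∀ᵐ p ∂Q, evC w.1 p + w.2 * ((Cg K (c p)).toReal + K) ≤ u := by
    filter_upwards [hae] with p hp
    refine (h1 (p, (Cg K (c p)).toReal + K) ?_).le
    change c p ≤ _
    conv_lhs => rw [← Cg_add (hK p)]
    rw [EReal.coe_add, EReal.coe_ennreal_toReal hp.ne]
  have hi : Integrable (fun p => (Cg K (c p)).toReal) Q :=
    integrable_toReal_of_lintegral_ne_top hmeas.aemeasurable hItop
  have hi' : Integrable (fun p => (Cg K (c p)).toReal + K) Q := hi.add (integrable_const K)
  have h3 := integral_mono_ae (((evC w.1).integrable Q).add (hi'.const_mul w.2))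
    (integrable_const u) hle
  simp only [Pi.add_apply] at h3
  rw [integral_add ((evC w.1).integrable Q) (hi'.const_mul w.2),
    integral_const_mul, integral_add hi (integrable_const K), ← hm,
    integral_toReal hmeas.aemeasurable hae] at h3
  simp at h3
  linarith
end G

section J
lemma ereal_three (x y z : EReal) (t : ℝ)
    (h : ∀ a b c : ℝ, (a : EReal) < x → (b : EReal) < y → (c : EReal) < z → a + b + c ≤ t) :
    x + y + z ≤ t := by
  refine EReal.add_le_of_forall_lt fun a ha c hc => ?_
  induction c with
  | bot => simp
  | top => exact absurd hc (not_lt.2 le_top)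
  | coe c =>
    have h2 : x + y ≤ ((t - c : ℝ) : EReal) := by
      refine EReal.add_le_of_forall_lt fun a ha b hb => ?_
      induction a with
      | bot => simp
      | top => exact absurd ha (not_lt.2 le_top)
      | coe a =>
        induction b with
        | bot => simp
        | top => exact absurd hb (not_lt.2 le_top)
        | coe b =>
          have := h a b c ha hb hc
          rw [← EReal.coe_add]
          exact_mod_cast (by linarith : a + b ≤ t - c)
    calc a + c ≤ ((t - c : ℝ) : EReal) + c := by gcongr; exact ha.le.trans h2
      _ = t := by rw [← EReal.coe_add]; simp

section
variable {Y : Type*} [TopologicalSpace Y] [TopologicalSpace.MetrizableSpace Y]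
  [SecondCountableTopology Y] [MeasurableSpace Y] [BorelSpace Y]

lemma ent_lt' (F : EntropyFn) (hF : F.Superlinear) (γ μ : Measure Y) [IsFiniteMeasure γ]
    [IsFiniteMeasure μ] {r : ℝ} (hr : (r : EReal) < ((entF F γ μ : ℝ≥0∞) : EReal)) :
    ∃ φ ψ : Y →ᵇ ℝ, (∀ x, AffLe F (ψ x) (φ x)) ∧ r < ∫ x, φ x ∂γ + ∫ x, ψ x ∂μ := by
  rcases lt_or_ge r 0 with h | h
  · exact ⟨0, 0, fun x => by simpa using affLe_zero F, by simpa using h⟩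
  · have : ENNReal.ofReal r < entF F γ μ := by
      rw [← EReal.coe_ennreal_lt_coe_ennreal_iff, EReal.coe_ennreal_ofReal, max_eq_left h]
      exact hr
    obtain ⟨φ, ψ, h1, h2⟩ := ent_lt F hF γ μ this
    rw [ENNReal.toReal_ofReal h] at h2
    exact ⟨φ, ψ, h1, h2⟩

lemma c_lt (c : Y → EReal) (hc : LowerSemicontinuous c) (K : ℝ) (hK : ∀ y, (K : EReal) ≤ c y)
    (Λ : Measure Y) [IsFiniteMeasure Λ] {r : ℝ}
    (hr : (r : EReal) < ((∫⁻ y, Cg K (c y) ∂Λ : ℝ≥0∞) : EReal) + ((∫ _y, K ∂Λ : ℝ) : EReal)) :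
    ∃ h : Y →ᵇ ℝ, (∀ y, (h y : EReal) ≤ c y) ∧ r < ∫ y, h y ∂Λ := by
  rcases lt_or_ge r (∫ _y, K ∂Λ) with h | h
  · exact ⟨BoundedContinuousFunction.const Y K, fun y => hK y, by simpa using h⟩
  · have hr' : ENNReal.ofReal (r - ∫ _y, K ∂Λ) < ∫⁻ y, Cg K (c y) ∂Λ := by
      rw [← EReal.coe_ennreal_lt_coe_ennreal_iff, EReal.coe_ennreal_ofReal,
        max_eq_left (by linarith), EReal.coe_sub]
      exact EReal.sub_lt_of_lt_add hr
    obtain ⟨g, hg0, hg1, hg2⟩ := lintegral_lsc_lt _ (Cg_lsc hc K) Λ hr'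
    refine ⟨g + BoundedContinuousFunction.const Y K, fun y => ?_, ?_⟩
    · rw [← Cg_add (hK y)]
      change ((g y + K : ℝ) : EReal) ≤ _
      rw [EReal.coe_add]
      gcongr
      have := EReal.coe_ennreal_le_coe_ennreal_iff.2 (hg1 y)
      rwa [EReal.coe_ennreal_ofReal, max_eq_left (hg0 y)] at this
    · rw [← ofReal_integral_eq_lintegral_ofReal (g.integrable Λ) (Eventually.of_forall hg0),
        ENNReal.ofReal_lt_ofReal_iff_of_nonneg (by linarith)] at hg2
      have : ∫ y, (g + BoundedContinuousFunction.const Y K) y ∂Λ = ∫ y, g y ∂Λ + ∫ _y, K ∂Λ :=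
        integral_add (g.integrable Λ) (integrable_const K)
      linarith
end

variable {X₁ X₂ : Type*} [TopologicalSpace X₁] [PolishSpace X₁] [MeasurableSpace X₁] [BorelSpace X₁]
  [TopologicalSpace X₂] [PolishSpace X₂] [MeasurableSpace X₂] [BorelSpace X₂]

def Feas (C : X₁ → ProbabilityMeasure X₂ → EReal) (F₁ F₂ : EntropyFn) (ν₁ : Measure X₁)
    (ν₂ : Measure X₂) (t : ℝ) (Λ : Measure (X₁ × ProbabilityMeasure X₂)) : Prop :=
  ∀ φ₁ ψ₁ : X₁ →ᵇ ℝ, (∀ x, AffLe F₁ (ψ₁ x) (φ₁ x)) →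
  ∀ φ₂ ψ₂ : X₂ →ᵇ ℝ, (∀ x, AffLe F₂ (ψ₂ x) (φ₂ x)) →
  ∀ h : X₁ × ProbabilityMeasure X₂ →ᵇ ℝ, (∀ q, (h q : EReal) ≤ C q.1 q.2) →
    (∫ q, φ₁ q.1 ∂Λ + ∫ x, ψ₁ x ∂ν₁) + (∫ q, evC φ₂ q.2 ∂Λ + ∫ x, ψ₂ x ∂ν₂) + ∫ q, h q ∂Λ ≤ t

open ProbabilityTheory in
def kapK (X₂ : Type*) [MeasurableSpace X₂] : Kernel (ProbabilityMeasure X₂) X₂ :=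
  ⟨fun p => (p : Measure X₂), measurable_subtype_coe⟩

instance : ProbabilityTheory.IsMarkovKernel (kapK X₂) := ⟨fun p => p.2⟩

open ProbabilityTheory in
lemma feas_cost [Nonempty X₂] (C : X₁ → ProbabilityMeasure X₂ → EReal)
    (hClsc : LowerSemicontinuous fun q : X₁ × ProbabilityMeasure X₂ => C q.1 q.2)
    (K : ℝ) (hK : ∀ x p, (K : EReal) ≤ C x p)
    (hCconv : ∀ (x : X₁) (p q m : ProbabilityMeasure X₂) (t : ℝ), 0 ≤ t → t ≤ 1 →
      (m : Measure X₂) = ENNReal.ofReal t • (p : Measure X₂)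
          + ENNReal.ofReal (1 - t) • (q : Measure X₂) →
      C x m ≤ (t : EReal) * C x p + ((1 - t : ℝ) : EReal) * C x q)
    (F₁ F₂ : EntropyFn) (hF₁ : F₁.Superlinear) (hF₂ : F₂.Superlinear)
    (μ₁ : Measure X₁) (μ₂ : Measure X₂) [IsFiniteMeasure μ₁] [IsFiniteMeasure μ₂] (t : ℝ)
    (Λ : Measure (X₁ × ProbabilityMeasure X₂)) [IsFiniteMeasure Λ]
    (hΛ : Feas C F₁ F₂ μ₁ μ₂ t Λ) : wOpt C F₁ F₂ μ₁ μ₂ ≤ t := by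
  haveI : Nonempty (ProbabilityMeasure X₂) :=
    ⟨⟨Measure.dirac (Classical.arbitrary X₂), inferInstance⟩⟩
  set η : Kernel X₁ X₂ := kapK X₂ ∘ₖ Λ.condKernel with hη
  set γ : Measure (X₁ × X₂) := Λ.fst ⊗ₘ η with hγ
  have hfst : γ.fst = Λ.fst := Measure.fst_compProd _ _
  have hsnd : γ.snd = kapK X₂ ∘ₘ Λ.snd := by
    have h0 : Λ.condKernel ∘ₘ Λ.fst = Λ.snd := by
      rw [← Measure.snd_compProd, Measure.disintegrate]
    rw [hγ, Measure.snd_compProd, hη, ← Measure.comp_assoc, h0]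
  have hker : ∀ᵐ x ∂Λ.fst, γ.condKernel x = η x := by
    have := condKernel_compProd Λ.fst η
    exact this
  have hintsnd : ∀ φ : X₂ →ᵇ ℝ, ∫ y, φ y ∂γ.snd = ∫ q, evC φ q.2 ∂Λ := by
    intro φ
    rw [hsnd, ← Measure.snd_compProd, Measure.snd,
      integral_map (by fun_prop) (φ.continuous.aestronglyMeasurable), Measure.integral_compProd,
      Measure.snd, integral_map (by fun_prop)]
    · rfl
    · exact (evC φ).continuous.aestronglyMeasurable
    · exact (φ.integrable _).comp_measurable (f := fun q : ProbabilityMeasure X₂ × X₂ => q.2)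
        (by fun_prop)
  have hjen : ∀ᵐ x ∂Λ.fst, Cg K (C x ⟨γ.condKernel x, inferInstance⟩) ≤
      ∫⁻ p, Cg K (C x p) ∂(Λ.condKernel x) := by
    filter_upwards [hker] with x hx
    refine jensen (C x) ?_ K (hK x) (hCconv x) _ _ ?_
    · exact LowerSemicontinuous.comp (g := fun p => (x, p)) hClsc (by fun_prop)
    · intro φ
      change ∫ y, φ y ∂(γ.condKernel x) = _
      rw [hx, hη]
      exact Kernel.integral_comp (φ.integrable _)
  have hCm : Measurable fun q : X₁ × ProbabilityMeasure X₂ => Cg K (C q.1 q.2) :=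
    (Cg_lsc hClsc K).measurable
  have hint : ∫⁻ x, Cg K (C x ⟨γ.condKernel x, inferInstance⟩) ∂Λ.fst ≤
      ∫⁻ q, Cg K (C q.1 q.2) ∂Λ := by
    refine (lintegral_mono_ae hjen).trans ?_
    conv_rhs => rw [← Measure.disintegrate Λ Λ.condKernel]
    rw [Measure.lintegral_compProd hCm]
  have hgm : Measurable fun x => Cg K (C x ⟨γ.condKernel x, inferInstance⟩) :=
    hCm.comp (measurable_id.prodMk (γ.condKernel.measurable.subtype_mk))
  refine le_trans (sInf_le ⟨γ, inferInstance, rfl⟩) ?_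
  rw [wCost]
  have e1 : eIntegral γ.fst (fun x₁ => C x₁ ⟨γ.condKernel x₁, inferInstance⟩) ≤
      ((∫⁻ q, Cg K (C q.1 q.2) ∂Λ : ℝ≥0∞) : EReal) + ((∫ _y, K ∂Λ : ℝ) : EReal) := by
    have e2 : (fun x₁ => C x₁ ⟨γ.condKernel x₁, inferInstance⟩) =
      fun x => ((Cg K (C x ⟨γ.condKernel x, inferInstance⟩) : ℝ≥0∞) : EReal) + ((K : ℝ) : EReal) :=
      funext fun x => (Cg_add (hK x _)).symm
    rw [e2, hfst, eIntegral_add_real Λ.fst hgm.aemeasurable (integrable_const K)]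
    have : ∫ _x, K ∂Λ.fst = ∫ _y, K ∂Λ := by simp [Measure.real, Measure.fst_univ]
    rw [this]
    gcongr
    exact EReal.coe_ennreal_le_coe_ennreal_iff.2 hint
  refine (add_le_add_right e1 _).trans ?_
  refine ereal_three _ _ _ _ fun a b c ha hb hc => ?_
  obtain ⟨φ₁, ψ₁, h1, h1'⟩ := ent_lt' F₁ hF₁ _ _ ha
  obtain ⟨φ₂, ψ₂, h2, h2'⟩ := ent_lt' F₂ hF₂ _ _ hb
  obtain ⟨h, h3, h3'⟩ := c_lt _ hClsc K (fun q => hK q.1 q.2) Λ hc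
  have := hΛ φ₁ ψ₁ h1 φ₂ ψ₂ h2 h h3
  rw [hintsnd] at h2'
  rw [hfst, Measure.fst, integral_map (by fun_prop) (φ₁.continuous.aestronglyMeasurable)] at h1'
  linarith
end J

section W
variable {Y : Type*} [MeasurableSpace Y]

lemma F_comp_meas (F : EntropyFn) (hF : F.Superlinear) {f : Y → ℝ} (hf : Measurable f)
    (hf0 : ∀ x, 0 ≤ f x) : Measurable fun x => F.F (f x) := by
  obtain ⟨A, B, -, -, -, hsup, -⟩ := affLe_seq F hF
  have : (fun x => F.F (f x)) = fun x => ⨆ n, ENNReal.ofReal (A n + B n * f x) :=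
    funext fun x => hsup _ (hf0 x)
  rw [this]
  exact Measurable.iSup fun n => by fun_prop

lemma weak_half (F : EntropyFn) (hF : F.Superlinear) (γ μ : Measure Y) [IsFiniteMeasure γ]
    [IsFiniteMeasure μ] (hfin : entF F γ μ ≠ ∞) (G : Y → EReal) (g : Y → ℝ≥0∞) (hg : Measurable g)
    (c : Y → ℝ) (hc : Measurable c) (D : ℝ) (hD : ∀ x, |c x| ≤ D)
    (hG : ∀ x, ∀ s : ℝ, 0 ≤ s → G x ≤ ((g x : EReal) + (c x : EReal)) * (s : EReal) + (F.F s : EReal)) :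
    eIntegral μ G ≤ ((entF F γ μ + ∫⁻ x, g x ∂γ : ℝ≥0∞) : EReal) + ((∫ x, c x ∂γ : ℝ) : EReal) := by
  rw [entF, show F.recC = ∞ from hF] at hfin
  have hs : γ.singularPart μ univ = 0 := by
    by_contra h
    rw [ENNReal.top_mul h] at hfin
    simp at hfin
  have hac : γ ≪ μ := by
    rw [Measure.measure_univ_eq_zero] at hs
    exact (Measure.singularPart_eq_zero _ _).1 hs
  set f := γ.rnDeriv μ with hfd
  have hfm : Measurable f := Measure.measurable_rnDeriv γ μ
  have hFm : Measurable fun x => F.F (f x).toReal :=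
    F_comp_meas F hF hfm.ennreal_toReal fun x => ENNReal.toReal_nonneg
  have hci : Integrable (fun x => (f x).toReal * c x) μ := by
    have := (Measure.integrable_toReal_rnDeriv (μ := γ) (ν := μ)).bdd_mul hc.aestronglyMeasurable
      (Eventually.of_forall hD)
    simpa [mul_comm] using this
  have h1 : eIntegral μ G ≤ eIntegral μ (fun x => ((F.F (f x).toReal + f x * g x : ℝ≥0∞) : EReal) +
      (((f x).toReal * c x : ℝ) : EReal)) := by
    refine eIntegral_mono_ae μ ?_
    filter_upwards [Measure.rnDeriv_lt_top γ μ] with x hx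
    refine (hG x (f x).toReal ENNReal.toReal_nonneg).trans (le_of_eq ?_)
    have e0 : (((f x).toReal : ℝ) : EReal) = (f x : EReal) := EReal.coe_ennreal_toReal hx.ne
    rw [mul_comm, EReal.left_distrib_of_nonneg_of_ne_top (by simp [ENNReal.toReal_nonneg]) (by simp),
      EReal.coe_ennreal_add, EReal.coe_ennreal_mul, EReal.coe_mul, e0]
    abel
  refine h1.trans (le_of_eq ?_)
  rw [eIntegral_add_real μ (by fun_prop) hci, lintegral_add_left hFm, lintegral_rnDeriv_mul hac hg.aemeasurable]
  have : ∫ x, (f x).toReal * c x ∂μ = ∫ x, c x ∂γ := integral_rnDeriv_smul hac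
  rw [this, entF, hs]
  simp [hfd]
end W

section W2
variable {X₁ X₂ : Type*} [TopologicalSpace X₁] [PolishSpace X₁] [MeasurableSpace X₁] [BorelSpace X₁]
  [TopologicalSpace X₂] [PolishSpace X₂] [MeasurableSpace X₂] [BorelSpace X₂]

lemma weak_dual [Nonempty X₂] (C : X₁ → ProbabilityMeasure X₂ → EReal)
    (hClsc : LowerSemicontinuous fun q : X₁ × ProbabilityMeasure X₂ => C q.1 q.2)
    (K : ℝ) (hK : ∀ x p, (K : EReal) ≤ C x p)
    (F₁ F₂ : EntropyFn) (hF₁ : F₁.Superlinear) (hF₂ : F₂.Superlinear)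
    (μ₁ : Measure X₁) (μ₂ : Measure X₂) [IsFiniteMeasure μ₁] [IsFiniteMeasure μ₂]
    (γ : Measure (X₁ × X₂)) (hγ : IsFiniteMeasure γ) (φ : X₂ →ᵇ ℝ) :
    eIntegral μ₁ (fun x₁ => F₁.circ (RCfun C φ x₁)) +
      eIntegral μ₂ (fun x₂ => F₂.circ (((-(φ x₂) : ℝ) : EReal))) ≤ wCost C F₁ F₂ μ₁ μ₂ γ hγ := by
  have hCm : Measurable fun q : X₁ × ProbabilityMeasure X₂ => Cg K (C q.1 q.2) :=
    (Cg_lsc hClsc K).measurable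
  have hpm : Measurable fun x => (⟨γ.condKernel x, inferInstance⟩ : ProbabilityMeasure X₂) :=
    γ.condKernel.measurable.subtype_mk
  set g : X₁ → ℝ≥0∞ := fun x => Cg K (C x ⟨γ.condKernel x, inferInstance⟩) with hgd
  have hgm : Measurable g := hCm.comp (measurable_id.prodMk hpm)
  have e1 : eIntegral γ.fst (fun x₁ => C x₁ ⟨γ.condKernel x₁, inferInstance⟩) =
      ((∫⁻ x, g x ∂γ.fst : ℝ≥0∞) : EReal) + ((∫ _y, K ∂γ.fst : ℝ) : EReal) := by
    have e2 : (fun x₁ => C x₁ ⟨γ.condKernel x₁, inferInstance⟩) =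
      fun x => ((g x : ℝ≥0∞) : EReal) + ((K : ℝ) : EReal) :=
      funext fun x => (Cg_add (hK x _)).symm
    rw [e2, eIntegral_add_real γ.fst hgm.aemeasurable (integrable_const K)]
  have hne : ((∫⁻ x, g x ∂γ.fst : ℝ≥0∞) : EReal) + ((∫ _y, K ∂γ.fst : ℝ) : EReal) ≠ ⊥ := by
    generalize ∫ _y, K ∂γ.fst = k
    simp
  rw [wCost, e1]
  by_cases h1 : entF F₁ γ.fst μ₁ = ∞
  · rw [h1]
    rw [EReal.coe_ennreal_top, EReal.top_add_of_ne_bot (by simp), EReal.top_add_of_ne_bot hne]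
    exact le_top
  by_cases h2 : entF F₂ γ.snd μ₂ = ∞
  · rw [h2]
    rw [EReal.coe_ennreal_top, EReal.add_top_of_ne_bot (by simp), EReal.top_add_of_ne_bot hne]
    exact le_top
  set Φ : X₁ → ℝ := fun x => ∫ y, φ y ∂(γ.condKernel x) with hΦ
  have hΦm : Measurable Φ := (evC φ).continuous.measurable.comp hpm
  have hΦb : ∀ x, |Φ x| ≤ ‖φ‖ := fun x => φ.norm_integral_le_norm _
  have b1 := weak_half F₁ hF₁ γ.fst μ₁ h1 (fun x₁ => F₁.circ (RCfun C φ x₁)) g hgm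
    (fun x => K + Φ x) (measurable_const.add hΦm) (|K| + ‖φ‖)
    (fun x => (abs_add_le _ _).trans (by gcongr; exact hΦb x)) (fun x s hs => by
      refine (iInf_le _ ⟨s, hs⟩).trans ?_
      have : RCfun C φ x ≤ (g x : EReal) + ((K + Φ x : ℝ) : EReal) := by
        refine (iInf_le _ ⟨γ.condKernel x, inferInstance⟩).trans (le_of_eq ?_)
        conv_lhs => rw [← Cg_add (hK x ⟨γ.condKernel x, inferInstance⟩)]
        rw [EReal.coe_add, add_assoc]
        rfl
      gcongr)
  have b2 := weak_half F₂ hF₂ γ.snd μ₂ h2 (fun x₂ => F₂.circ (((-(φ x₂) : ℝ) : EReal)))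
    (fun _ => 0) measurable_const (fun x => - φ x) φ.continuous.measurable.neg ‖φ‖
    (fun x => by rw [abs_neg]; exact φ.norm_coe_le_norm x) (fun x s hs => by
      refine (iInf_le _ ⟨s, hs⟩).trans ?_
      simp)
  have e3 : ∫ x, K + Φ x ∂γ.fst = ∫ _x, K ∂γ.fst + ∫ y, φ y ∂γ.snd := by
    rw [integral_add (integrable_const K) (Integrable.of_bound hΦm.aestronglyMeasurable _ (Eventually.of_forall hΦb))]
    congr 1
    rw [Measure.snd, integral_map (by fun_prop) (φ.continuous.aestronglyMeasurable)]
    conv_rhs => rw [← Measure.disintegrate γ γ.condKernel]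
    rw [Measure.integral_compProd]
    rw [Measure.disintegrate γ γ.condKernel]
    exact (φ.integrable _).comp_measurable (f := fun q : X₁ × X₂ => q.2) (by fun_prop)
  refine (add_le_add b1 b2).trans (le_of_eq ?_)
  rw [e3, integral_neg]
  simp only [lintegral_zero, add_zero, EReal.coe_ennreal_add, EReal.coe_add, EReal.coe_neg]
  generalize ((entF F₁ γ.fst μ₁ : ℝ≥0∞) : EReal) = A
  generalize ((entF F₂ γ.snd μ₂ : ℝ≥0∞) : EReal) = B
  generalize ((∫⁻ x, g x ∂γ.fst : ℝ≥0∞) : EReal) = I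
  generalize ∫ _x, K ∂γ.fst = k
  generalize ∫ y, φ y ∂γ.snd = r
  have : A + I + ((k:EReal) + r) + (B + -(r:EReal)) = A + B + (I + k) + ((r:EReal) + -(r:EReal)) := by
    generalize -(r:EReal) = r'
    abel
  rw [this, ← EReal.coe_neg, ← EReal.coe_add, add_neg_cancel]
  simp
end W2

section Tight
variable {Y : Type*} [TopologicalSpace Y] [PolishSpace Y] [MeasurableSpace Y] [BorelSpace Y]
  [LocallyCompactSpace Y]

lemma exh_tendsto (Kx : CompactExhaustion Y) (m : Measure Y) [IsFiniteMeasure m] :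
    Tendsto (fun j => m (Kx j)ᶜ) atTop (𝓝 0) := by
  have := tendsto_measure_iInter_atTop (μ := m) (s := fun j => (Kx j)ᶜ)
    (fun j => (Kx.isCompact j).isClosed.measurableSet.compl.nullMeasurableSet)
    (fun i j hij => Set.compl_subset_compl.2 (Kx.subset hij)) ⟨0, measure_ne_top _ _⟩
  rwa [← Set.compl_iUnion, Kx.iUnion_eq, Set.compl_univ, measure_empty] at this

lemma tight_gen (lam : ℕ → Measure Y) [∀ n, IsFiniteMeasure (lam n)] (ν : ℕ → FiniteMeasure Y)
    (ν' : FiniteMeasure Y) (h : Tendsto ν atTop (𝓝 ν')) (D : ℝ)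
    (H : ∀ M : ℝ, 0 ≤ M → ∃ c : ℝ, 0 ≤ c ∧ ∀ η : Y →ᵇ ℝ, (∀ x, 0 ≤ η x ∧ η x ≤ 1) →
      ∀ n, M * ∫ x, η x ∂(lam n) ≤ c * ∫ x, η x ∂(ν n : Measure Y) + D)
    (ε : ℝ) (hε : 0 < ε) : ∃ K : Set Y, IsCompact K ∧ ∀ n, lam n Kᶜ ≤ ENNReal.ofReal ε := by
  have Kx : CompactExhaustion Y := CompactExhaustion.choice Y
  obtain ⟨M, hM, hMD⟩ : ∃ M : ℝ, 0 < M ∧ D ≤ M * (ε / 2) := by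
    refine ⟨2 * |D| / ε + 1, by positivity, ?_⟩
    have : (2 * |D| / ε + 1) * (ε / 2) = |D| + ε / 2 := by field_simp
    rw [this]; linarith [le_abs_self D]
  obtain ⟨c, hc, hcc⟩ := H M hM.le
  have hν' : ∀ᶠ j in atTop, c * (ν' : Measure Y).real (Kx j)ᶜ < M * (ε / 4) := by
    have := (ENNReal.tendsto_toReal ENNReal.zero_ne_top).comp (exh_tendsto Kx (ν' : Measure Y))
    have := this.const_mul c
    simp only [ENNReal.toReal_zero, mul_zero] at this
    exact this.eventually_lt_const (by positivity)
  obtain ⟨j, hj⟩ := hν'.exists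
  letI := TopologicalSpace.metrizableSpaceMetric Y
  obtain ⟨f, hf0, hf1, hf⟩ := exists_continuous_zero_one_of_isClosed (s := Kx j)
    (t := (interior (Kx (j+1)))ᶜ) (Kx.isCompact j).isClosed isOpen_interior.isClosed_compl
    (by
      rw [Set.disjoint_compl_right_iff_subset]
      exact Kx.subset_interior_succ j)
  let η : Y →ᵇ ℝ := BoundedContinuousFunction.ofNormedAddCommGroup f f.continuous 1 (fun x => by
    rw [Real.norm_eq_abs, abs_of_nonneg (hf x).1]; exact (hf x).2)
  have hη : ∀ x, 0 ≤ η x ∧ η x ≤ 1 := fun x => hf x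
  have hlim : ∫ x, η x ∂(ν' : Measure Y) ≤ (ν' : Measure Y).real (Kx j)ᶜ := by
    rw [← integral_indicator_one (Kx.isCompact j).isClosed.measurableSet.compl]
    refine integral_mono (η.integrable _) ((integrable_const (1:ℝ)).indicator
      (Kx.isCompact j).isClosed.measurableSet.compl) (fun x => ?_)
    by_cases hx : x ∈ Kx j
    · have : η x = 0 := hf0 hx
      simp [hx, this]
    · simpa [hx] using (hη x).2
  have hev : ∀ᶠ n in atTop, c * ∫ x, η x ∂(ν n : Measure Y) < M * (ε / 2) := by
    have := (FiniteMeasure.tendsto_iff_forall_integral_tendsto.1 h η).const_mul c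
    refine this.eventually_lt_const ?_
    have := mul_le_mul_of_nonneg_left hlim hc
    nlinarith
  obtain ⟨N, hN⟩ := eventually_atTop.1 hev
  have hbig : ∀ n, N ≤ n → ∀ i, j + 1 ≤ i → lam n (Kx i)ᶜ ≤ ENNReal.ofReal ε := by
    intro n hn i hi
    refine le_trans (measure_mono (Set.compl_subset_compl.2 (Kx.subset hi))) ?_
    have h1 : ∫ x, η x ∂(lam n) ≤ ε := by
      have := hcc η hη n
      have h2 := hN n hn
      have : M * ∫ x, η x ∂(lam n) ≤ M * ε := by linarith
      exact le_of_mul_le_mul_left this hM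
    have hms := (Kx.isCompact (j+1)).isClosed.measurableSet.compl
    have h3 : (lam n).real (Kx (j+1))ᶜ ≤ ∫ x, η x ∂(lam n) := by
      rw [← integral_indicator_one hms]
      refine integral_mono ((integrable_const (1:ℝ)).indicator hms) (η.integrable _) (fun x => ?_)
      by_cases hx : x ∈ Kx (j+1)
      · simpa [hx] using (hη x).1
      · have : η x = 1 := hf1 (fun hx' => hx (interior_subset hx'))
        simp [hx, this]
    rw [← ENNReal.ofReal_toReal (measure_ne_top (lam n) (Kx (j+1))ᶜ)]
    exact ENNReal.ofReal_le_ofReal (h3.trans h1)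
  have hsm : ∀ᶠ i in atTop, ∀ n ∈ Finset.range N, lam n (Kx i)ᶜ ≤ ENNReal.ofReal ε := by
    rw [Filter.eventually_all_finset]
    intro n _
    exact ((exh_tendsto Kx (lam n)).eventually_lt_const (by simpa using hε)).mono fun _ h => h.le
  obtain ⟨i, hi1, hi2⟩ := (hsm.and (eventually_ge_atTop (j+1))).exists
  refine ⟨Kx i, Kx.isCompact i, fun n => ?_⟩
  rcases lt_or_ge n N with hn | hn
  · exact hi1 n (Finset.mem_range.2 hn)
  · exact hbig n hn i hi2
end Tight

section T2
variable {X₁ X₂ : Type*} [TopologicalSpace X₁] [PolishSpace X₁] [MeasurableSpace X₁] [BorelSpace X₁]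
  [TopologicalSpace X₂] [PolishSpace X₂] [MeasurableSpace X₂] [BorelSpace X₂]

lemma compact_lam (Λ : ℕ → FiniteMeasure (X₁ × ProbabilityMeasure X₂)) (B : ℝ≥0)
    (hB : ∀ n, (Λ n).mass ≤ B)
    (h1 : ∀ ε : ℝ, 0 < ε → ∃ K : Set X₁, IsCompact K ∧ ∀ n, 
      (Λ n : Measure (X₁ × ProbabilityMeasure X₂)).fst Kᶜ ≤ ENNReal.ofReal ε)
    (h2 : ∀ ε : ℝ, 0 < ε → ∃ K : Set X₂, IsCompact K ∧ ∀ n, 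
      ((Λ n : Measure (X₁ × ProbabilityMeasure X₂)).snd.bind (kapK X₂)) Kᶜ ≤ ENNReal.ofReal ε) :
    ∃ S : Set (FiniteMeasure (X₁ × ProbabilityMeasure X₂)), IsCompact S ∧ ∀ n, Λ n ∈ S := by
  choose K1 hK1 hK1' using fun k : ℕ => h1 ((1/2)^k) (by positivity)
  choose K2 hK2 hK2' using fun k : ℕ => h2 ((1/4)^k) (by positivity)
  let KK : ℕ → Set (ProbabilityMeasure X₂) := fun l =>
    {p | ∀ k, p (K2 (k + l))ᶜ ≤ ((1/2 : ℝ≥0))^(k+l)}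
  have hhalf : Tendsto (fun k : ℕ => ((1/2 : ℝ≥0))^k) atTop (𝓝 0) :=
    NNReal.tendsto_pow_atTop_nhds_zero_of_lt_one (by
      rw [div_lt_one (by norm_num)]; norm_num)
  have hKK : ∀ l, IsCompact (KK l) := fun l => by
    letI := TopologicalSpace.metrizableSpaceMetric X₂
    exact isCompact_setOfPred_probabilityMeasure_mass_eq_compl_isCompact_le
      (hhalf.comp (tendsto_add_atTop_nat l)) (fun k => hK2 (k+l)) (Or.inl inferInstance)
  have hu : Tendsto (fun l : ℕ => 3 * (1/2 : ℝ≥0)^l) atTop (𝓝 0) := by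
    simpa using hhalf.const_mul 3
  refine ⟨_, isCompact_setOfPred_finiteMeasure_mass_le_compl_isCompact_le B hu
    (K := fun l => K1 l ×ˢ KK l) (fun l => (hK1 l).prod (hKK l)) (Or.inl ?_), fun n => ⟨hB n, ?_⟩⟩
  · letI := TopologicalSpace.metrizableSpaceMetric (X₁ × ProbabilityMeasure X₂)
    infer_instance
  intro l
  rw [← ENNReal.coe_le_coe, FiniteMeasure.ennreal_coeFn_eq_coeFn_toMeasure]
  set m : Measure (X₁ × ProbabilityMeasure X₂) := (Λ n : Measure (X₁ × ProbabilityMeasure X₂)) with hm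
  have hsub : (K1 l ×ˢ KK l)ᶜ ⊆ (Prod.fst ⁻¹' (K1 l)ᶜ) ∪
      ⋃ k : ℕ, {q : X₁ × ProbabilityMeasure X₂ |
        (((1/2 : ℝ≥0)^(k+l) : ℝ≥0) : ℝ≥0∞) ≤ (q.2 : Measure X₂) (K2 (k+l))ᶜ} := by
    rintro ⟨x, p⟩ hq
    simp only [Set.mem_compl_iff, Set.mem_prod, not_and_or] at hq
    rcases hq with hq | hq
    · left; exact hq
    · right
      have hq : ¬ ∀ k, p (K2 (k + l))ᶜ ≤ ((1/2 : ℝ≥0))^(k+l) := hq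
      push Not at hq
      obtain ⟨k, hk⟩ := hq
      refine Set.mem_iUnion.2 ⟨k, ?_⟩
      change (((1/2 : ℝ≥0)^(k+l) : ℝ≥0) : ℝ≥0∞) ≤ (p : Measure X₂) (K2 (k+l))ᶜ
      rw [← ProbabilityMeasure.ennreal_coeFn_eq_coeFn_toMeasure]
      exact ENNReal.coe_le_coe.2 hk.le
  have hA : m (Prod.fst ⁻¹' (K1 l)ᶜ) ≤ (((1/2 : ℝ≥0)^l : ℝ≥0) : ℝ≥0∞) := by
    have := hK1' l n
    rw [Measure.fst_apply (hK1 l).isClosed.measurableSet.compl] at this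
    refine this.trans (le_of_eq ?_)
    rw [ENNReal.ofReal_pow (by norm_num), ENNReal.coe_pow]
    congr 1
    rw [ENNReal.ofReal]; congr 1
    apply NNReal.eq; simp
  have hBk : ∀ k : ℕ, m {q : X₁ × ProbabilityMeasure X₂ |
        (((1/2 : ℝ≥0)^(k+l) : ℝ≥0) : ℝ≥0∞) ≤ (q.2 : Measure X₂) (K2 (k+l))ᶜ} ≤
        (((1/2 : ℝ≥0)^(k+l) : ℝ≥0) : ℝ≥0∞) := by
    intro k
    have hms := (hK2 (k+l)).isClosed.measurableSet.compl
    have hmeas : Measurable fun q : X₁ × ProbabilityMeasure X₂ => (q.2 : Measure X₂) (K2 (k+l))ᶜ :=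
      ((kapK X₂).measurable_coe hms).comp measurable_snd
    have hmk := mul_meas_ge_le_lintegral hmeas (μ := m) (((1/2 : ℝ≥0)^(k+l) : ℝ≥0) : ℝ≥0∞)
    have h3 := hK2' (k+l) n
    rw [Measure.bind_apply hms (kapK X₂).aemeasurable, Measure.snd,
      lintegral_map ((kapK X₂).measurable_coe hms) measurable_snd] at h3
    have h4 := hmk.trans h3
    have h5 : ENNReal.ofReal ((1/4)^(k+l)) = (((1/2 : ℝ≥0)^(k+l) : ℝ≥0) : ℝ≥0∞) *
      (((1/2 : ℝ≥0)^(k+l) : ℝ≥0) : ℝ≥0∞) := by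
      rw [← ENNReal.coe_mul, ← mul_pow, ENNReal.ofReal]
      congr 1
      apply NNReal.eq
      rw [Real.coe_toNNReal _ (by positivity)]
      push_cast
      norm_num
    rw [h5] at h4
    exact (ENNReal.mul_le_mul_iff_right (by simp) (by simp)).1 h4
  refine (measure_mono hsub).trans ((measure_union_le _ _).trans ?_)
  have h6 : m (⋃ k : ℕ, {q : X₁ × ProbabilityMeasure X₂ |
        (((1/2 : ℝ≥0)^(k+l) : ℝ≥0) : ℝ≥0∞) ≤ (q.2 : Measure X₂) (K2 (k+l))ᶜ}) ≤
        2 * (((1/2 : ℝ≥0)^l : ℝ≥0) : ℝ≥0∞) := by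
    refine (measure_iUnion_le _).trans ((ENNReal.tsum_le_tsum hBk).trans (le_of_eq ?_))
    have : ∀ k : ℕ, (((1/2 : ℝ≥0)^(k+l) : ℝ≥0) : ℝ≥0∞) = (2⁻¹ : ℝ≥0∞)^k * (((1/2 : ℝ≥0)^l : ℝ≥0) : ℝ≥0∞) := by
      intro k
      rw [pow_add, ENNReal.coe_mul]
      congr 1
      rw [ENNReal.coe_pow]; simp
    simp_rw [this]
    rw [ENNReal.tsum_mul_right, ENNReal.tsum_geometric, ENNReal.one_sub_inv_two, inv_inv]
  refine (add_le_add hA h6).trans (le_of_eq ?_)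
  rw [ENNReal.coe_mul]
  push_cast
  ring
end T2

section T3
variable {X₁ X₂ : Type*} [TopologicalSpace X₁] [PolishSpace X₁] [MeasurableSpace X₁] [BorelSpace X₁]
  [TopologicalSpace X₂] [PolishSpace X₂] [MeasurableSpace X₂] [BorelSpace X₂]

lemma int_const_real {Y : Type*} [MeasurableSpace Y] (m : Measure Y) [IsFiniteMeasure m] (c : ℝ) :
    ∫ _y, c ∂m = c * m.real univ := by
  rw [integral_const, smul_eq_mul, mul_comm]

lemma bind_int (Λ : Measure (X₁ × ProbabilityMeasure X₂)) [IsFiniteMeasure Λ] (φ : X₂ →ᵇ ℝ) :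
    ∫ y, φ y ∂(Λ.snd.bind (kapK X₂)) = ∫ q, evC φ q.2 ∂Λ := by
  rw [← Measure.snd_compProd, Measure.snd,
      integral_map (by fun_prop) (φ.continuous.aestronglyMeasurable), Measure.integral_compProd,
      Measure.snd, integral_map (by fun_prop)]
  · rfl
  · exact (evC φ).continuous.aestronglyMeasurable
  · exact (φ.integrable _).comp_measurable (f := fun q : ProbabilityMeasure X₂ × X₂ => q.2)
        (by fun_prop)

lemma feas_closed [LocallyCompactSpace X₁] [LocallyCompactSpace X₂]
    (C : X₁ → ProbabilityMeasure X₂ → EReal)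
    (K : ℝ) (hK : ∀ x p, (K : EReal) ≤ C x p)
    (F₁ F₂ : EntropyFn) (hF₁ : F₁.Superlinear) (hF₂ : F₂.Superlinear)
    (ν₁ : ℕ → FiniteMeasure X₁) (ν₂ : ℕ → FiniteMeasure X₂) (t : ℕ → ℝ)
    (μ₁ : FiniteMeasure X₁) (μ₂ : FiniteMeasure X₂) (a : ℝ)
    (h₁ : Tendsto ν₁ atTop (𝓝 μ₁)) (h₂ : Tendsto ν₂ atTop (𝓝 μ₂)) (ht : Tendsto t atTop (𝓝 a))
    (Λ : ℕ → FiniteMeasure (X₁ × ProbabilityMeasure X₂))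
    (hΛ : ∀ n, Feas C F₁ F₂ (ν₁ n) (ν₂ n) (t n) (Λ n : Measure (X₁ × ProbabilityMeasure X₂))) :
    ∃ Λ' : FiniteMeasure (X₁ × ProbabilityMeasure X₂),
      Feas C F₁ F₂ μ₁ μ₂ a (Λ' : Measure (X₁ × ProbabilityMeasure X₂)) := by
  have hm : ∃ B : ℝ≥0, ∀ n, (Λ n).mass ≤ B := by
    obtain ⟨c, hc, hcA⟩ := affLe_super F₁ hF₁ (1 - K)
    have hν : Tendsto (fun n => t n + c * ((ν₁ n : Measure X₁).real univ)) atTop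
        (𝓝 (a + c * (μ₁ : Measure X₁).real univ)) := by
      have := FiniteMeasure.tendsto_iff_forall_integral_tendsto.1 h₁ (BoundedContinuousFunction.const X₁ 1)
      simp only [BoundedContinuousFunction.const_apply, int_const_real, one_mul] at this
      exact ht.add (this.const_mul c)
    obtain ⟨B, hB⟩ := hν.bddAbove_range
    refine ⟨B.toNNReal, fun n => ?_⟩
    have := hΛ n (.const _ (1 - K)) (.const _ (-c)) (fun _ => hcA) 0 0 (fun _ => affLe_zero F₂)
      (.const _ K) (fun q => hK q.1 q.2)
    have hB' := hB ⟨n, rfl⟩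
    simp only [BoundedContinuousFunction.const_apply, int_const_real, evC_apply,
      BoundedContinuousFunction.coe_zero, Pi.zero_apply, integral_zero] at this hB'
    have hle : (Λ n : Measure (X₁ × ProbabilityMeasure X₂)).real univ ≤ B := by linarith
    rw [← NNReal.coe_le_coe]
    refine le_trans (le_of_eq ?_) (hle.trans (Real.le_coe_toNNReal B))
    rfl
  obtain ⟨B, hB⟩ := hm
  obtain ⟨t0, ht0⟩ := ht.bddAbove_range
  have hKm : ∀ n, - (K * (Λ n : Measure (X₁ × ProbabilityMeasure X₂)).real univ) ≤ |K| * B := by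
    intro n
    have e : (Λ n : Measure (X₁ × ProbabilityMeasure X₂)).real univ ≤ B := hB n
    have e0 : 0 ≤ (Λ n : Measure (X₁ × ProbabilityMeasure X₂)).real univ := measureReal_nonneg
    have := mul_le_mul_of_nonneg_left e (abs_nonneg K)
    have := mul_le_mul_of_nonneg_right (neg_abs_le K) e0
    linarith
  have cut : ∀ (F : EntropyFn) (c M e : ℝ), AffLe F (-c) M → 0 ≤ e → e ≤ 1 →
      AffLe F (-(c * e)) (M * e) := by
    intro F c M e h h0 h1
    have := affLe_comb h (affLe_zero F) h0 (sub_nonneg.2 h1) (by ring)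
    convert this using 1 <;> ring
  have T1 := tight_gen (fun n => (Λ n : Measure (X₁ × ProbabilityMeasure X₂)).fst) ν₁ μ₁ h₁
    (t0 + |K| * B) (by
      intro M hM
      obtain ⟨c, hc, hcA⟩ := affLe_super F₁ hF₁ M
      refine ⟨c, hc, fun η hη n => ?_⟩
      have := hΛ n (M • η) (-(c • η)) (fun x => cut F₁ c M _ hcA (hη x).1 (hη x).2) 0 0
        (fun _ => affLe_zero F₂) (.const _ K) (fun q => hK q.1 q.2)
      have h0 : t n ≤ t0 := ht0 ⟨n, rfl⟩
      have h3 := hKm n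
      rw [Measure.fst, integral_map (by fun_prop) η.continuous.aestronglyMeasurable]
      simp only [BoundedContinuousFunction.const_apply, int_const_real, evC_apply,
        BoundedContinuousFunction.coe_zero, Pi.zero_apply, integral_zero,
        BoundedContinuousFunction.coe_smul, BoundedContinuousFunction.coe_neg, Pi.neg_apply,
        smul_eq_mul, integral_neg, integral_const_mul] at this
      linarith)
  have T2 := tight_gen (fun n => (Λ n : Measure (X₁ × ProbabilityMeasure X₂)).snd.bind (kapK X₂)) ν₂ μ₂ h₂
    (t0 + |K| * B) (by
      intro M hM
      obtain ⟨c, hc, hcA⟩ := affLe_super F₂ hF₂ M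
      refine ⟨c, hc, fun η hη n => ?_⟩
      have := hΛ n 0 0 (fun _ => affLe_zero F₁) (M • η) (-(c • η))
        (fun x => cut F₂ c M _ hcA (hη x).1 (hη x).2) (.const _ K) (fun q => hK q.1 q.2)
      have h0 : t n ≤ t0 := ht0 ⟨n, rfl⟩
      have h3 := hKm n
      rw [bind_int]
      simp only [BoundedContinuousFunction.const_apply, int_const_real, evC_apply,
        BoundedContinuousFunction.coe_zero, Pi.zero_apply, integral_zero,
        BoundedContinuousFunction.coe_smul, BoundedContinuousFunction.coe_neg, Pi.neg_apply,
        smul_eq_mul, integral_neg, integral_const_mul] at this ⊢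
      linarith)
  obtain ⟨S, hS, hΛS⟩ := compact_lam Λ B hB T1 T2
  obtain ⟨Λ', -, hL⟩ := hS.ultrafilter_le_nhds ((Ultrafilter.of (atTop : Filter ℕ)).map Λ)
    (by
      rw [Filter.le_principal_iff]
      exact Filter.mem_map.2 (Filter.univ_mem' hΛS))
  have hle : ((Ultrafilter.of (atTop : Filter ℕ)) : Filter ℕ) ≤ atTop := Ultrafilter.of_le _
  have hL' : Tendsto Λ ((Ultrafilter.of (atTop : Filter ℕ)) : Filter ℕ) (𝓝 Λ') := hL
  rw [FiniteMeasure.tendsto_iff_forall_integral_tendsto] at hL'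
  refine ⟨Λ', fun φ₁ ψ₁ h1 φ₂ ψ₂ h2 h h3 => ?_⟩
  have a1 := hL' (φ₁.compContinuous ⟨Prod.fst, continuous_fst⟩)
  have a2 := FiniteMeasure.tendsto_iff_forall_integral_tendsto.1 (h₁.mono_left hle) ψ₁
  have a3 := hL' ((evC φ₂).compContinuous ⟨Prod.snd, continuous_snd⟩)
  have a4 := FiniteMeasure.tendsto_iff_forall_integral_tendsto.1 (h₂.mono_left hle) ψ₂
  have a5 := hL' h
  exact le_of_tendsto_of_tendsto (((a1.add a2).add (a3.add a4)).add a5) (ht.mono_left hle)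
    (Eventually.of_forall fun n => hΛ n φ₁ ψ₁ h1 φ₂ ψ₂ h2 h h3)
end T3

section M1
lemma int_comb_fm {Y : Type*} [TopologicalSpace Y] [MeasurableSpace Y] [OpensMeasurableSpace Y]
    (r r' : ℝ≥0) (m m' : FiniteMeasure Y) (g : Y →ᵇ ℝ) :
    ∫ y, g y ∂((r • m + r' • m' : FiniteMeasure Y) : Measure Y) =
        r * ∫ y, g y ∂(m : Measure Y) + r' * ∫ y, g y ∂(m' : Measure Y) := by
  rw [FiniteMeasure.toMeasure_add, integral_add_measure (g.integrable _) (g.integrable _),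
    FiniteMeasure.toMeasure_smul, FiniteMeasure.toMeasure_smul, integral_smul_nnreal_measure,
    integral_smul_nnreal_measure]
  rfl

variable {X₁ X₂ : Type*} [TopologicalSpace X₁] [PolishSpace X₁] [MeasurableSpace X₁] [BorelSpace X₁]
  [TopologicalSpace X₂] [PolishSpace X₂] [MeasurableSpace X₂] [BorelSpace X₂]

lemma feas_zero (C : X₁ → ProbabilityMeasure X₂ → EReal) (F₁ F₂ : EntropyFn) (t : ℝ) (ht : 0 ≤ t) :
    Feas C F₁ F₂ 0 0 t 0 := by
  intro φ₁ ψ₁ _ φ₂ ψ₂ _ h _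
  simpa using ht

lemma feas_comb (C : X₁ → ProbabilityMeasure X₂ → EReal) (F₁ F₂ : EntropyFn)
    {ν₁ ν₁' : FiniteMeasure X₁} {ν₂ ν₂' : FiniteMeasure X₂} {t t' : ℝ}
    {Λ Λ' : FiniteMeasure (X₁ × ProbabilityMeasure X₂)}
    (h : Feas C F₁ F₂ ν₁ ν₂ t (Λ : Measure (X₁ × ProbabilityMeasure X₂)))
    (h' : Feas C F₁ F₂ ν₁' ν₂' t' (Λ' : Measure (X₁ × ProbabilityMeasure X₂))) (r r' : ℝ≥0) :
    Feas C F₁ F₂ (r • ν₁ + r' • ν₁' : FiniteMeasure X₁) (r • ν₂ + r' • ν₂' : FiniteMeasure X₂)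
      (r * t + r' * t')
      ((r • Λ + r' • Λ' : FiniteMeasure (X₁ × ProbabilityMeasure X₂)) :
        Measure (X₁ × ProbabilityMeasure X₂)) := by
  intro φ₁ ψ₁ h1 φ₂ ψ₂ h2 k h3
  have a := h φ₁ ψ₁ h1 φ₂ ψ₂ h2 k h3
  have a' := h' φ₁ ψ₁ h1 φ₂ ψ₂ h2 k h3
  have e1 := int_comb_fm r r' Λ Λ' (φ₁.compContinuous ⟨Prod.fst, continuous_fst⟩)
  have e2 := int_comb_fm r r' Λ Λ' ((evC φ₂).compContinuous ⟨Prod.snd, continuous_snd⟩)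
  simp only [BoundedContinuousFunction.compContinuous_apply, ContinuousMap.coe_mk] at e1 e2
  rw [e1, e2, int_comb_fm, int_comb_fm, int_comb_fm]
  have b := mul_le_mul_of_nonneg_left a r.coe_nonneg
  have b' := mul_le_mul_of_nonneg_left a' r'.coe_nonneg
  linarith

def bForm (e : FiniteMeasure X₁ × FiniteMeasure X₂ × ℝ) :
    ((X₁ →ᵇ ℝ) × (X₂ →ᵇ ℝ) × ℝ) →ₗ[ℝ] ℝ where
  toFun w := ∫ x, w.1 x ∂(e.1 : Measure X₁) + ∫ x, w.2.1 x ∂(e.2.1 : Measure X₂) + w.2.2 * e.2.2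
  map_add' w w' := by
    simp only [Prod.fst_add, Prod.snd_add, BoundedContinuousFunction.coe_add, Pi.add_apply]
    rw [integral_add (w.1.integrable _) (w'.1.integrable _),
      integral_add (w.2.1.integrable _) (w'.2.1.integrable _)]
    ring
  map_smul' r w := by
    simp only [Prod.smul_fst, Prod.smul_snd, BoundedContinuousFunction.coe_smul, smul_eq_mul,
          RingHom.id_apply]
    rw [integral_const_mul, integral_const_mul]
    ring

lemma bForm_apply (e : FiniteMeasure X₁ × FiniteMeasure X₂ × ℝ) (w : (X₁ →ᵇ ℝ) × (X₂ →ᵇ ℝ) × ℝ) :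
    bForm e w = ∫ x, w.1 x ∂(e.1 : Measure X₁) + ∫ x, w.2.1 x ∂(e.2.1 : Measure X₂)
      + w.2.2 * e.2.2 := rfl

lemma bForm_comb (r r' : ℝ≥0) (e e' : FiniteMeasure X₁ × FiniteMeasure X₂ × ℝ)
    (w : (X₁ →ᵇ ℝ) × (X₂ →ᵇ ℝ) × ℝ) :
    bForm (r • e.1 + r' • e'.1, r • e.2.1 + r' • e'.2.1, r * e.2.2 + r' * e'.2.2) w =
      r * bForm e w + r' * bForm e' w := by
  simp only [bForm_apply, int_comb_fm]
  ring

lemma sep_dual [Nonempty X₂] [LocallyCompactSpace X₁] [LocallyCompactSpace X₂]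
    (C : X₁ → ProbabilityMeasure X₂ → EReal)
    (hClsc : LowerSemicontinuous fun q : X₁ × ProbabilityMeasure X₂ => C q.1 q.2)
    (K : ℝ) (hK : ∀ x p, (K : EReal) ≤ C x p)
    (hCconv : ∀ (x₁ : X₁) (p q m : ProbabilityMeasure X₂) (t : ℝ), 0 ≤ t → t ≤ 1 →
      (m : Measure X₂) = ENNReal.ofReal t • (p : Measure X₂)
          + ENNReal.ofReal (1 - t) • (q : Measure X₂) →
      C x₁ m ≤ (t : EReal) * C x₁ p + ((1 - t : ℝ) : EReal) * C x₁ q)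
    (F₁ F₂ : EntropyFn) (hF₁ : F₁.Superlinear) (hF₂ : F₂.Superlinear)
    (μ₁ : Measure X₁) (μ₂ : Measure X₂) [IsFiniteMeasure μ₁] [IsFiniteMeasure μ₂] (a : ℝ)
    (ha : (a : EReal) < wOpt C F₁ F₂ μ₁ μ₂) :
    ∃ (ψ₁ : X₁ →ᵇ ℝ) (ψ₂ : X₂ →ᵇ ℝ),
      (∀ (ν₁ : Measure X₁) (ν₂ : Measure X₂) (t : ℝ) (Λ : Measure (X₁ × ProbabilityMeasure X₂)),
        IsFiniteMeasure ν₁ → IsFiniteMeasure ν₂ → IsFiniteMeasure Λ → Feas C F₁ F₂ ν₁ ν₂ t Λ →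
        ∫ x, ψ₁ x ∂ν₁ + ∫ x, ψ₂ x ∂ν₂ ≤ t) ∧
      a < ∫ x, ψ₁ x ∂μ₁ + ∫ x, ψ₂ x ∂μ₂ := by
  let S : Set (FiniteMeasure X₁ × FiniteMeasure X₂ × ℝ) :=
    {e | ∃ Λ : FiniteMeasure (X₁ × ProbabilityMeasure X₂),
      Feas C F₁ F₂ e.1 e.2.1 e.2.2 (Λ : Measure (X₁ × ProbabilityMeasure X₂))}
  let m : FiniteMeasure X₁ × FiniteMeasure X₂ × ℝ := (⟨μ₁, inferInstance⟩, ⟨μ₂, inferInstance⟩, a)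
  have hcomb : ∀ e ∈ S, ∀ e' ∈ S, ∀ r r' : ℝ≥0,
      (r • e.1 + r' • e'.1, r • e.2.1 + r' • e'.2.1, r * e.2.2 + r' * e'.2.2) ∈ S := by
    rintro e ⟨Λ, h⟩ e' ⟨Λ', h'⟩ r r'
    exact ⟨_, feas_comb C F₁ F₂ h h' r r'⟩
  have hm : m ∉ closure S := by
    intro hmc
    obtain ⟨e, heS, he⟩ := mem_closure_iff_seq_limit.1 hmc
    choose Λ hΛ using heS
    obtain ⟨Λ', hΛ'⟩ := feas_closed C K hK F₁ F₂ hF₁ hF₂ (fun n => (e n).1) (fun n => (e n).2.1)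
      (fun n => (e n).2.2) m.1 m.2.1 m.2.2 ((continuous_fst.tendsto m).comp he)
      (((continuous_fst.comp continuous_snd).tendsto m).comp he)
      (((continuous_snd.comp continuous_snd).tendsto m).comp he) Λ hΛ
    have := feas_cost C hClsc K hK hCconv F₁ F₂ hF₁ hF₂ μ₁ μ₂ a Λ' hΛ'
    exact absurd this (not_le.2 ha)
  obtain ⟨w, u, hw1, hw2⟩ := hb_sep (bForm (X₁ := X₁) (X₂ := X₂)) (fun e L hL => by
      have t1 : Tendsto (fun e' : FiniteMeasure X₁ × FiniteMeasure X₂ × ℝ => e'.1) L (𝓝 e.1) := by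
        refine FiniteMeasure.tendsto_iff_forall_integral_tendsto.2 fun φ => ?_
        simpa [bForm_apply] using hL (φ, 0, 0)
      have t2 : Tendsto (fun e' : FiniteMeasure X₁ × FiniteMeasure X₂ × ℝ => e'.2.1) L (𝓝 e.2.1) := by
        refine FiniteMeasure.tendsto_iff_forall_integral_tendsto.2 fun φ => ?_
        simpa [bForm_apply] using hL (0, φ, 0)
      have t3 : Tendsto (fun e' : FiniteMeasure X₁ × FiniteMeasure X₂ × ℝ => e'.2.2) L (𝓝 e.2.2) := by
        simpa [bForm_apply] using hL (0, 0, 1)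
      exact t1.prodMk_nhds (t2.prodMk_nhds t3)) S (by
      intro e he e' he' t t' ht ht' _
      exact ⟨_, hcomb e he e' he' ⟨t, ht⟩ ⟨t', ht'⟩, fun w => bForm_comb _ _ _ _ _⟩) m hm
  have h0S : ∀ t : ℝ, 0 ≤ t → ((0, 0, t) : FiniteMeasure X₁ × FiniteMeasure X₂ × ℝ) ∈ S :=
    fun t ht => ⟨0, by simpa using feas_zero C F₁ F₂ t ht⟩
  have hu : 0 < u := by
    have := hw1 _ (h0S 0 le_rfl)
    simpa [bForm_apply] using this
  have hneg : ∀ e ∈ S, bForm e w ≤ 0 := by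
    intro e he
    by_contra hpos
    push Not at hpos
    have := hw1 _ (hcomb e he _ (h0S 0 le_rfl) (u / bForm e w).toNNReal 0)
    rw [bForm_comb, Real.coe_toNNReal _ (by positivity), div_mul_cancel₀ _ hpos.ne'] at this
    simp at this
  have hα : w.2.2 ≤ 0 := by
    have := hneg _ (h0S 1 zero_le_one)
    simpa [bForm_apply] using this
  obtain ⟨c, hc, hcA⟩ := affLe_super F₁ hF₁ (-K)
  let w0 : (X₁ →ᵇ ℝ) × (X₂ →ᵇ ℝ) × ℝ := (.const _ (-c), 0, -1)
  have hw0 : ∀ e ∈ S, bForm e w0 ≤ 0 := by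
    rintro e ⟨Λ, h⟩
    have := h (.const _ (-K)) (.const _ (-c)) (fun _ => hcA) 0 0 (fun _ => affLe_zero F₂)
      (.const _ K) (fun q => hK q.1 q.2)
    simp only [w0, bForm_apply, BoundedContinuousFunction.const_apply, int_const_real, evC_apply,
      BoundedContinuousFunction.coe_zero, Pi.zero_apply, integral_zero] at this ⊢
    linarith
  set δ : ℝ := u / (1 + |bForm m w0|) with hδ
  have hδ0 : 0 < δ := by positivity
  have hpos : 0 < bForm m (w + δ • w0) := by
    rw [map_add, map_smul, smul_eq_mul]
    have h1 : δ * (1 + |bForm m w0|) = u := by rw [hδ]; field_simp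
    have := mul_le_mul_of_nonneg_left (neg_abs_le (bForm m w0)) hδ0.le
    nlinarith
  have hle : ∀ e ∈ S, bForm e (w + δ • w0) ≤ 0 := by
    intro e he
    rw [map_add, map_smul, smul_eq_mul]
    have := mul_le_mul_of_nonneg_left (hw0 e he) hδ0.le
    linarith [hneg e he]
  set w1 := w + δ • w0 with hw1'
  have hβ : w1.2.2 < 0 := by
    have : w1.2.2 = w.2.2 + δ * (-1) := rfl
    linarith
  set β := (-w1.2.2)⁻¹ with hβd
  have hβ0 : 0 < β := inv_pos.2 (by linarith)
  have hββ : β * w1.2.2 = -1 := by rw [hβd, inv_neg, neg_mul, inv_mul_cancel₀ hβ.ne]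
  have hform : ∀ e : FiniteMeasure X₁ × FiniteMeasure X₂ × ℝ, β * bForm e w1 =
      ∫ x, (β • w1.1) x ∂(e.1 : Measure X₁) + ∫ x, (β • w1.2.1) x ∂(e.2.1 : Measure X₂) - e.2.2 := by
    intro e
    simp only [bForm_apply, BoundedContinuousFunction.coe_smul, smul_eq_mul, integral_const_mul]
    linear_combination e.2.2 * hββ
  refine ⟨β • w1.1, β • w1.2.1, fun ν₁ ν₂ t Λ _ _ _ hΛ => ?_, ?_⟩
  · have h1 := hform (⟨ν₁, inferInstance⟩, ⟨ν₂, inferInstance⟩, t)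
    have h2 := hle (⟨ν₁, inferInstance⟩, ⟨ν₂, inferInstance⟩, t) ⟨⟨Λ, inferInstance⟩, hΛ⟩
    have h3 := mul_nonpos_of_nonneg_of_nonpos hβ0.le h2
    rw [h1] at h3
    exact sub_nonpos.1 h3
  · have h1 := hform m
    have h3 := mul_pos hβ0 hpos
    rw [h1] at h3
    exact sub_pos.1 h3
end M1

section M2
lemma affLe_real {F : EntropyFn} {a b s : ℝ} (h : AffLe F a b) (hs : 0 ≤ s) (hF : F.F s ≠ ∞) :
    a + b * s ≤ (F.F s).toReal := by
  have := h s hs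
  rwa [ENNReal.ofReal_le_iff_le_toReal hF] at this

lemma affLe_of_real {F : EntropyFn} {a b : ℝ}
    (h : ∀ s, 0 ≤ s → F.F s ≠ ∞ → a + b * s ≤ (F.F s).toReal) : AffLe F a b := by
  intro s hs
  by_cases hF : F.F s = ∞
  · rw [hF]; exact le_top
  · rw [ENNReal.ofReal_le_iff_le_toReal hF]; exact h s hs hF

lemma circ_ge_of_affLe {F : EntropyFn} {a b : ℝ} (h : AffLe F a b) :
    (a : EReal) ≤ F.circ ((-b : ℝ) : EReal) := by
  refine le_iInf fun ⟨s, hs⟩ => ?_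
  have hs : 0 ≤ s := hs
  change (a : EReal) ≤ ((-b : ℝ) : EReal) * ((s : ℝ) : EReal) + ((F.F s : ℝ≥0∞) : EReal)
  rw [← EReal.coe_mul]
  by_cases hF : F.F s = ∞
  · rw [hF, EReal.coe_ennreal_top, EReal.coe_add_top]; exact le_top
  · have := affLe_real h hs hF
    rw [← ENNReal.ofReal_toReal hF, EReal.coe_ennreal_ofReal, max_eq_left ENNReal.toReal_nonneg,
      ← EReal.coe_add, EReal.coe_le_coe_iff]
    linarith

variable {X : Type*} [TopologicalSpace X] [MeasurableSpace X] [OpensMeasurableSpace X] [Nonempty X]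

lemma bm_data (F : EntropyFn) (hBM : HasBM X F) (ψ : X →ᵇ ℝ)
    (hψ : ∃ b : ℝ, ((b : ℝ) : EReal) < ((F.F 0 : ℝ≥0∞) : EReal) ∧ ∀ x, ψ x ≤ b) :
    ∃ (s : X → ℝ) (V : X →ᵇ ℝ) (M : ℝ), Measurable s ∧ (∀ x, 0 < s x) ∧ (∀ x, s x ≤ M) ∧
      (∀ x, AffLe F (ψ x) (-V x)) ∧
      ∀ x a b, AffLe F a b → b + a * s x ≤ s x * ψ x - V x := by
  obtain ⟨s, hsm, ⟨M, hM⟩, hs0, hs⟩ := hBM ψ hψ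
  have hdat : ∀ x, F.revF (s x) ≠ ∞ ∧ ∃ v : ℝ, F.revConj (ψ x) = v ∧
      (F.revF (s x)).toReal + v = s x * ψ x := by
    intro x
    have h := hs x
    generalize F.revConj (ψ x) = c at h
    generalize F.revF (s x) = r at h
    induction c with
    | bot =>
      rw [EReal.add_bot] at h
      exact absurd h.symm (EReal.coe_ne_bot _)
    | top =>
      rw [EReal.add_top_of_ne_bot (by simp)] at h
      exact absurd h.symm (EReal.coe_ne_top _)
    | coe v =>
      by_cases hr : r = ∞
      · rw [hr, EReal.coe_ennreal_top, EReal.top_add_coe] at h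
        exact absurd h.symm (EReal.coe_ne_top _)
      · refine ⟨hr, v, rfl, ?_⟩
        rw [← ENNReal.ofReal_toReal hr, EReal.coe_ennreal_ofReal, max_eq_left ENNReal.toReal_nonneg,
          ← EReal.coe_add, EReal.coe_eq_coe_iff] at h
        exact h
  choose hfin V hV hVs using hdat
  have hsup : ∀ x (r : ℝ), 0 ≤ r → F.revF r ≠ ∞ → r * ψ x - (F.revF r).toReal ≤ V x := by
    intro x r hr hfr
    have h1 : ((r * ψ x : ℝ) : EReal) - ((F.revF r : ℝ≥0∞) : EReal) ≤ F.revConj (ψ x) :=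
      le_iSup (fun s : Ici (0:ℝ) => (((s : ℝ) * ψ x : ℝ) : EReal) - ((F.revF (s : ℝ) : ℝ≥0∞) : EReal))
        ⟨r, hr⟩
    rw [hV, ← ENNReal.ofReal_toReal hfr, EReal.coe_ennreal_ofReal,
      max_eq_left ENNReal.toReal_nonneg, ← EReal.coe_sub, EReal.coe_le_coe_iff] at h1
    exact h1
  have hL : ∀ x y, V x - V y ≤ M * |ψ x - ψ y| := by
    intro x y
    have h1 := hsup y (s x) (hs0 x).le (hfin x)
    have h2 := hVs x
    have h3 : s x * (ψ x - ψ y) ≤ s x * |ψ x - ψ y| :=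
      mul_le_mul_of_nonneg_left (le_abs_self _) (hs0 x).le
    have h4 : s x * |ψ x - ψ y| ≤ M * |ψ x - ψ y| :=
      mul_le_mul_of_nonneg_right ((le_abs_self _).trans (hM x)) (abs_nonneg _)
    linarith
  have hL' : ∀ x y, |V x - V y| ≤ M * |ψ x - ψ y| := by
    intro x y
    rw [abs_le]
    have := hL y x
    rw [abs_sub_comm] at this
    exact ⟨by linarith, hL x y⟩
  have hVc : Continuous V := by
    refine continuous_iff_continuousAt.2 fun x => ?_
    rw [ContinuousAt, tendsto_iff_dist_tendsto_zero]
    have h0 : Tendsto (fun y => M * |ψ y - ψ x|) (𝓝 x) (𝓝 0) := by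
      have : Continuous fun y => M * |ψ y - ψ x| := by fun_prop
      simpa using this.tendsto x
    exact squeeze_zero (fun _ => dist_nonneg) (fun y => hL' y x) h0
  obtain ⟨x0⟩ := ‹Nonempty X›
  have hM0 : 0 ≤ M := (abs_nonneg _).trans (hM x0)
  have hVb : ∀ x, ‖V x‖ ≤ |V x0| + M * (2 * ‖ψ‖) := by
    intro x
    have h1 := hL' x x0
    have h2 : |ψ x - ψ x0| ≤ 2 * ‖ψ‖ := by
      have := ψ.dist_le_two_norm x x0
      rwa [Real.dist_eq] at this
    have h3 := mul_le_mul_of_nonneg_left h2 hM0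
    have h4 := abs_sub_abs_le_abs_sub (V x) (V x0)
    rw [Real.norm_eq_abs]; linarith
  refine ⟨s, .ofNormedAddCommGroup V hVc _ hVb, M, hsm, hs0, fun x => (le_abs_self _).trans (hM x), ?_, ?_⟩
  · intro x
    refine affLe_of_real fun r hr hF => ?_
    change ψ x + -V x * r ≤ _
    rcases hr.eq_or_lt with rfl | hr
    · obtain ⟨b, hb, hb'⟩ := hψ
      rw [← ENNReal.ofReal_toReal hF, EReal.coe_ennreal_ofReal, max_eq_left ENNReal.toReal_nonneg,
        EReal.coe_lt_coe_iff] at hb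
      linarith [hb' x]
    · have hrev : F.revF (1 / r) = ENNReal.ofReal (1 / r) * F.F r := by
        rw [EntropyFn.revF, if_pos (by positivity), one_div_one_div]
      have h1 := hsup x (1 / r) (by positivity) (by
        rw [hrev]; exact ENNReal.mul_ne_top ENNReal.ofReal_ne_top hF)
      rw [hrev, ENNReal.toReal_mul, ENNReal.toReal_ofReal (by positivity)] at h1
      have h2 := mul_le_mul_of_nonneg_right h1 hr.le
      have h3 : (1 / r * ψ x - 1 / r * (F.F r).toReal) * r = ψ x - (F.F r).toReal := by field_simp
      linarith
  · intro x a b hab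
    change b + a * s x ≤ s x * ψ x - V x
    have hsx := hs0 x
    have hrev : F.revF (s x) = ENNReal.ofReal (s x) * F.F (1 / s x) := by
      rw [EntropyFn.revF, if_pos hsx]
    have hF : F.F (1 / s x) ≠ ∞ := by
      intro hF
      apply hfin x
      rw [hrev, hF, ENNReal.mul_top (by simpa using hsx)]
    have h1 := affLe_real hab (by positivity) hF
    have h2 := hVs x
    rw [hrev, ENNReal.toReal_mul, ENNReal.toReal_ofReal hsx.le] at h2
    have h3 := mul_le_mul_of_nonneg_left h1 hsx.le
    have h4 : s x * (a + b * (1 / s x)) = b + a * s x := by field_simp; ring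
    linarith
end M2

section M3
variable {X₁ X₂ : Type*} [TopologicalSpace X₁] [PolishSpace X₁] [MeasurableSpace X₁] [BorelSpace X₁]
  [TopologicalSpace X₂] [PolishSpace X₂] [MeasurableSpace X₂] [BorelSpace X₂]

lemma feas_left (C : X₁ → ProbabilityMeasure X₂ → EReal) (F₁ F₂ : EntropyFn) (x : X₁)
    (h : F₁.F 0 ≠ ∞) : Feas C F₁ F₂ (Measure.dirac x) 0 (F₁.F 0).toReal 0 := by
  intro φ₁ ψ₁ h1 φ₂ ψ₂ _ k _
  have := affLe_real (h1 x) le_rfl h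
  simpa using this

lemma feas_right (C : X₁ → ProbabilityMeasure X₂ → EReal) (F₁ F₂ : EntropyFn) (x : X₂)
    (h : F₂.F 0 ≠ ∞) : Feas C F₁ F₂ 0 (Measure.dirac x) (F₂.F 0).toReal 0 := by
  intro φ₁ ψ₁ _ φ₂ ψ₂ h1 k _
  have := affLe_real (h1 x) le_rfl h
  simpa using this

lemma wd_int (p : Measure X₂) [IsFiniteMeasure p] (θ : ℝ) (hθ : 0 ≤ θ) (s : X₂ → ℝ)
    (hs : Measurable s) (hs0 : ∀ x, 0 < s x) (g : X₂ → ℝ) :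
    ∫ y, g y ∂(p.withDensity fun y => ENNReal.ofReal (θ * s y)) = θ * ∫ y, g y * s y ∂p := by
  rw [integral_withDensity_eq_integral_toReal_smul (by fun_prop)
    (Eventually.of_forall fun _ => ENNReal.ofReal_lt_top), ← integral_const_mul]
  refine integral_congr_ae (Eventually.of_forall fun y => ?_)
  simp only [smul_eq_mul]
  rw [ENNReal.toReal_ofReal (mul_nonneg hθ (hs0 y).le)]
  ring

lemma int_mul_s (p : Measure X₂) [IsFiniteMeasure p] {s : X₂ → ℝ} (hs : Measurable s)
    (hs0 : ∀ x, 0 < s x) {M : ℝ} (hM : ∀ x, s x ≤ M) (g : X₂ →ᵇ ℝ) :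
    Integrable (fun y => g y * s y) p := by
  refine (g.integrable p).mul_bdd (c := M) hs.aestronglyMeasurable (Eventually.of_forall fun y => ?_)
  rw [Real.norm_eq_abs, abs_of_pos (hs0 y)]; exact hM y

lemma feas_point (C : X₁ → ProbabilityMeasure X₂ → EReal) (F₁ F₂ : EntropyFn)
    (x : X₁) (p : ProbabilityMeasure X₂) (θ : ℝ) (hθ : 0 < θ) (hF : F₁.F θ ≠ ∞)
    (c : ℝ) (hc : C x p = c) (s : X₂ → ℝ) (hs : Measurable s) (hs0 : ∀ x, 0 < s x) (M : ℝ)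
    (hM : ∀ x, s x ≤ M) (R : X₂ → ℝ) (hR : Integrable R (p : Measure X₂))
    (hRs : ∀ y a b, AffLe F₂ a b → b + a * s y ≤ R y) :
    Feas C F₁ F₂ (Measure.dirac x)
      ((p : Measure X₂).withDensity fun y => ENNReal.ofReal (θ * s y))
      ((F₁.F θ).toReal + θ * ∫ y, R y ∂(p : Measure X₂) + θ * c)
      (ENNReal.ofReal θ • Measure.dirac (x, p)) := by
  intro φ₁ ψ₁ h1 φ₂ ψ₂ h2 k h3
  have hint : ∀ g : X₁ × ProbabilityMeasure X₂ →ᵇ ℝ,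
      ∫ q, g q ∂(ENNReal.ofReal θ • Measure.dirac (x, p)) = θ * g (x, p) := by
    intro g
    rw [integral_smul_measure, integral_dirac, ENNReal.toReal_ofReal hθ.le, smul_eq_mul]
  have e1 := hint (φ₁.compContinuous ⟨Prod.fst, continuous_fst⟩)
  have e2 := hint ((evC φ₂).compContinuous ⟨Prod.snd, continuous_snd⟩)
  simp only [BoundedContinuousFunction.compContinuous_apply, ContinuousMap.coe_mk] at e1 e2
  rw [e1, e2, hint, integral_dirac, wd_int _ θ hθ.le s hs hs0]
  have a1 := affLe_real (h1 x) hθ.le hF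
  have a3 : k (x, p) ≤ c := by
    have := h3 (x, p)
    rw [hc] at this
    exact EReal.coe_le_coe_iff.1 this
  have a2 : evC φ₂ p + ∫ y, ψ₂ y * s y ∂(p : Measure X₂) ≤ ∫ y, R y ∂(p : Measure X₂) := by
    rw [evC_apply, ← integral_add (φ₂.integrable _) (int_mul_s _ hs hs0 hM ψ₂)]
    exact integral_mono ((φ₂.integrable _).add (int_mul_s _ hs hs0 hM ψ₂)) hR
      (fun y => hRs y _ _ (h2 y))
  have b2 := mul_le_mul_of_nonneg_left a2 hθ.le
  have b3 := mul_le_mul_of_nonneg_left a3 hθ.le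
  linarith

lemma strong_dual [Nonempty X₂] [LocallyCompactSpace X₁] [LocallyCompactSpace X₂]
    (C : X₁ → ProbabilityMeasure X₂ → EReal)
    (hClsc : LowerSemicontinuous fun q : X₁ × ProbabilityMeasure X₂ => C q.1 q.2)
    (K : ℝ) (hK : ∀ x p, (K : EReal) ≤ C x p)
    (hCconv : ∀ (x₁ : X₁) (p q m : ProbabilityMeasure X₂) (t : ℝ), 0 ≤ t → t ≤ 1 →
      (m : Measure X₂) = ENNReal.ofReal t • (p : Measure X₂)
          + ENNReal.ofReal (1 - t) • (q : Measure X₂) →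
      C x₁ m ≤ (t : EReal) * C x₁ p + ((1 - t : ℝ) : EReal) * C x₁ q)
    (F₁ F₂ : EntropyFn) (hF₁ : F₁.Superlinear) (hF₂ : F₂.Superlinear) (hBM : HasBM X₂ F₂)
    (μ₁ : Measure X₁) (μ₂ : Measure X₂) [IsFiniteMeasure μ₁] [IsFiniteMeasure μ₂] (a : ℝ)
    (ha : (a : EReal) < wOpt C F₁ F₂ μ₁ μ₂) :
    ∃ φ : X₂ →ᵇ ℝ, (a : EReal) ≤ eIntegral μ₁ (fun x₁ => F₁.circ (RCfun C φ x₁)) +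
              eIntegral μ₂ (fun x₂ => F₂.circ (((-(φ x₂) : ℝ) : EReal))) := by
  obtain ⟨ψ₁, ψ₂, hS, hgt⟩ := sep_dual C hClsc K hK hCconv F₁ F₂ hF₁ hF₂ μ₁ μ₂ a ha
  obtain ⟨ε, hε, hεg⟩ : ∃ ε : ℝ, 0 < ε ∧
      a ≤ ∫ x, ψ₁ x ∂μ₁ + (∫ x, ψ₂ x ∂μ₂ - ε * μ₂.real univ) := by
    set g := ∫ x, ψ₁ x ∂μ₁ + ∫ x, ψ₂ x ∂μ₂ - a with hg
    have hg0 : 0 < g := by linarith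
    have hm : 0 ≤ μ₂.real univ := measureReal_nonneg
    refine ⟨g / (1 + μ₂.real univ), by positivity, ?_⟩
    have h1 : g / (1 + μ₂.real univ) * (1 + μ₂.real univ) = g := by field_simp
    have h2 : 0 < g / (1 + μ₂.real univ) := by positivity
    nlinarith
  let ψ : X₂ →ᵇ ℝ := ψ₂ - .const _ ε
  have hψ : ∀ x, ψ x = ψ₂ x - ε := fun x => rfl
  obtain ⟨s, V, M, hsm, hs0, hsM, hV1, hV2⟩ := bm_data F₂ hBM ψ (by
    by_cases h0 : F₂.F 0 = ∞
    · refine ⟨‖ψ‖, ?_, fun x => (le_abs_self _).trans (ψ.norm_coe_le_norm x)⟩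
      rw [h0, EReal.coe_ennreal_top]; exact EReal.coe_lt_top _
    · refine ⟨(F₂.F 0).toReal - ε, ?_, fun x => ?_⟩
      · rw [← ENNReal.ofReal_toReal h0, EReal.coe_ennreal_ofReal,
          max_eq_left ENNReal.toReal_nonneg, EReal.coe_lt_coe_iff,
          ENNReal.toReal_ofReal ENNReal.toReal_nonneg]
        linarith
      · have := hS 0 (Measure.dirac x) _ 0 inferInstance inferInstance inferInstance
          (feas_right C F₁ F₂ x h0)
        rw [integral_zero_measure, integral_dirac, zero_add] at this
        rw [hψ]; linarith)
  refine ⟨-V, ?_⟩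
  have c2 : ((∫ x, ψ₂ x ∂μ₂ - ε * μ₂.real univ : ℝ) : EReal) ≤
      eIntegral μ₂ (fun x₂ => F₂.circ (((-((-V) x₂) : ℝ) : EReal))) := by
    have : ∫ x, ψ₂ x ∂μ₂ - ε * μ₂.real univ = ∫ x, ψ x ∂μ₂ := by
      rw [← int_const_real μ₂ ε, ← integral_sub (ψ₂.integrable _) (integrable_const _)]
      rfl
    rw [this, ← eIntegral_real μ₂ (ψ.integrable _)]
    exact eIntegral_mono_ae μ₂ (Eventually.of_forall fun x => circ_ge_of_affLe (hV1 x))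
  have c1 : ((∫ x, ψ₁ x ∂μ₁ : ℝ) : EReal) ≤
      eIntegral μ₁ (fun x₁ => F₁.circ (RCfun C (-V) x₁)) := by
    rw [← eIntegral_real μ₁ (ψ₁.integrable _)]
    refine eIntegral_mono_ae μ₁ (Eventually.of_forall fun x => ?_)
    refine le_iInf fun ⟨θ, hθ⟩ => ?_
    have hθ : 0 ≤ θ := hθ
    change (ψ₁ x : EReal) ≤ RCfun C (-V) x * ((θ : ℝ) : EReal) + ((F₁.F θ : ℝ≥0∞) : EReal)
    have hreal : F₁.F θ ≠ ∞ → ((F₁.F θ : ℝ≥0∞) : EReal) = (((F₁.F θ).toReal : ℝ) : EReal) := by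
      intro h
      conv_lhs => rw [← ENNReal.ofReal_toReal h, EReal.coe_ennreal_ofReal,
        max_eq_left ENNReal.toReal_nonneg]
    -- lower bounds on the reduced cost
    have hRC : ∀ r : ℝ, (∀ p : ProbabilityMeasure X₂, ∀ c : ℝ, C x p = c →
        r ≤ c + ∫ y, (-V) y ∂(p : Measure X₂)) → (r : EReal) ≤ RCfun C (-V) x := by
      intro r hr
      refine le_iInf fun p => ?_
      have hb := hK x p
      have hr' := hr p
      generalize C x p = cc at hb hr'
      induction cc with
      | bot => exact absurd (le_bot_iff.1 hb) (EReal.coe_ne_bot _)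
      | top => rw [EReal.top_add_coe]; exact le_top
      | coe c =>
        rw [← EReal.coe_add, EReal.coe_le_coe_iff]
        exact hr' c rfl
    rcases hθ.eq_or_lt with rfl | hθ
    · rw [EReal.coe_zero, mul_zero, zero_add]
      by_cases h0 : F₁.F 0 = ∞
      · rw [h0, EReal.coe_ennreal_top]; exact le_top
      · have := hS (Measure.dirac x) 0 _ 0 inferInstance inferInstance inferInstance
          (feas_left C F₁ F₂ x h0)
        rw [integral_zero_measure, integral_dirac, add_zero] at this
        rw [hreal h0, EReal.coe_le_coe_iff]
        exact this
    · have hbase : ∀ r : ℝ, (r : EReal) ≤ RCfun C (-V) x →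
          ((r * θ : ℝ) : EReal) ≤ RCfun C (-V) x * ((θ : ℝ) : EReal) := by
        intro r hr
        rw [EReal.coe_mul]
        exact mul_le_mul_of_nonneg_right hr (EReal.coe_nonneg.2 hθ.le)
      by_cases h0 : F₁.F θ = ∞
      · rw [h0, EReal.coe_ennreal_top]
        have h1 := hbase (K - ‖V‖) (hRC _ fun p c hc => by
          have h2 := hK x p
          rw [hc, EReal.coe_le_coe_iff] at h2
          have h3 := (-V).norm_integral_le_norm (p : Measure X₂)
          rw [Real.norm_eq_abs, norm_neg] at h3
          linarith [neg_abs_le (∫ y, (-V) y ∂(p : Measure X₂))])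
        have h2 : RCfun C (-V) x * ((θ : ℝ) : EReal) ≠ ⊥ := by
          intro h
          rw [h] at h1
          exact absurd (le_bot_iff.1 h1) (EReal.coe_ne_bot _)
        rw [EReal.add_top_of_ne_bot h2]; exact le_top
      · rw [hreal h0]
        set f := (F₁.F θ).toReal with hf
        have h1 := hbase ((ψ₁ x - f) / θ) (hRC _ fun p c hc => by
          have hRi : Integrable (fun y => s y * ψ y - V y) (p : Measure X₂) := by
            refine Integrable.sub ?_ (V.integrable _)
            exact (int_mul_s (p : Measure X₂) hsm hs0 hsM ψ).congr
              (Eventually.of_forall fun y => mul_comm _ _)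
          haveI : IsFiniteMeasure ((p : Measure X₂).withDensity fun y => ENNReal.ofReal (θ * s y)) := by
            refine isFiniteMeasure_withDensity_ofReal ?_
            refine HasFiniteIntegral.of_bounded (C := θ * M) (Eventually.of_forall fun y => ?_)
            rw [Real.norm_eq_abs, abs_of_pos (mul_pos hθ (hs0 y))]
            exact mul_le_mul_of_nonneg_left (hsM y) hθ.le
          haveI : IsFiniteMeasure (ENNReal.ofReal θ • Measure.dirac (x, p)) :=
            Measure.smul_finite _ ENNReal.ofReal_ne_top
          have h2 := hS _ _ _ _ inferInstance inferInstance inferInstance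
            (feas_point C F₁ F₂ x p θ hθ h0 c hc s hsm hs0 M hsM
              (fun y => s y * ψ y - V y) hRi (fun y a b => hV2 y a b))
          rw [integral_dirac, wd_int _ θ hθ.le s hsm hs0] at h2
          have h3 : ∫ y, (s y * ψ y - V y) ∂(p : Measure X₂) - ∫ y, ψ₂ y * s y ∂(p : Measure X₂) ≤
              ∫ y, (-V) y ∂(p : Measure X₂) := by
            rw [← integral_sub hRi (int_mul_s (p : Measure X₂) hsm hs0 hsM ψ₂)]
            refine integral_mono (hRi.sub (int_mul_s (p : Measure X₂) hsm hs0 hsM ψ₂))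
              ((-V).integrable _) (fun y => ?_)
            change s y * ψ y - V y - ψ₂ y * s y ≤ - V y
            rw [hψ]
            nlinarith [hs0 y]
          have h4 := mul_le_mul_of_nonneg_left h3 hθ.le
          rw [div_le_iff₀ hθ]
          linarith)
        rw [div_mul_cancel₀ _ hθ.ne'] at h1
        have := add_le_add_left h1 ((f : ℝ) : EReal)
        rw [← EReal.coe_add, sub_add_cancel] at this
        exact this
  refine le_trans ?_ (add_le_add c1 c2)
  rw [← EReal.coe_add, EReal.coe_le_coe_iff]
  exact hεg
end M3

theorem stmt15
    {X₁ : Type*} [MetricSpace X₁] [PolishSpace X₁] [MeasurableSpace X₁] [BorelSpace X₁]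
    [LocallyCompactSpace X₁]
    {X₂ : Type*} [MetricSpace X₂] [PolishSpace X₂] [MeasurableSpace X₂] [BorelSpace X₂]
    [LocallyCompactSpace X₂] [Nonempty X₂]
    (C : X₁ → ProbabilityMeasure X₂ → EReal)
    (hClsc : LowerSemicontinuous fun q : X₁ × ProbabilityMeasure X₂ => C q.1 q.2)
    (hCbdd : ∃ K : ℝ, ∀ x p, (K : EReal) ≤ C x p)
    (hCconv : ∀ (x : X₁) (p q m : ProbabilityMeasure X₂) (t : ℝ), 0 ≤ t → t ≤ 1 →
      (m : Measure X₂) = ENNReal.ofReal t • (p : Measure X₂)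
          + ENNReal.ofReal (1 - t) • (q : Measure X₂) →
      C x m ≤ (t : EReal) * C x p + ((1 - t : ℝ) : EReal) * C x q)
    (F₁ F₂ : EntropyFn) (hF₁ : F₁.Superlinear) (hF₂ : F₂.Superlinear) (hBM : HasBM X₂ F₂)
    (μ₁ : Measure X₁) (μ₂ : Measure X₂) [IsFiniteMeasure μ₁] [IsFiniteMeasure μ₂] :
    wOpt C F₁ F₂ μ₁ μ₂
      = sSup { e : EReal | ∃ φ : X₂ →ᵇ ℝ,
          e = eIntegral μ₁ (fun x₁ => F₁.circ (RCfun C φ x₁)) +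
              eIntegral μ₂ (fun x₂ => F₂.circ (((-(φ x₂) : ℝ) : EReal))) } := by
  obtain ⟨K, hK⟩ := hCbdd
  refine le_antisymm ?_ ?_
  · refine le_of_forall_lt fun e he => ?_
    obtain ⟨a, hea, ha⟩ := EReal.lt_iff_exists_real_btwn.1 he
    obtain ⟨φ, hφ⟩ := strong_dual C hClsc K hK hCconv F₁ F₂ hF₁ hF₂ hBM μ₁ μ₂ a ha
    exact lt_of_lt_of_le hea (hφ.trans (le_sSup ⟨φ, rfl⟩))
  · refine sSup_le ?_
    rintro e ⟨φ, rfl⟩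
    refine le_sInf ?_
    rintro e' ⟨γ, hγ, rfl⟩
    exact weak_dual C hClsc K hK F₁ F₂ hF₁ hF₂ μ₁ μ₂ γ hγ φ
end
end
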